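/- arXiv:2101.09386 — 2 statements merged into one kernel-verified Lean document; each statement's English description precedes it below -/
import Mathlib

section
/- Let K be a field of characteristic zero, n ≥ 1, and let Γ be a subgroup of GL_n(K) all of whose elements are semi-simple (an anisotropic linear group). Then Γ is boundedly generated if and only if Γ is finitely generated and virtually abelian. -/
open Matrix

/-- An element of `GL n K` is semi-simple if the corresponding linear endomorphism
of `K^n` is a semisimple endomorphism. -/
def IsSemisimpleElt {n : ℕ} {K : Type*} [Field K] (g : GL (Fin n) K) : Prop :=
  Module.End.IsSemisimple ((g : Matrix (Fin n) (Fin n) K).mulVecLin)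

/-- A group `G` is boundedly generated if it is a finite product of cyclic subgroups:
there are `γ₁, …, γ_r ∈ G` such that every element is `γ₁^{k₁} ⋯ γ_r^{k_r}`. -/
def BoundedGeneration (G : Type*) [Group G] : Prop :=
  ∃ (r : ℕ) (γ : Fin r → G), ∀ x : G, ∃ k : Fin r → ℤ,
    x = (List.ofFn fun i => γ i ^ k i).prod

/-- A group is virtually abelian if it has an abelian subgroup of finite index. -/
def IsVirtuallyAbelian (G : Type*) [Group G] : Prop :=
  ∃ H : Subgroup G, H.FiniteIndex ∧ ∀ x y : ↥H, x * y = y * x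


theorem bgx_unitarize {A : Type*} [CStarAlgebra A] [PartialOrder A] [StarOrderedRing A]
    {G : Type*} [Group G] [Finite G] (ρ : G →* A) :
    ∃ y : Aˣ, ∀ g, (y : A) * ρ g * ((y⁻¹ : Aˣ) : A) ∈ unitary A := by
  classical
  have := Fintype.ofFinite G
  set P : A := ∑ g, star (ρ g) * ρ g with hP
  have hPpos : IsStrictlyPositive P := by
    have h1 : IsStrictlyPositive (star (ρ 1) * ρ 1) := by
      simp
    rw [hP, ← Finset.add_sum_erase _ _ (Finset.mem_univ (1:G))]
    exact h1.add_nonneg (Finset.sum_nonneg fun g _ => star_mul_self_nonneg _)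
  obtain ⟨y, hy, hPy⟩ := CStarAlgebra.isStrictlyPositive_iff_eq_star_mul_self.mp hPpos
  obtain ⟨y, rfl⟩ := hy
  have hinv : ∀ g, star (ρ g) * P * ρ g = P := by
    intro g
    rw [hP, Finset.mul_sum, Finset.sum_mul]
    refine (Fintype.sum_equiv (Equiv.mulRight g) _ _ fun x => ?_)
    simp [mul_assoc]
  have hst : ∀ g, star ((y : A) * ρ g * ((y⁻¹ : Aˣ) : A)) * ((y : A) * ρ g * ((y⁻¹ : Aˣ) : A)) = 1 := by
    intro g
    have h2 := hinv g
    rw [hPy] at h2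
    calc _ = star ((y⁻¹ : Aˣ) : A) * (star (ρ g) * (star (y:A) * y) * ρ g) * ((y⁻¹ : Aˣ) : A) := by
          simp [mul_assoc]
      _ = star ((y : A) * ((y⁻¹ : Aˣ) : A)) * ((y : A) * ((y⁻¹ : Aˣ) : A)) := by
          rw [h2]; simp only [mul_assoc, star_mul]
      _ = 1 := by rw [Units.mul_inv]; simp
  refine ⟨y, fun g => ?_⟩
  have hu : IsUnit ((y : A) * ρ g * ((y⁻¹ : Aˣ) : A)) :=
    (y.isUnit.mul ((Group.isUnit g).map ρ)).mul (y⁻¹).isUnit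
  rw [Unitary.mem_iff]
  refine ⟨hst g, ?_⟩
  obtain ⟨u, hu⟩ := hu
  have h3 := hst g
  rw [← hu] at h3 ⊢
  have : star (u : A) = ((u⁻¹ : Aˣ) : A) := by
    rw [← Units.mul_eq_one_iff_eq_inv]; exact h3
  rw [this]; simp

theorem bgx_comm_norm {A : Type*} [CStarAlgebra A] (g h : unitary A) :
    ‖((g * h * g⁻¹ * h⁻¹ : unitary A) : A) - 1‖ ≤ 2 * ‖(g : A) - 1‖ * ‖(h : A) - 1‖ := by
  have h1 : ((g * h * g⁻¹ * h⁻¹ : unitary A) : A) - 1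
      = ((g : A) * h - h * g) * ((h * g)⁻¹ : unitary A) := by
    have : ((g * h * g⁻¹ * h⁻¹ : unitary A) : A) = (g : A) * h * ((h * g)⁻¹ : unitary A) := by
      simp [mul_assoc]
    rw [sub_mul, this]
    congr 1
    have : (h : A) * g * ((h * g)⁻¹ : unitary A) = ((h * g * (h * g)⁻¹ : unitary A) : A) := by
      simp only [Submonoid.coe_mul]
    rw [this]; simp
  rw [h1, CStarRing.norm_mul_coe_unitary]
  have h2 : (g : A) * h - h * g = ((g : A) - 1) * ((h : A) - 1) - ((h : A) - 1) * ((g : A) - 1) := by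
    noncomm_ring
  rw [h2]
  calc _ ≤ ‖((g : A) - 1) * ((h : A) - 1)‖ + ‖((h : A) - 1) * ((g : A) - 1)‖ := norm_sub_le _ _
    _ ≤ ‖(g : A) - 1‖ * ‖(h : A) - 1‖ + ‖(h : A) - 1‖ * ‖(g : A) - 1‖ :=
        add_le_add (norm_mul_le _ _) (norm_mul_le _ _)
    _ = _ := by ring

theorem bgx_frob {V : Type*} [NormedAddCommGroup V] [InnerProductSpace ℂ V] [CompleteSpace V]
    [FiniteDimensional ℂ V] (g h : unitary (V →L[ℂ] V)) (hh : ‖(h : V →L[ℂ] V) - 1‖ < 1)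
    (hc : g * (h * g * h⁻¹) = (h * g * h⁻¹) * g) : g * h = h * g := by
  by_contra hne
  set x : unitary (V →L[ℂ] V) := h * g * h⁻¹ with hx
  have hxg : x ≠ g := by
    intro e; apply hne; rw [hx] at e
    rw [mul_inv_eq_iff_eq_mul] at e; exact e.symm
  have hc1 : Commute (g : V →L[ℂ] V) (x : V →L[ℂ] V) := congrArg Subtype.val hc
  have hc2 : Commute (star (g : V →L[ℂ] V)) (x : V →L[ℂ] V) := by
    have : Commute (g⁻¹) x := Commute.inv_left hc
    exact congrArg Subtype.val this
  have hc3 : Commute (g : V →L[ℂ] V) (star (x : V →L[ℂ] V)) := by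
    have : Commute g x⁻¹ := Commute.inv_right hc
    exact congrArg Subtype.val this
  set d : V →L[ℂ] V := (x : V →L[ℂ] V) - g with hd
  have hd0 : d ≠ 0 := fun e => hxg (Subtype.ext (sub_eq_zero.mp e))
  have hg1 := Unitary.coe_star_mul_self g
  have hg2 : (g : V →L[ℂ] V) * star (g : V →L[ℂ] V) = 1 := Unitary.coe_mul_star_self g
  have hx1 := Unitary.coe_star_mul_self x
  have hx2 : (x : V →L[ℂ] V) * star (x : V →L[ℂ] V) = 1 := Unitary.coe_mul_star_self x
  have hnorm : IsStarNormal d := by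
    constructor
    change star d * d = d * star d
    simp only [hd, star_sub, sub_mul, mul_sub]
    simp only [hg1, hg2, hx1, hx2, hc2.eq, hc3.eq]
    abel
  have : Nontrivial (V →L[ℂ] V) := ⟨⟨d, 0, hd0⟩⟩
  obtain ⟨α, hα, hαn⟩ := spectrum.exists_nnnorm_eq_spectralRadius d
  rw [IsStarNormal.spectralRadius_eq_nnnorm] at hαn
  have hα0 : α ≠ 0 := by
    rintro rfl
    simp at hαn
    exact hd0 (nnnorm_eq_zero.mp hαn.symm)
  rw [ContinuousLinearMap.spectrum_eq, ← Module.End.hasEigenvalue_iff_mem_spectrum] at hα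
  set E := Module.End.eigenspace (d : V →ₗ[ℂ] V) α with hE
  have hdg : Commute d (g : V →L[ℂ] V) := (hc1.symm.sub_left (Commute.refl _))
  have hmaps : Set.MapsTo ((g : V →L[ℂ] V) : V →ₗ[ℂ] V) E E := by
    intro v hv
    rw [SetLike.mem_coe, hE, Module.End.mem_eigenspace_iff] at hv ⊢
    have h1 : d (g.1 v) = g.1 (d v) := DFunLike.congr_fun hdg.eq v
    have h2 : d v = α • v := hv
    change d (g.1 v) = α • g.1 v
    rw [h1, h2, map_smul]
  have hnt : Nontrivial E := by
    rw [Submodule.nontrivial_iff_ne_bot]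
    exact hα
  obtain ⟨lam, hlam⟩ := Module.End.exists_eigenvalue (LinearMap.restrict _ hmaps)
  obtain ⟨⟨v, hvE⟩, hv⟩ := hlam.exists_hasEigenvector
  have hv0 : v ≠ 0 := fun e => hv.2 (Subtype.ext e)
  have hgv : (g : V →L[ℂ] V) v = lam • v := congrArg Subtype.val hv.apply_eq_smul
  have hdv : d v = α • v := by
    rw [hE, Module.End.mem_eigenspace_iff] at hvE; exact hvE
  have hxv : (x : V →L[ℂ] V) v = (lam + α) • v := by
    have : (x : V →L[ℂ] V) v = d v + (g : V →L[ℂ] V) v := by simp [hd]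
    rw [this, hdv, hgv, add_smul, add_comm]
  set w : V := ((h⁻¹ : unitary (V →L[ℂ] V)) : V →L[ℂ] V) v with hw
  have hhw : (h : V →L[ℂ] V) w = v := by
    have : (h * h⁻¹ : unitary (V →L[ℂ] V)).1 v = v := by simp
    exact this
  have hgw : (g : V →L[ℂ] V) w = (lam + α) • w := by
    have e : g * h⁻¹ = h⁻¹ * x := by rw [hx]; group
    have e1 : (g * h⁻¹ : unitary (V →L[ℂ] V)).1 v = (h⁻¹ * x : unitary (V →L[ℂ] V)).1 v := by rw [e]
    have e2 : (g : V →L[ℂ] V) w = (h⁻¹ : unitary (V →L[ℂ] V)).1 ((x : V →L[ℂ] V) v) := e1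
    rw [e2, hxv, map_smul]
  have inn : ∀ (u : unitary (V →L[ℂ] V)) (a b : V), inner ℂ (u.1 a) (u.1 b) = inner ℂ a b := by
    intro u a b
    rw [← ContinuousLinearMap.adjoint_inner_right]
    congr 1
    have := DFunLike.congr_fun (Unitary.coe_star_mul_self u) b
    exact this
  have hvv : inner ℂ v v ≠ 0 := by simpa using hv0
  have l1 : (starRingEnd ℂ) lam * lam = 1 := by
    have := inn g v v
    rw [hgv, inner_smul_left, inner_smul_right, ← mul_assoc] at this
    exact mul_right_cancel₀ hvv (by rw [this, one_mul])
  have hvw : inner ℂ v w = 0 := by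
    have := inn g v w
    rw [hgv, hgw, inner_smul_left, inner_smul_right, ← mul_assoc, mul_add, l1] at this
    have h3 : (starRingEnd ℂ) lam * α * inner ℂ v w = 0 := by linear_combination this
    have h4 : (starRingEnd ℂ) lam ≠ 0 := left_ne_zero_of_mul_eq_one l1
    simpa [h4, hα0] using h3
  have nv : ‖v‖ = ‖w‖ := by
    have := inn h w w
    rw [hhw] at this
    rw [inner_self_eq_norm_sq_to_K, inner_self_eq_norm_sq_to_K] at this
    have h5 : ‖v‖ ^ 2 = ‖w‖ ^ 2 := by exact_mod_cast this
    exact (sq_eq_sq₀ (norm_nonneg _) (norm_nonneg _)).mp h5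
  have n2 : ‖v - w‖ * ‖v - w‖ = ‖v‖ * ‖v‖ + ‖w‖ * ‖w‖ := by
    have := @norm_sub_sq ℂ V _ _ _ v w
    rw [hvw] at this
    simp at this
    nlinarith
  have n3 : ‖v - w‖ ≤ ‖(h : V →L[ℂ] V) - 1‖ * ‖w‖ := by
    have : v - w = ((h : V →L[ℂ] V) - 1) w := by simp [hhw]
    rw [this]; exact ContinuousLinearMap.le_opNorm _ _
  have hwpos : 0 < ‖w‖ := by rw [← nv]; exact norm_pos_iff.mpr hv0
  have n4 : ‖v - w‖ < ‖w‖ := n3.trans_lt (by nlinarith)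
  nlinarith [norm_nonneg (v - w)]

theorem bgx_small_comm {V : Type*} [NormedAddCommGroup V] [InnerProductSpace ℂ V]
    [CompleteSpace V] [FiniteDimensional ℂ V] {G : Type} [Group G] [Finite G]
    (σ : G →* unitary (V →L[ℂ] V)) (hσ : Function.Injective σ) :
    ∀ g ∈ {g : G | ‖(σ g : V →L[ℂ] V) - 1‖ < 1/4}, ∀ h ∈ {g : G | ‖(σ g : V →L[ℂ] V) - 1‖ < 1/4},
      g * h = h * g := by
  set s : Set G := {g | ‖(σ g : V →L[ℂ] V) - 1‖ < 1/4} with hs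
  -- small elements commute
  have key : ∀ g c : G, ‖(σ c : V →L[ℂ] V) - 1‖ < 1 →
      g * (g * c * g⁻¹ * c⁻¹) = (g * c * g⁻¹ * c⁻¹) * g → g * c = c * g := by
    intro g c hc hcom
    have e1 : Commute g (c * g⁻¹ * c⁻¹) := by
      have h1 : Commute g (g⁻¹ * (g * c * g⁻¹ * c⁻¹)) :=
        Commute.mul_right (Commute.inv_right (Commute.refl g)) hcom
      have h2 : g⁻¹ * (g * c * g⁻¹ * c⁻¹) = c * g⁻¹ * c⁻¹ := by group
      rwa [h2] at h1
    have e2 : Commute g (c * g * c⁻¹) := by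
      have := e1.inv_right
      have h2 : (c * g⁻¹ * c⁻¹)⁻¹ = c * g * c⁻¹ := by group
      rwa [h2] at this
    apply hσ
    rw [map_mul, map_mul]
    apply bgx_frob _ _ hc
    have := congrArg σ e2.eq
    simpa using this
  have hsep : ∃ δ > 0, ∀ x : G, ‖(σ x : V →L[ℂ] V) - 1‖ < δ → x = 1 := by
    have hfin : (Set.univ : Set G).Finite := Set.finite_univ
    by_cases hne : ({1}ᶜ : Set G).Nonempty
    · obtain ⟨x0, hx0, hmin⟩ := Set.exists_min_image ({1}ᶜ : Set G)
        (fun x => ‖(σ x : V →L[ℂ] V) - 1‖) (Set.toFinite _) hne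
      refine ⟨‖(σ x0 : V →L[ℂ] V) - 1‖, ?_, fun x hx => ?_⟩
      · rw [gt_iff_lt, norm_pos_iff, sub_ne_zero]
        intro e
        apply hx0
        apply hσ
        rw [map_one]; exact Subtype.ext e
      · by_contra hx1
        exact absurd (hmin x hx1) (not_le.mpr hx)
    · refine ⟨1, one_pos, fun x _ => ?_⟩
      by_contra hx
      exact hne ⟨x, hx⟩
  obtain ⟨δ, hδ, hsep⟩ := hsep
  have hcomm : ∀ g ∈ s, ∀ h ∈ s, g * h = h * g := by
    intro g hg h hh
    let c : ℕ → G := fun k => Nat.rec h (fun _ c => g * c * g⁻¹ * c⁻¹) k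
    have c0 : c 0 = h := rfl
    have cs : ∀ k, c (k+1) = g * c k * g⁻¹ * (c k)⁻¹ := fun k => rfl
    have hb : ∀ k, ‖(σ (c k) : V →L[ℂ] V) - 1‖ ≤ (1/2)^k * (1/4) := by
      intro k
      induction k with
      | zero => rw [c0]; simpa using (show ‖(σ h : V →L[ℂ] V) - 1‖ < 1/4 from hh).le
      | succ k ih =>
        rw [cs]
        have h1 := bgx_comm_norm (σ g) (σ (c k))
        have h2 : σ (g * c k * g⁻¹ * (c k)⁻¹) = σ g * σ (c k) * (σ g)⁻¹ * (σ (c k))⁻¹ := by simp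
        rw [h2]
        refine h1.trans ?_
        have hg' : ‖(σ g : V →L[ℂ] V) - 1‖ < 1/4 := hg
        have h0 := norm_nonneg ((σ g : V →L[ℂ] V) - 1)
        have h3 := norm_nonneg ((σ (c k) : V →L[ℂ] V) - 1)
        rw [pow_succ]
        nlinarith
    have hlt1 : ∀ k, ‖(σ (c k) : V →L[ℂ] V) - 1‖ < 1 := by
      intro k
      refine (hb k).trans_lt ?_
      have : ((1:ℝ)/2)^k ≤ 1 := pow_le_one₀ (by norm_num) (by norm_num)
      linarith
    obtain ⟨k, hk⟩ := exists_pow_lt_of_lt_one hδ (show (1/2:ℝ) < 1 by norm_num)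
    have hck : c k = 1 := by
      apply hsep
      refine (hb k).trans_lt ?_
      have : (0:ℝ) < (1/2)^k := by positivity
      linarith
    have down : ∀ j, g * c j = c j * g → g * c 0 = c 0 * g := by
      intro j
      induction j with
      | zero => exact id
      | succ j ih =>
        intro hj
        apply ih
        apply key _ _ (hlt1 j)
        rw [cs] at hj
        exact hj
    exact down k (by rw [hck]; simp)
  exact hcomm

theorem bgx_dist {A : Type*} [CStarAlgebra A] (a b : unitary A) (c : A) (ha : ‖(a:A) - c‖ < 1/8)
    (hb : ‖(b:A) - c‖ < 1/8) : ‖((a⁻¹ * b : unitary A) : A) - 1‖ < 1/4 := by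
  have h3 : ((a⁻¹ * b : unitary A) : A) - 1 = ((a⁻¹ : unitary A) : A) * ((b : A) - a) := by
    rw [mul_sub]
    congr 1
    have : ((a⁻¹ * a : unitary A) : A) = 1 := by simp
    exact this.symm
  rw [h3, CStarRing.norm_coe_unitary_mul]
  calc ‖(b : A) - a‖ = ‖((b : A) - c) - ((a : A) - c)‖ := by congr 1; abel
    _ ≤ ‖(b : A) - c‖ + ‖(a : A) - c‖ := norm_sub_le _ _
    _ < 1/4 := by linarith

theorem bgx_jordan_aux {V : Type*} [NormedAddCommGroup V] [InnerProductSpace ℂ V]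
    [CompleteSpace V] [FiniteDimensional ℂ V] {G : Type} [Group G] [Finite G]
    (σ : G →* unitary (V →L[ℂ] V)) (hσ : Function.Injective σ) (t : Set (V →L[ℂ] V)) [Finite t]
    (ht : Metric.closedBall (0 : V →L[ℂ] V) 1 ⊆ ⋃ y ∈ t, Metric.ball y (1/8)) :
    ∃ H : Subgroup G, H.index ≤ Nat.card t ∧ ∀ x ∈ H, ∀ y ∈ H, x * y = y * x := by
  set s : Set G := {g | ‖(σ g : V →L[ℂ] V) - 1‖ < 1/4} with hs
  have hcomm := bgx_small_comm σ hσ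
  refine ⟨Subgroup.closure s, ?_, ?_⟩
  · have hcov : ∀ g : G, ∃ z : t, ‖(σ g : V →L[ℂ] V) - z.1‖ < 1/8 := by
      intro g
      have : (σ g : V →L[ℂ] V) ∈ Metric.closedBall (0 : V →L[ℂ] V) 1 := by
        rw [mem_closedBall_zero_iff]
        have := CStarRing.norm_coe_unitary_mul (σ g) (1 : V →L[ℂ] V)
        rw [mul_one] at this
        rw [this]
        exact ContinuousLinearMap.norm_id_le
      have := ht this
      simp only [Set.mem_iUnion] at this
      obtain ⟨z, hz, hzb⟩ := this
      exact ⟨⟨z, hz⟩, by rwa [← dist_eq_norm]⟩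
    choose f hf using hcov
    rw [Subgroup.index_eq_card]
    refine Nat.card_le_card_of_injective (fun q : G ⧸ Subgroup.closure s => f q.out) ?_
    intro q1 q2 hq
    rw [← q1.out_eq', ← q2.out_eq']
    rw [QuotientGroup.eq]
    apply Subgroup.subset_closure
    change ‖(σ (q1.out⁻¹ * q2.out) : V →L[ℂ] V) - 1‖ < 1/4
    have h1 := hf q1.out
    have h2 := hf q2.out
    simp only at hq
    rw [hq] at h1
    have h3 := bgx_dist (σ q1.out) (σ q2.out) _ h1 h2
    have h4 : σ (q1.out⁻¹ * q2.out) = (σ q1.out)⁻¹ * σ q2.out := by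
      rw [map_mul σ, map_inv σ]
    rw [h4]
    exact h3
  · have := Subgroup.isMulCommutative_closure hcomm
    intro x hx y hy
    have := this.is_comm.comm ⟨x, hx⟩ ⟨y, hy⟩
    exact congrArg Subtype.val this

theorem bgx_jordan (n : ℕ) : ∃ J : ℕ, ∀ (G : Type) [Group G] [Finite G]
    (ρ : G →* GL (Fin n) ℂ), Function.Injective ρ →
    ∃ H : Subgroup G, H.index ≤ J ∧ ∀ x ∈ H, ∀ y ∈ H, x * y = y * x := by
  classical
  let V := EuclideanSpace ℂ (Fin n)
  have : ProperSpace (V →L[ℂ] V) := FiniteDimensional.proper ℂ _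
  obtain ⟨t, htf, ht⟩ := Metric.totallyBounded_iff.mp
    (isCompact_closedBall (0 : V →L[ℂ] V) 1).totallyBounded (1/8) (by norm_num)
  have := htf.to_subtype
  refine ⟨Nat.card t, fun G _ _ ρ hρ => ?_⟩
  let ρ1 : G →* (V →L[ℂ] V) :=
    ((Matrix.toEuclideanCLM (n := Fin n) (𝕜 := ℂ)).toAlgEquiv.toMulEquiv.toMonoidHom.comp
      (Units.coeHom _)).comp ρ
  have hρ1 : Function.Injective ρ1 := by
    intro a b hab
    apply hρ
    apply Units.ext
    exact (Matrix.toEuclideanCLM (n := Fin n) (𝕜 := ℂ)).injective hab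
  obtain ⟨y, hy⟩ := bgx_unitarize ρ1
  let σ : G →* unitary (V →L[ℂ] V) :=
    { toFun := fun g => ⟨(y : V →L[ℂ] V) * ρ1 g * ((y⁻¹ : (V →L[ℂ] V)ˣ) : V →L[ℂ] V), hy g⟩
      map_one' := by apply Subtype.ext; simp
      map_mul' := by intro a b; apply Subtype.ext; simp [mul_assoc] }
  have hσ : Function.Injective σ := by
    intro a b hab
    apply hρ1
    have := congrArg Subtype.val hab
    simpa [σ] using this
  exact bgx_jordan_aux σ hσ t ht

theorem bgx_section {E G : Type*} [Group E] [Group G] [Finite E] (f : E →* G)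
    (hf : Function.Surjective f) (hc : Nat.Coprime (Nat.card f.ker) (Nat.card G)) :
    ∃ s : G →* E, ∀ g, f (s g) = g := by
  have hidx : f.ker.index = Nat.card G := by
    rw [Subgroup.index_ker, MonoidHom.range_eq_top.mpr hf, Subgroup.card_top]
  obtain ⟨H, hH⟩ := Subgroup.exists_right_complement'_of_coprime (N := f.ker) (by rwa [hidx])
  have hbij : Function.Bijective (f.comp H.subtype) := by
    constructor
    · rw [injective_iff_map_eq_one]
      intro a ha
      have : (a : E) ∈ f.ker ⊓ H := ⟨ha, a.2⟩
      rw [hH.disjoint.eq_bot] at this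
      exact Subtype.ext (Subgroup.mem_bot.mp this)
    · intro g
      obtain ⟨e, rfl⟩ := hf g
      obtain ⟨⟨n, h⟩, hnh⟩ := hH.2 e
      refine ⟨h, ?_⟩
      have hnh : (n : E) * h = e := hnh
      rw [← hnh, map_mul, n.2, one_mul]; rfl
  let e := MulEquiv.ofBijective _ hbij
  refine ⟨H.subtype.comp e.symm.toMonoidHom, fun g => ?_⟩
  exact e.apply_symm_apply g

theorem bgx_pow_cong {R : Type*} [Ring R] (p : ℕ) (x : R) (h : ∃ z, x = 1 + (p:R) * z) (m : ℕ) :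
    ∃ z, x ^ (p ^ m) = 1 + (p:R)^(m+1) * z := by
  have hcp : ∀ a : R, (p:R) * a = a * p := fun a => Nat.cast_commute p a
  induction m with
  | zero => simpa using h
  | succ m ih =>
    obtain ⟨z, hz⟩ := ih
    set y := x ^ (p^m) with hy
    have hgs : ∀ i, ∃ w, y^i = 1 + (p:R) * w := by
      intro i
      induction i with
      | zero => exact ⟨0, by simp⟩
      | succ i ihi =>
        obtain ⟨w, hw⟩ := ihi
        refine ⟨w + (1 + p * w) * ((p:R)^m * z), ?_⟩
        rw [pow_succ, hw, hz, pow_succ']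
        have : (1 + (p:R) * w) * (1 + (p:R) * (p:R)^m * z) = 1 + (p:R) * w + (1 + (p:R) * w) * (p:R) * ((p:R)^m * z) := by
          noncomm_ring
        rw [this, ← hcp]
        noncomm_ring
    choose w hw using hgs
    have h1 : ∑ i ∈ Finset.range p, y^i = (p:R) * (1 + ∑ i ∈ Finset.range p, w i) := by
      simp only [hw]
      rw [Finset.sum_add_distrib, ← Finset.mul_sum]
      simp [mul_add]
    have h2 := geom_sum_mul y p
    refine ⟨(1 + ∑ i ∈ Finset.range p, w i) * z, ?_⟩
    rw [pow_succ, pow_mul, ← hy]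
    have h3 : y - 1 = (p:R)^(m+1) * z := by rw [hz]; abel
    rw [h3, h1] at h2
    rw [← sub_eq_iff_eq_add', ← h2, pow_succ (p:R) (m+1)]
    have hcm : ∀ a : R, a * (p:R)^(m+1) = (p:R)^(m+1) * a := fun a => ((Nat.cast_commute p a).pow_left (m+1)).eq.symm
    rw [← mul_assoc _ _ z, mul_assoc (p:R), hcm, ← mul_assoc (p:R), ← pow_succ', pow_succ, mul_assoc]

theorem bgx_ker_pgroup (p n k : ℕ) [Fact p.Prime] (hk : k ≠ 0) :
    IsPGroup p (Matrix.GeneralLinearGroup.map (n := Fin n)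
      (ZMod.castHom (dvd_pow_self p hk) (ZMod p))).ker := by
  rintro ⟨x, hx⟩
  refine ⟨k, ?_⟩
  apply Subtype.ext
  apply Units.ext
  have : NeZero (p ^ k) := ⟨pow_ne_zero _ (Fact.out : p.Prime).ne_zero⟩
  have h1 : ∃ z, (x : Matrix (Fin n) (Fin n) (ZMod (p^k))) = 1 + (p : Matrix (Fin n) (Fin n) (ZMod (p^k))) * z := by
    have hx' : ∀ i j, ∃ b : ZMod (p^k), x.1 i j = (1 : Matrix (Fin n) (Fin n) (ZMod (p^k))) i j + p * b := by
      intro i j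
      have h2 : (ZMod.castHom (dvd_pow_self p hk) (ZMod p)) (x.1 i j - (1 : Matrix (Fin n) (Fin n) (ZMod (p^k))) i j) = 0 := by
        rw [map_sub]
        have h3 : Matrix.GeneralLinearGroup.map (n := Fin n)
          (ZMod.castHom (dvd_pow_self p hk) (ZMod p)) x = 1 := hx
        have h4 := congrArg (fun u : GL (Fin n) (ZMod p) => u.1 i j) h3
        have h5 : (ZMod.castHom (dvd_pow_self p hk) (ZMod p)) (x.1 i j) = (1 : Matrix (Fin n) (Fin n) (ZMod p)) i j := h4
        rw [h5, Matrix.one_apply, Matrix.one_apply]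
        split_ifs
        · rw [map_one, sub_self]
        · rw [map_zero, sub_self]
      set a := x.1 i j - (1 : Matrix (Fin n) (Fin n) (ZMod (p^k))) i j with ha
      have h3 : p ∣ a.val := by
        rw [← ZMod.natCast_eq_zero_iff, ← h2]
        conv_rhs => rw [← ZMod.natCast_zmod_val a]
        rw [map_natCast]
      obtain ⟨b, hb⟩ := h3
      refine ⟨b, ?_⟩
      rw [← sub_eq_iff_eq_add', ← ha, ← ZMod.natCast_zmod_val a, hb]
      push_cast; rfl
    choose b hb using hx'
    refine ⟨Matrix.of b, ?_⟩
    ext i j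
    rw [hb, Matrix.add_apply]
    congr 1
    rw [← Matrix.diagonal_natCast, Matrix.diagonal_mul]
    rfl
  obtain ⟨z, hz⟩ := bgx_pow_cong p _ h1 k
  have h0 : (p : Matrix (Fin n) (Fin n) (ZMod (p^k)))^(k+1) = 0 := by
    have : ((p^k : ℕ) : Matrix (Fin n) (Fin n) (ZMod (p^k))) = 0 := by
      rw [← Matrix.diagonal_natCast]
      simp only [ZMod.natCast_self]
      exact Matrix.diagonal_zero
    rw [pow_succ, ← Nat.cast_pow, this, zero_mul]
  rw [h0] at hz
  simpa using hz

theorem bgx_lift_level (p n k : ℕ) [Fact p.Prime] (hk : k ≠ 0)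
    (G : Subgroup (GL (Fin n) (ZMod p))) (hG : ¬ p ∣ Nat.card G) :
    ∃ s : G →* GL (Fin n) (ZMod (p^k)), ∀ g,
      Matrix.GeneralLinearGroup.map (ZMod.castHom (dvd_pow_self p hk) (ZMod p)) (s g) = g := by
  have : NeZero (p ^ k) := ⟨pow_ne_zero _ (Fact.out : p.Prime).ne_zero⟩
  have hp : p.Prime := Fact.out
  set c := ZMod.castHom (dvd_pow_self p hk) (ZMod p) with hc
  set π := Matrix.GeneralLinearGroup.map (n := Fin n) c with hπ
  have hπs : Function.Surjective π := by
    intro g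
    have hcs : Function.Surjective c := ZMod.castHom_surjective _
    choose l hl using hcs
    set M : Matrix (Fin n) (Fin n) (ZMod (p^k)) := Matrix.of fun i j => l (g.1 i j) with hM
    have hMg : c.mapMatrix M = g.1 := by ext i j; simp [hM, hl]
    have hdet : c M.det = g.1.det := by rw [RingHom.map_det, hMg]
    have hu : IsUnit M.det := by
      have h1 : IsUnit (c M.det) := by rw [hdet]; exact (Matrix.isUnit_iff_isUnit_det _).mp g.isUnit
      rw [← ZMod.natCast_zmod_val M.det] at h1 ⊢
      rw [map_natCast, ZMod.isUnit_iff_coprime] at h1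
      rw [ZMod.isUnit_iff_coprime]
      exact h1.pow_right k
    refine ⟨Matrix.GeneralLinearGroup.mk'' M hu, ?_⟩
    apply Units.ext
    exact hMg
  let E := G.comap π
  let f : E →* G := (π.comp E.subtype).codRestrict G (fun e => e.2)
  have hf : Function.Surjective f := by
    intro g
    obtain ⟨e, he⟩ := hπs g.1
    exact ⟨⟨e, by change π e ∈ G; rw [he]; exact g.2⟩, Subtype.ext he⟩
  have hpg : IsPGroup p f.ker := by
    have h1 := bgx_ker_pgroup p n k hk
    rintro ⟨⟨x, hxE⟩, hx⟩
    have hx' : π x = 1 := congrArg Subtype.val (show f ⟨x, hxE⟩ = 1 from hx)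
    obtain ⟨m, hm⟩ := h1 ⟨x, hx'⟩
    refine ⟨m, ?_⟩
    apply Subtype.ext; apply Subtype.ext
    have h2 := congrArg Subtype.val hm
    simpa using h2
  obtain ⟨m, hm⟩ := IsPGroup.iff_card.mp hpg
  obtain ⟨s, hs⟩ := bgx_section f hf (by
    rw [hm]; exact ((Nat.Prime.coprime_iff_not_dvd hp).mpr hG).pow_left m)
  exact ⟨E.subtype.comp s, fun g => congrArg Subtype.val (hs g)⟩

theorem bgx_padic_clopen (p k : ℕ) [Fact p.Prime] (s : Set (ZMod (p^k))) :
    IsClosed {x : ℤ_[p] | PadicInt.toZModPow k x ∈ s} := by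
  have hop : ∀ t : Set (ZMod (p^k)), IsOpen {x : ℤ_[p] | PadicInt.toZModPow k x ∈ t} := by
    intro t
    rw [Metric.isOpen_iff]
    intro x hx
    have hp : (0:ℝ) < p := by exact_mod_cast (Fact.out : p.Prime).pos
    refine ⟨(p:ℝ)^(-(k:ℤ)), by positivity, fun y hy => ?_⟩
    have h1 : ‖y - x‖ ≤ (p:ℝ)^(-(k:ℤ)) := by
      rw [← dist_eq_norm]; exact le_of_lt hy
    rw [PadicInt.norm_le_pow_iff_mem_span_pow, ← PadicInt.ker_toZModPow, RingHom.mem_ker, map_sub,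
      sub_eq_zero] at h1
    simp only [Set.mem_ofPred_eq] at hx ⊢
    rwa [h1]
  rw [← isOpen_compl_iff]
  exact hop sᶜ

theorem bgx_lift_padic (p n : ℕ) [Fact p.Prime]
    (G : Subgroup (GL (Fin n) (ZMod p))) (hG : ¬ p ∣ Nat.card G) :
    ∃ s : G →* GL (Fin n) ℤ_[p], Function.Injective s := by
  let ρ : ℤ_[p] →+* ZMod p :=
    (ZMod.castHom (dvd_pow_self p one_ne_zero) (ZMod p)).comp (PadicInt.toZModPow 1)
  let X := G → Matrix (Fin n) (Fin n) ℤ_[p]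
  let C : ℕ → Set X := fun k => {φ | (∀ g h i j,
      PadicInt.toZModPow (k+1) ((φ (g*h) - φ g * φ h) i j) = 0) ∧ ∀ g i j, ρ (φ g i j) = g.1.1 i j}
  have hclosed : ∀ k, IsClosed (C k) := by
    intro k
    have h1 : C k = (⋂ g, ⋂ h, ⋂ i, ⋂ j, (fun φ : X => (φ (g*h) - φ g * φ h) i j) ⁻¹'
        {x : ℤ_[p] | PadicInt.toZModPow (k+1) x ∈ ({0} : Set (ZMod (p^(k+1))))}) ∩
        ⋂ g, ⋂ i, ⋂ j, (fun φ : X => φ g i j) ⁻¹' {x : ℤ_[p] | PadicInt.toZModPow 1 x ∈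
          ({y | ZMod.castHom (dvd_pow_self p one_ne_zero) (ZMod p) y = g.1.1 i j} : Set (ZMod (p^1)))} := by
      ext φ
      simp only [C, Set.mem_inter_iff, Set.mem_iInter, Set.mem_preimage, Set.mem_ofPred_eq, Set.mem_singleton_iff]
      rfl
    rw [h1]
    refine IsClosed.inter ?_ ?_
    · refine isClosed_iInter fun g => isClosed_iInter fun h => isClosed_iInter fun i => isClosed_iInter fun j => ?_
      refine IsClosed.preimage ?_ (bgx_padic_clopen p (k+1) _)
      simp only [Matrix.sub_apply, Matrix.mul_apply]
      have hc : ∀ g i j, Continuous (fun φ : X => φ g i j) := fun g i j =>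
        (continuous_apply g).matrix_elem i j
      exact (hc _ _ _).sub (continuous_finsetSum _ fun l _ => (hc _ _ _).mul (hc _ _ _))
    · refine isClosed_iInter fun g => isClosed_iInter fun i => isClosed_iInter fun j => ?_
      refine IsClosed.preimage ?_ (bgx_padic_clopen p 1 _)
      exact (continuous_apply g).matrix_elem i j
  have hne : ∀ k, (C k).Nonempty := by
    intro k
    obtain ⟨s, hs⟩ := bgx_lift_level p n (k+1) (Nat.succ_ne_zero k) G hG
    have hsur : Function.Surjective (PadicInt.toZModPow (p := p) (k+1)) := by
      have : NeZero (p ^ (k+1)) := ⟨pow_ne_zero _ (Fact.out : p.Prime).ne_zero⟩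
      intro a
      exact ⟨(a.val : ℤ_[p]), by rw [map_natCast, ZMod.natCast_zmod_val]⟩
    choose l hl using hsur
    refine ⟨fun g => Matrix.of fun i j => l ((s g).1 i j), ?_, ?_⟩
    · intro g h i j
      rw [Matrix.sub_apply, map_sub, Matrix.mul_apply, map_sum]
      simp only [map_mul, Matrix.of_apply, hl]
      rw [Units.val_mul, Matrix.mul_apply, sub_self]
    · intro g i j
      have h1 : (g.1.1 i j) = ZMod.castHom (dvd_pow_self p (Nat.succ_ne_zero k)) (ZMod p) ((s g).1 i j) := by
        rw [← hs g]; rfl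
      rw [h1]
      conv_rhs => rw [← hl ((s g).1 i j)]
      simp only [ρ, Matrix.of_apply, RingHom.comp_apply]
      rw [← PadicInt.zmod_cast_comp_toZModPow 1 (k+1) (by omega)]
      rw [RingHom.comp_apply, ← RingHom.comp_apply]
      congr 1
      exact Subsingleton.elim _ _
  have hmono : ∀ k, C (k+1) ⊆ C k := by
    rintro k φ ⟨h1, h2⟩
    refine ⟨fun g h i j => ?_, h2⟩
    rw [← PadicInt.zmod_cast_comp_toZModPow (k+1) (k+1+1) (by omega), RingHom.comp_apply, h1, map_zero]
  have : CompactSpace X := by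
    have : CompactSpace (Matrix (Fin n) (Fin n) ℤ_[p]) := inferInstanceAs (CompactSpace (Fin n → Fin n → ℤ_[p]))
    infer_instance
  obtain ⟨φ, hφ⟩ := IsCompact.nonempty_iInter_of_sequence_nonempty_isCompact_isClosed C hmono hne
    (hclosed 0).isCompact hclosed
  rw [Set.mem_iInter] at hφ
  have hmul : ∀ g h, φ (g*h) = φ g * φ h := by
    intro g h
    ext i j
    rw [← sub_eq_zero, ← Matrix.sub_apply, ← PadicInt.ext_of_toZModPow]
    intro k
    rw [map_zero]
    cases k with
    | zero =>
      have : Subsingleton (ZMod (p^0)) := by rw [pow_zero]; infer_instance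
      exact Subsingleton.elim _ _
    | succ k => exact (hφ k).1 g h i j
  have hlift : ∀ g : G, ρ.mapMatrix (φ g) = g.1.1 := fun g => by ext i j; exact (hφ 0).2 g i j
  have hone : φ 1 = 1 := by
    have h1 : φ 1 * φ 1 = φ 1 := by rw [← hmul, one_mul]
    have hu : IsUnit (φ 1) := by
      rw [Matrix.isUnit_iff_isUnit_det]
      by_contra hcon
      have h2 : (φ 1).det ∈ IsLocalRing.maximalIdeal ℤ_[p] := hcon
      have h3 : ρ (φ 1).det = 1 := by rw [RingHom.map_det, hlift]; simp
      rw [← PadicInt.ker_toZMod, RingHom.mem_ker] at h2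
      obtain ⟨y, hy⟩ : (p : ℤ_[p]) ∣ (φ 1).det := by
        have h4 : (φ 1).det ∈ IsLocalRing.maximalIdeal ℤ_[p] := hcon
        rwa [PadicInt.maximalIdeal_eq_span_p, Ideal.mem_span_singleton] at h4
      rw [hy, map_mul, map_natCast, ZMod.natCast_self, zero_mul] at h3
      exact zero_ne_one h3
    exact hu.mul_left_cancel (by rw [h1, mul_one])
  let Φ : G →* Matrix (Fin n) (Fin n) ℤ_[p] := ⟨⟨φ, hone⟩, hmul⟩
  refine ⟨MonoidHom.toHomUnits Φ, fun g h hgh => ?_⟩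
  have h1 : φ g = φ h := congrArg Units.val hgh
  apply Subtype.ext
  apply Units.ext
  rw [← hlift g, ← hlift h, h1]

theorem bgx_padic_complex (p : ℕ) [Fact p.Prime] : ∃ f : ℤ_[p] →+* ℂ, Function.Injective f := by
  let A := AlgebraicClosure ℚ_[p]
  have hge : Cardinal.continuum ≤ Cardinal.mk ℚ_[p] :=
    continuum_le_cardinal_of_nontriviallyNormedField ℚ_[p]
  have hle : Cardinal.mk ℚ_[p] ≤ Cardinal.continuum := by
    have h1 : Cardinal.mk ℚ_[p] ≤ Cardinal.mk (ℕ → ℚ) := by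
      refine (Cardinal.mk_le_of_surjective (f := (fun x : PadicSeq p => (Padic.mk x))) (Quotient.mk_surjective)).trans ?_
      exact Cardinal.mk_le_of_injective (f := fun x : PadicSeq p => x.1) Subtype.val_injective
    refine h1.trans ?_
    simp
  have hA : Cardinal.mk A = Cardinal.continuum := by
    apply le_antisymm
    · refine (Algebra.IsAlgebraic.cardinalMk_le_max ℚ_[p] A).trans ?_
      exact max_le hle Cardinal.aleph0_le_continuum
    · exact hge.trans (Cardinal.mk_le_of_injective (algebraMap ℚ_[p] A).injective)
  obtain ⟨e⟩ : Nonempty (A ≃ ℂ) := by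
    rw [← Cardinal.lift_mk_eq']
    simp [hA]
  have : CharZero A := charZero_of_injective_algebraMap (algebraMap ℚ_[p] A).injective
  obtain ⟨E⟩ := IsAlgClosed.ringEquiv_of_equiv_of_charZero (K := A) (L := ℂ) (by rw [hA]; exact Cardinal.aleph0_lt_continuum) ⟨e⟩
  refine ⟨(E.toRingHom.comp (algebraMap ℚ_[p] A)).comp PadicInt.Coe.ringHom, ?_⟩
  exact (E.injective.comp (algebraMap ℚ_[p] A).injective).comp Subtype.val_injective

theorem bgx_jordan_mod (n : ℕ) : ∃ J : ℕ, ∀ (p : ℕ) [Fact p.Prime]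
    (G : Subgroup (GL (Fin n) (ZMod p))), ¬ p ∣ Nat.card G →
    ∃ H : Subgroup G, H.index ≤ J ∧ ∀ x ∈ H, ∀ y ∈ H, x * y = y * x := by
  obtain ⟨J, hJ⟩ := bgx_jordan n
  refine ⟨J, fun p _ G hG => ?_⟩
  obtain ⟨s, hs⟩ := bgx_lift_padic p n G hG
  obtain ⟨f, hf⟩ := bgx_padic_complex p
  refine hJ G ((Matrix.GeneralLinearGroup.map f).comp s) ?_
  intro a b hab
  apply hs
  apply Units.ext
  ext i j
  apply hf
  exact congrArg (fun u : GL (Fin n) ℂ => u.1 i j) hab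



open UniqueFactorizationMonoid in
theorem bgx_euler {R : Type*} [CommRing R] [IsDedekindDomain R]
    (T A : Finset (Ideal R)) (f : Ideal R →*₀ ℝ)
    (hA : ∀ I ∈ A, I ≠ ⊥ ∧ ∀ P : Ideal R, P.IsPrime → I ≤ P → P ∈ T)
    (hf : ∀ I, 0 ≤ f I) (hT : ∀ P ∈ T, f P < 1) :
    ∑ I ∈ A, f I ≤ ∏ P ∈ T, (1 - f P)⁻¹ := by
  classical
  let cnt : Ideal R → Ideal R → ℕ := fun I P => (normalizedFactors I).count P
  let K := ∑ I ∈ A, ∑ P ∈ T, cnt I P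
  have h1 : ∀ P ∈ T, ∑ k ∈ Finset.range (K+1), f P ^ k ≤ (1 - f P)⁻¹ := by
    intro P hP
    exact (Summable.sum_le_tsum _ (fun i _ => pow_nonneg (hf P) i)
      (summable_geometric_of_lt_one (hf P) (hT P hP))).trans
      (tsum_geometric_of_lt_one (hf P) (hT P hP)).le
  refine le_trans ?_ (Finset.prod_le_prod (fun P _ => Finset.sum_nonneg fun i _ => pow_nonneg (hf P) i) h1)
  rw [Finset.prod_sum]
  have hdecomp : ∀ I ∈ A, ∏ P ∈ T, P ^ cnt I P = I := by
    intro I hI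
    have h2 := Ideal.prod_normalizedFactors_eq_self (hA I hI).1
    conv_rhs => rw [← h2]
    symm
    apply Finset.prod_multiset_count_of_subset
    intro P hP
    rw [Multiset.mem_toFinset] at hP
    refine (hA I hI).2 P ?_ ?_
    · exact Ideal.isPrime_of_prime (prime_of_normalized_factor P hP)
    · exact Ideal.le_of_dvd (dvd_of_mem_normalizedFactors hP)
  let e : Ideal R → (∀ P ∈ T, ℕ) := fun I P _ => cnt I P
  have hinj : Set.InjOn e A := by
    intro I hI I' hI' h
    rw [← hdecomp I hI, ← hdecomp I' hI']
    refine Finset.prod_congr rfl fun P hP => ?_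
    have := congrFun (congrFun h P) hP
    simp only [e] at this
    rw [this]
  have hsub : A.image e ⊆ T.pi fun _ => Finset.range (K+1) := by
    intro x hx
    rw [Finset.mem_image] at hx
    obtain ⟨I, hI, rfl⟩ := hx
    rw [Finset.mem_pi]
    intro P hP
    rw [Finset.mem_range, Nat.lt_succ_iff]
    calc cnt I P ≤ ∑ P ∈ T, cnt I P := Finset.single_le_sum (f := fun P => cnt I P) (fun _ _ => Nat.zero_le _) hP
      _ ≤ K := Finset.single_le_sum (f := fun I => ∑ P ∈ T, cnt I P) (fun _ _ => Nat.zero_le _) hI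
  refine le_trans ?_ (Finset.sum_le_sum_of_subset_of_nonneg hsub fun x _ _ =>
    Finset.prod_nonneg fun P _ => pow_nonneg (hf _) _)
  rw [Finset.sum_image hinj]
  refine Finset.sum_le_sum fun I hI => ?_
  conv_lhs => rw [← hdecomp I hI, map_prod, ← Finset.prod_attach]
  refine le_of_eq (Finset.prod_congr rfl fun P _ => ?_)
  rw [map_pow]

theorem bgx_neglog (t : ℝ) (h1 : t ≤ 1/2) : (1 - t)⁻¹ ≤ Real.exp (t + 2 * t^2) := by
  have hp : (0:ℝ) < 1 - t := by linarith
  rw [← Real.exp_log (inv_pos.mpr hp), Real.exp_le_exp, Real.log_inv]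
  have h := Real.one_sub_inv_le_log_of_pos hp
  have h2 : (1 - t)⁻¹ ≤ 1 + t + 2 * t^2 := by
    rw [inv_le_iff_one_le_mul₀ hp]
    nlinarith [sq_nonneg t, mul_nonneg (sq_nonneg t) (show 0 ≤ 1 - 2*t by linarith)]
  linarith

open NumberField Filter Topology in
theorem bgx_ideal_sum (F : Type*) [Field F] [NumberField F] :
    ∃ (𝒜 : ℕ → Finset (Ideal (𝓞 F))) (κ : ℝ) (k0 : ℕ), 0 < κ ∧
      (∀ K I, I ∈ 𝒜 K ↔ I ≠ ⊥ ∧ Ideal.absNorm I ≤ 2^K) ∧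
      ∀ j, κ * j ≤ ∑ I ∈ 𝒜 (k0 + j), ((Ideal.absNorm I : ℝ))⁻¹ := by
  classical
  have hfin : ∀ K : ℕ, {I : Ideal (𝓞 F) | I ≠ ⊥ ∧ Ideal.absNorm I ≤ 2^K}.Finite := fun K =>
    (Ideal.finite_setOfPred_absNorm_le (S := 𝓞 F) (2^K)).subset fun I hI => hI.2
  let 𝒜 : ℕ → Finset (Ideal (𝓞 F)) := fun K => (hfin K).toFinset
  have hmem : ∀ K I, I ∈ 𝒜 K ↔ I ≠ ⊥ ∧ Ideal.absNorm I ≤ 2^K := fun K I => by simp [𝒜]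
  have hsub : ∀ K, 𝒜 K ⊆ 𝒜 (K+1) := fun K I hI => by
    rw [hmem] at hI ⊢
    exact ⟨hI.1, hI.2.trans (Nat.pow_le_pow_right (by norm_num) (Nat.le_succ K))⟩
  obtain ⟨κ, hκ, hlim⟩ : ∃ κ : ℝ, 0 < κ ∧ Tendsto (fun K : ℕ => ((𝒜 K).card : ℝ) / 2^K) atTop (𝓝 κ) := by
    refine ⟨_, ?_, ((NumberField.Ideal.tendsto_norm_le_div_atTop₀ F).comp (tendsto_pow_atTop_atTop_of_one_lt (r := (2:ℝ)) (by norm_num))).congr ?_⟩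
    · have := dedekindZeta_residue_pos F
      rwa [dedekindZeta_residue_def] at this
    · intro K
      simp only [Function.comp]
      congr 2
      have h5 : Nat.card (𝒜 K) = (𝒜 K).card := by simp
      rw [← h5]
      refine Nat.card_congr
        { toFun := fun I => ⟨I.1.1, (hmem K _).mpr ⟨nonZeroDivisors.ne_zero I.1.2, ?_⟩⟩
          invFun := fun I => ⟨⟨I.1, mem_nonZeroDivisors_of_ne_zero ((hmem K _).mp I.2).1⟩, ?_⟩
          left_inv := fun I => rfl
          right_inv := fun I => rfl }
      · exact_mod_cast I.2
      · exact_mod_cast ((hmem K _).mp I.2).2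
  have hlim2 : Tendsto (fun K : ℕ => (((𝒜 (K+1)).card : ℝ) - (𝒜 K).card) / 2^(K+1)) atTop (𝓝 (κ - κ / 2)) := by
    refine ((hlim.comp (tendsto_add_atTop_nat 1)).sub (hlim.div_const 2)).congr fun K => ?_
    simp only [Function.comp]
    rw [sub_div, div_div, pow_succ]
  have hev : ∀ᶠ K : ℕ in atTop, κ / 4 ≤ (((𝒜 (K+1)).card : ℝ) - (𝒜 K).card) / 2^(K+1) :=
    hlim2.eventually_const_le (by linarith)
  obtain ⟨k0, hk0⟩ := eventually_atTop.mp hev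
  refine ⟨𝒜, κ / 4, k0, by positivity, hmem, fun j => ?_⟩
  induction j with
  | zero => simp; exact Finset.sum_nonneg fun _ _ => by positivity
  | succ j ih =>
    rw [← add_assoc, ← Finset.sum_sdiff (hsub (k0 + j))]
    have h1 := hk0 (k0 + j) (by omega)
    have h2 : (((𝒜 (k0 + j+1)).card : ℝ) - (𝒜 (k0 + j)).card) / 2^(k0 + j+1) ≤
        ∑ I ∈ 𝒜 (k0 + j + 1) \ 𝒜 (k0 + j), ((Ideal.absNorm I : ℝ))⁻¹ := by
      have h3 : (((𝒜 (k0 + j+1)).card : ℝ) - (𝒜 (k0 + j)).card) = ((𝒜 (k0 + j + 1) \ 𝒜 (k0 + j)).card : ℝ) := by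
        rw [Finset.card_sdiff_of_subset (hsub _), Nat.cast_sub (Finset.card_le_card (hsub _))]
      rw [h3, div_eq_mul_inv, ← nsmul_eq_mul]
      apply Finset.card_nsmul_le_sum
      intro I hI
      rw [Finset.mem_sdiff, hmem] at hI
      have hpos : 0 < Ideal.absNorm I := Nat.pos_of_ne_zero (by rw [Ne, Ideal.absNorm_eq_zero_iff]; exact hI.1.1)
      apply inv_anti₀ (by exact_mod_cast hpos)
      exact_mod_cast hI.1.2
    push_cast
    linarith

open NumberField in
theorem bgx_prime_data (F : Type*) [Field F] [NumberField F] (P : Ideal (𝓞 F)) (hP : P.IsPrime)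
    (h0 : P ≠ ⊥) : ∃ p : ℕ, p.Prime ∧ (p : 𝓞 F) ∈ P ∧ p ≤ Ideal.absNorm P ∧
      ((Ideal.absNorm P = p ∧ Nonempty (𝓞 F →+* ZMod p)) ∨ p^2 ≤ Ideal.absNorm P) := by
  have hmax : P.IsMaximal := hP.isMaximal h0
  let := Ideal.Quotient.field P
  have : Finite (𝓞 F ⧸ P) := Ideal.finiteQuotientOfFreeOfNeBot P h0
  let := Fintype.ofFinite (𝓞 F ⧸ P)
  obtain ⟨p, hc⟩ := CharP.exists (𝓞 F ⧸ P)
  obtain ⟨m, hp, hcard⟩ := FiniteField.card (𝓞 F ⧸ P) p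
  have hN : Ideal.absNorm P = p ^ (m:ℕ) := by
    rw [Ideal.absNorm_apply, Submodule.cardQuot_apply, Nat.card_eq_fintype_card, hcard]
  refine ⟨p, hp, ?_, ?_, ?_⟩
  · rw [← Ideal.Quotient.eq_zero_iff_mem, map_natCast]
    exact CharP.cast_eq_zero _ p
  · rw [hN]; exact Nat.le_self_pow m.ne_zero p
  · by_cases hm : (m:ℕ) = 1
    · left
      rw [hm, pow_one] at hN hcard
      exact ⟨hN, ⟨((ZMod.ringEquivOfPrime (𝓞 F ⧸ P) hp hcard).symm.toRingHom).comp (Ideal.Quotient.mk P)⟩⟩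
    · right
      rw [hN]
      have := m.pos
      exact Nat.pow_le_pow_right hp.pos (by omega)

open NumberField in
theorem bgx_fiber (F : Type*) [Field F] [NumberField F] (p : ℕ) (hp : p.Prime)
    (S : Finset (Ideal (𝓞 F))) (hS : ∀ P ∈ S, P.IsPrime ∧ P ≠ ⊥ ∧ (p : 𝓞 F) ∈ P ∧ p ≤ Ideal.absNorm P) :
    S.card ≤ Module.finrank ℚ F := by
  have h1 : ∏ P ∈ S, P ∣ Ideal.span {(p : 𝓞 F)} := by
    apply Finset.prod_primes_dvd
    · intro P hP
      exact (Ideal.prime_iff_isPrime (hS P hP).2.1).mpr (hS P hP).1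
    · intro P hP
      rw [Ideal.dvd_span_singleton]
      exact (hS P hP).2.2.1
  have h2 : Ideal.absNorm (Ideal.span {(p : 𝓞 F)}) = p ^ Module.finrank ℚ F := by
    rw [Ideal.absNorm_span_singleton, ← map_natCast (algebraMap ℤ (𝓞 F)) p, Algebra.norm_algebraMap,
      RingOfIntegers.rank, Int.natAbs_pow]
    simp
  have h3 : Ideal.absNorm (∏ P ∈ S, P) ∣ p ^ Module.finrank ℚ F := by
    rw [← h2]; exact map_dvd _ h1
  have h4 : p ^ S.card ≤ Ideal.absNorm (∏ P ∈ S, P) := by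
    rw [map_prod]
    exact Finset.pow_card_le_prod _ _ _ fun P hP => (hS P hP).2.2.2
  have h5 := h4.trans (Nat.le_of_dvd (pow_pos hp.pos _) h3)
  exact (Nat.pow_le_pow_iff_right hp.one_lt).mp h5

open NumberField in
open scoped Classical in
theorem bgx_mertens (F : Type*) [Field F] [NumberField F] :
    ∃ (C : ℝ) (K0 : ℕ), ∀ K ≥ K0, Real.log K ≤ C + Module.finrank ℚ F *
      ∑ p ∈ (Finset.range (2^K+1)).filter (fun p => p.Prime ∧ Nonempty (𝓞 F →+* ZMod p)), (p:ℝ)⁻¹ := by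
  obtain ⟨𝒜, κ, k0, hκ, hmem, hsum⟩ := bgx_ideal_sum F
  set d : ℝ := ((Module.finrank ℚ F : ℕ) : ℝ) with hd
  have hsq : Summable (fun m : ℕ => 3 * ((m:ℝ)^2)⁻¹) :=
    (Real.summable_nat_pow_inv.mpr (by norm_num)).mul_left 3
  set B := ∑' m : ℕ, 3 * ((m:ℝ)^2)⁻¹ with hB
  have key : ∀ K, ∑ I ∈ 𝒜 K, ((Ideal.absNorm I : ℝ))⁻¹ ≤ Real.exp (d * B + d * 
      ∑ p ∈ (Finset.range (2^K+1)).filter (fun p => p.Prime ∧ Nonempty (𝓞 F →+* ZMod p)), (p:ℝ)⁻¹) := by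
    intro K
    let T := (𝒜 K).filter (fun P => P.IsPrime)
    have hTP : ∀ P ∈ T, P.IsPrime ∧ P ≠ ⊥ ∧ Ideal.absNorm P ≤ 2^K := by
      intro P hP
      rw [Finset.mem_filter, hmem] at hP
      exact ⟨hP.2, hP.1⟩
    have hdata : ∀ P : Ideal (𝓞 F), ∃ p : ℕ, P ∈ T → p.Prime ∧ (p : 𝓞 F) ∈ P ∧ p ≤ Ideal.absNorm P ∧
      ((Ideal.absNorm P = p ∧ Nonempty (𝓞 F →+* ZMod p)) ∨ p^2 ≤ Ideal.absNorm P) := by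
      intro P
      by_cases hP : P ∈ T
      · obtain ⟨p, hp⟩ := bgx_prime_data F P (hTP P hP).1 (hTP P hP).2.1
        exact ⟨p, fun _ => hp⟩
      · exact ⟨0, fun h => absurd h hP⟩
    choose q hq using hdata
    let f : Ideal (𝓞 F) →*₀ ℝ := (invMonoidWithZeroHom (G₀ := ℝ)).comp
      ((Nat.castRingHom ℝ).toMonoidWithZeroHom.comp Ideal.absNorm)
    have hf : ∀ I, f I = ((Ideal.absNorm I : ℝ))⁻¹ := fun I => rfl
    have hN2 : ∀ P ∈ T, f P ≤ 1/2 := by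
      intro P hP
      rw [hf, one_div]
      apply inv_anti₀ (by norm_num)
      have := (hq P hP).1.two_le.trans (hq P hP).2.2.1
      exact_mod_cast this
    have h1 := bgx_euler T (𝒜 K) f (by
      intro I hI
      rw [hmem] at hI
      refine ⟨hI.1, fun P hP hIP => ?_⟩
      rw [Finset.mem_filter, hmem]
      refine ⟨⟨fun h => hI.1 (by rw [h] at hIP; exact le_bot_iff.mp hIP), ?_⟩, hP⟩
      refine le_trans (Nat.le_of_dvd (Nat.pos_of_ne_zero ?_) (Ideal.absNorm_dvd_absNorm_of_le hIP)) hI.2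
      rw [Ne, Ideal.absNorm_eq_zero_iff]; exact hI.1)
      (fun I => by rw [hf]; positivity) (fun P hP => by have := hN2 P hP; linarith)
    simp only [hf] at h1
    refine h1.trans ?_
    refine (Finset.prod_le_prod (fun P hP => ?_) (fun P hP => bgx_neglog _ (hN2 P hP))).trans ?_
    · have := hN2 P hP
      exact inv_nonneg.mpr (by linarith)
    rw [← Real.exp_sum, Real.exp_le_exp]
    let g : ℕ → ℝ := fun p => (if p.Prime ∧ Nonempty (𝓞 F →+* ZMod p) then (p:ℝ)⁻¹ else 0) + 3 * ((p:ℝ)^2)⁻¹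
    have hg0 : ∀ p, 0 ≤ g p := fun p => by
      simp only [g]; split_ifs <;> positivity
    have h2 : ∀ P ∈ T, f P + 2 * f P ^ 2 ≤ g (q P) := by
      intro P hP
      obtain ⟨hp, -, -, h | h⟩ := hq P hP
      · rw [hf, h.1]
        simp only [g]
        rw [if_pos ⟨hp, h.2⟩, inv_pow]
        have : 0 ≤ (((q P : ℝ))^2)⁻¹ := by positivity
        linarith
      · have h3 : f P ≤ (((q P : ℝ))^2)⁻¹ := by
          rw [hf]
          apply inv_anti₀
          · have := hp.pos; positivity
          · exact_mod_cast h
        have h4 : f P ^ 2 ≤ f P := by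
          have := hN2 P hP
          have h5 : 0 ≤ f P := by rw [hf]; positivity
          nlinarith
        have h6 : 3 * (((q P : ℝ))^2)⁻¹ ≤ g (q P) := by
          simp only [g]; split_ifs
          · have : 0 ≤ ((q P : ℝ))⁻¹ := by positivity
            linarith
          · linarith
        linarith
    refine (Finset.sum_le_sum h2).trans ?_
    have hmaps : ∀ P ∈ T, q P ∈ (Finset.range (2^K+1)) := by
      intro P hP
      rw [Finset.mem_range, Nat.lt_succ_iff]
      exact (hq P hP).2.2.1.trans (hTP P hP).2.2
    rw [← Finset.sum_fiberwise_of_maps_to hmaps]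
    have h7 : ∀ p ∈ Finset.range (2^K+1), ∑ P ∈ T with q P = p, g (q P) ≤ d * g p := by
      intro p _
      rw [Finset.sum_congr rfl (g := fun _ => g p) (fun P hP => by rw [(Finset.mem_filter.mp hP).2]),
        Finset.sum_const, nsmul_eq_mul]
      apply mul_le_mul_of_nonneg_right _ (hg0 p)
      rw [hd]
      norm_cast
      by_cases hne : (T.filter (fun P => q P = p)).Nonempty
      · obtain ⟨P0, hP0⟩ := hne
        rw [Finset.mem_filter] at hP0
        refine bgx_fiber F p (by rw [← hP0.2]; exact (hq P0 hP0.1).1) _ ?_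
        intro P hP
        rw [Finset.mem_filter] at hP
        rw [← hP.2]
        exact ⟨(hTP P hP.1).1, (hTP P hP.1).2.1, (hq P hP.1).2.1, (hq P hP.1).2.2.1⟩
      · rw [Finset.not_nonempty_iff_eq_empty.mp hne]; simp
    refine (Finset.sum_le_sum h7).trans ?_
    rw [← Finset.mul_sum, ← mul_add]
    apply mul_le_mul_of_nonneg_left _ (by rw [hd]; positivity)
    simp only [g]
    rw [Finset.sum_add_distrib, ← Finset.sum_filter, add_comm]
    gcongr
    exact hsq.sum_le_tsum _ (fun _ _ => by positivity)
  refine ⟨d * B - Real.log (κ/2), 2 * k0 + 1, fun K hK => ?_⟩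
  have h1 := hsum (K - k0)
  rw [show k0 + (K - k0) = K by omega] at h1
  have h2 := h1.trans (key K)
  have h3 : κ / 2 * K ≤ κ * ((K - k0 : ℕ):ℝ) := by
    have : (K:ℝ) ≤ 2 * ((K - k0 : ℕ) : ℝ) := by exact_mod_cast (by omega : K ≤ 2 * (K - k0))
    nlinarith
  have hK0 : (0:ℝ) < K := by exact_mod_cast (by omega : 0 < K)
  have h4 := Real.log_le_log (by positivity) (h3.trans h2)
  rw [Real.log_exp, Real.log_mul (by positivity) (by positivity)] at h4
  linarith



theorem bgx_density (P : ℕ → Prop) [DecidablePred P] (D : ℕ) (hD : 0 < D) (C : ℝ) (K0 : ℕ)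
    (hM : ∀ K ≥ K0, Real.log K ≤ C + D * ∑ p ∈ (Finset.range (2^K+1)).filter P, (p:ℝ)⁻¹) (Y0 : ℕ) :
    ∃ Y ≥ Y0, (Y:ℝ) / (4 * D) < ∑ p ∈ (Finset.range (Y+1)).filter P, Real.log p := by
  by_contra! hcon
  have hD' : (0:ℝ) < D := by exact_mod_cast hD
  set S : ℕ → ℝ := fun K => ∑ p ∈ (Finset.range (2^K+1)).filter P, (p:ℝ)⁻¹ with hS
  have hlog2 := Real.log_two_gt_d9
  have hstep : ∀ k ≥ Y0 + 2, D * S (k+1) ≤ D * S k + (3/4) * (Real.log k - Real.log ((k:ℝ)-1)) := by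
    intro k hk
    have hk2 : (2:ℝ) ≤ k := by exact_mod_cast (by omega : 2 ≤ k)
    have hsub : (Finset.range (2^k+1)).filter P ⊆ (Finset.range (2^(k+1)+1)).filter P := by
      apply Finset.filter_subset_filter
      apply Finset.range_subset_range.mpr
      have : 2^k ≤ 2^(k+1) := Nat.pow_le_pow_right (by norm_num) (Nat.le_succ k)
      omega
    have h1 : S (k+1) = (∑ p ∈ (Finset.range (2^(k+1)+1)).filter P \ (Finset.range (2^k+1)).filter P, (p:ℝ)⁻¹) + S k := by
      simp only [hS]
      rw [Finset.sum_sdiff hsub]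
    have h2 : ∑ p ∈ (Finset.range (2^(k+1)+1)).filter P \ (Finset.range (2^k+1)).filter P, (p:ℝ)⁻¹ ≤
        ∑ p ∈ (Finset.range (2^(k+1)+1)).filter P \ (Finset.range (2^k+1)).filter P, Real.log p * (2^k * (k * Real.log 2))⁻¹ := by
      apply Finset.sum_le_sum
      intro p hp
      simp only [Finset.mem_sdiff, Finset.mem_filter, Finset.mem_range, not_and] at hp
      have hp2 : 2^k ≤ p := by
        by_contra hlt
        exact hp.2 (by omega) hp.1.2
      have hp2' : (2:ℝ)^k ≤ p := by exact_mod_cast hp2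
      have hpp : (0:ℝ) < p := lt_of_lt_of_le (by positivity) hp2'
      have hlp : k * Real.log 2 ≤ Real.log p := by
        rw [← Real.log_pow]; exact Real.log_le_log (by positivity) hp2'
      have hkl : 0 < k * Real.log 2 := by positivity
      rw [← div_eq_mul_inv, le_div_iff₀ (by positivity), ← div_eq_inv_mul, div_le_iff₀ hpp]
      calc 2^k * (k * Real.log 2) ≤ p * Real.log p := by gcongr
        _ = _ := mul_comm _ _
    have h3 : ∑ p ∈ (Finset.range (2^(k+1)+1)).filter P \ (Finset.range (2^k+1)).filter P, Real.log p ≤ (2:ℝ)^(k+1) / (4 * D) := by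
      have h4 := hcon (2^(k+1)) (by
        have : k + 1 < 2^(k+1) := Nat.lt_two_pow_self
        omega)
      push_cast at h4
      refine le_trans (Finset.sum_le_sum_of_subset_of_nonneg Finset.sdiff_subset ?_) h4
      intro p _ _
      exact Real.log_natCast_nonneg p
    rw [← Finset.sum_mul] at h2
    have hkl : 0 < k * Real.log 2 := by positivity
    have h4 : ∑ p ∈ (Finset.range (2^(k+1)+1)).filter P \ (Finset.range (2^k+1)).filter P, (p:ℝ)⁻¹ ≤
      (2:ℝ)^(k+1) / (4 * D) * (2^k * (k * Real.log 2))⁻¹ := h2.trans (by gcongr)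
    have h5 : D * ((2:ℝ)^(k+1) / (4 * D) * (2^k * (k * Real.log 2))⁻¹) = (2 * Real.log 2)⁻¹ * (k:ℝ)⁻¹ := by
      rw [pow_succ]; field_simp; norm_num
    have h6 : (2 * Real.log 2)⁻¹ ≤ 3/4 := by
      rw [inv_le_comm₀ (by positivity) (by norm_num)]; norm_num; linarith
    have h7 : (k:ℝ)⁻¹ ≤ Real.log k - Real.log ((k:ℝ)-1) := by
      rw [← Real.log_div (by linarith) (by linarith)]
      refine le_trans (le_of_eq ?_) (Real.one_sub_inv_le_log_of_pos (div_pos (by linarith) (by linarith)))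
      rw [inv_div]; field_simp; ring
    have h8 : (0:ℝ) ≤ (k:ℝ)⁻¹ := by positivity
    have h9 : (2 * Real.log 2)⁻¹ * (k:ℝ)⁻¹ ≤ 3/4 * (Real.log k - Real.log ((k:ℝ)-1)) := by
      calc _ ≤ 3/4 * (k:ℝ)⁻¹ := by gcongr
        _ ≤ _ := by gcongr
    rw [h1, mul_add]
    have h10 := mul_le_mul_of_nonneg_left h4 hD'.le
    rw [h5] at h10
    linarith
  set k1 := Y0 + 2 with hk1
  have hind : ∀ j : ℕ, D * S (k1 + j) ≤ D * S k1 + (3/4) * (Real.log (((k1 + j : ℕ):ℝ) - 1) - Real.log ((k1:ℝ)-1)) := by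
    intro j
    induction j with
    | zero => simp
    | succ j ih =>
      have := hstep (k1 + j) (by omega)
      rw [← add_assoc]
      rw [show (((k1 + j + 1 : ℕ):ℝ) - 1) = ((k1 + j : ℕ) : ℝ) by push_cast; ring]
      linarith
  have hk1' : (1:ℝ) ≤ (k1:ℝ) - 1 := by rw [hk1]; push_cast; have : (0:ℝ) ≤ Y0 := by positivity
                                       linarith
  have hk1l : 0 ≤ Real.log ((k1:ℝ)-1) := Real.log_nonneg hk1'
  obtain ⟨K, hK⟩ := Filter.eventually_atTop.mp
    ((Real.tendsto_log_atTop.comp tendsto_natCast_atTop_atTop).eventually_gt_atTop (4 * (C + D * S k1)))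
  set j := K + K0 with hj
  have h1 := hK (k1 + j) (by omega)
  have h2 := hM (k1 + j) (by omega)
  have h3 := hind j
  have h4 : Real.log (((k1 + j : ℕ):ℝ) - 1) ≤ Real.log ((k1 + j : ℕ):ℝ) := by
    apply Real.log_le_log
    · push_cast; have : (0:ℝ) ≤ j := by positivity
      linarith
    · linarith
  simp only [Function.comp] at h1
  simp only [hS] at h3 h1
  linarith

theorem bgx_totient (R : ℝ) : ∃ Q : ℕ, 2 ≤ Q ∧ R * (Nat.totient Q : ℝ) ≤ Q := by
  have h1 := not_summable_one_div_on_primes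
  have h2 : Filter.Tendsto (fun n : ℕ => ∑ i ∈ Finset.range n, ({p | p.Prime} : Set ℕ).indicator (fun n : ℕ => (1 : ℝ) / n) i) Filter.atTop Filter.atTop := by
    refine (not_summable_iff_tendsto_nat_atTop_of_nonneg ?_).mp h1
    intro n
    exact Set.indicator_nonneg (fun _ _ => by positivity) n
  obtain ⟨N, hN⟩ := Filter.eventually_atTop.mp (h2.eventually_ge_atTop (Real.log (max R 1)))
  have hN' := hN (N + 2 + 1) (by omega)
  refine ⟨primorial (N+2), ?_, ?_⟩
  · have : 2 ∣ primorial (N+2) := by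
      apply Nat.dvd_of_mem_primeFactors
      rw [primeFactors_primorial, Nat.mem_primesLE]
      exact ⟨by omega, Nat.prime_two⟩
    exact Nat.le_of_dvd (primorial_pos _) this
  · have h3 := Nat.totient_eq_mul_prod_factors (primorial (N+2))
    have h4 : ((Nat.totient (primorial (N+2)) : ℕ) : ℝ) = (primorial (N+2) : ℝ) * ∏ p ∈ (primorial (N+2)).primeFactors, (1 - (p : ℝ)⁻¹) := by
      have := congrArg (fun q : ℚ => (q : ℝ)) h3
      push_cast at this
      exact this
    have h5 : ∏ p ∈ (primorial (N+2)).primeFactors, (1 - (p : ℝ)⁻¹) ≤ Real.exp (- ∑ i ∈ Finset.range (N+2+1), ({p | p.Prime} : Set ℕ).indicator (fun n : ℕ => (1 : ℝ) / n) i) := by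
      rw [← Finset.sum_neg_distrib, Real.exp_sum, primeFactors_primorial, Nat.primesLE_eq_filter_range, Finset.prod_filter]
      apply Finset.prod_le_prod
      · intro p _
        split_ifs with hp
        · rw [sub_nonneg]; apply inv_le_one_of_one_le₀; exact_mod_cast hp.one_le
        · norm_num
      · intro p _
        by_cases hp : p.Prime
        · rw [if_pos hp, Set.indicator_of_mem (by exact hp), one_div]
          have := Real.add_one_le_exp (-(p:ℝ)⁻¹)
          linarith
        · rw [if_neg hp, Set.indicator_of_notMem (by exact hp)]; simp
    have h6 : Real.exp (- ∑ i ∈ Finset.range (N+2+1), ({p | p.Prime} : Set ℕ).indicator (fun n : ℕ => (1 : ℝ) / n) i) ≤ (max R 1)⁻¹ := by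
      rw [← Real.exp_log (show (0:ℝ) < (max R 1)⁻¹ by positivity), Real.exp_le_exp, Real.log_inv]
      linarith
    have hm : (0:ℝ) < max R 1 := by positivity
    rw [h4]
    have h7 : max R 1 * ∏ p ∈ (primorial (N+2)).primeFactors, (1 - (p : ℝ)⁻¹) ≤ 1 := by
      calc _ ≤ max R 1 * (max R 1)⁻¹ := by gcongr; exact h5.trans h6
        _ = 1 := mul_inv_cancel₀ hm.ne'
    have h8 : 0 ≤ ∏ p ∈ (primorial (N+2)).primeFactors, (1 - (p : ℝ)⁻¹) := by
      apply Finset.prod_nonneg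
      intro p hp
      rw [sub_nonneg]; apply inv_le_one_of_one_le₀; exact_mod_cast (Nat.prime_of_mem_primeFactors hp).one_le
    calc R * ((primorial (N+2) : ℝ) * ∏ p ∈ (primorial (N+2)).primeFactors, (1 - (p : ℝ)⁻¹))
        ≤ max R 1 * ((primorial (N+2) : ℝ) * ∏ p ∈ (primorial (N+2)).primeFactors, (1 - (p : ℝ)⁻¹)) := by
          gcongr; exact le_max_left _ _
      _ = (primorial (N+2) : ℝ) * (max R 1 * ∏ p ∈ (primorial (N+2)).primeFactors, (1 - (p : ℝ)⁻¹)) := by ring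
      _ ≤ (primorial (N+2) : ℝ) * 1 := by gcongr
      _ = _ := mul_one _

open NumberField in
theorem bgx_cyclo.{u} (F0 : Type u) [Field F0] [NumberField F0] (Q : ℕ) (hQ : 2 ≤ Q) :
    ∃ (F : Type u) (_ : Field F) (_ : NumberField F),
      Module.finrank ℚ F ≤ Module.finrank ℚ F0 * Nat.totient Q ∧
      ∀ p : ℕ, p.Prime → Q < p → Nonempty (𝓞 F →+* ZMod p) →
        Nonempty (𝓞 F0 →+* ZMod p) ∧ Q ∣ p - 1 := by
  have : NeZero Q := ⟨by omega⟩
  have hζ := IsCyclotomicExtension.zeta_spec Q F0 (CyclotomicField Q F0)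
  set ζ := IsCyclotomicExtension.zeta Q F0 (CyclotomicField Q F0) with hz
  refine ⟨CyclotomicField Q F0, inferInstance, inferInstance, ?_, ?_⟩
  · have : FiniteDimensional F0 (CyclotomicField Q F0) := IsCyclotomicExtension.finiteDimensional {Q} F0 _
    rw [← Module.finrank_mul_finrank ℚ F0 (CyclotomicField Q F0)]
    apply Nat.mul_le_mul_left
    rw [(hζ.powerBasis F0).finrank, ← (hζ.powerBasis F0).natDegree_minpoly, IsPrimitiveRoot.powerBasis_gen]
    rw [← Polynomial.natDegree_cyclotomic Q F0]
    apply Polynomial.natDegree_le_of_dvd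
    · apply minpoly.dvd
      rw [Polynomial.aeval_def, Polynomial.eval₂_eq_eval_map, Polynomial.map_cyclotomic]
      exact hζ.isRoot_cyclotomic (by omega)
    · exact Polynomial.cyclotomic_ne_zero Q F0
  · rintro p hp hQp ⟨f⟩
    refine ⟨⟨f.comp (algebraMap (𝓞 F0) (𝓞 (CyclotomicField Q F0)))⟩, ?_⟩
    have := Fact.mk hp
    have : NeZero (Q : ZMod p) := ⟨by
      rw [Ne, ZMod.natCast_eq_zero_iff]
      exact fun h => absurd (Nat.le_of_dvd (by omega) h) (by omega)⟩
    have h1 := hζ.toInteger_isPrimitiveRoot.isRoot_cyclotomic (show 0 < Q by omega)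
    have h2 : (Polynomial.cyclotomic Q (ZMod p)).IsRoot (f hζ.toInteger) := by
      rw [← Polynomial.map_cyclotomic Q f]
      exact h1.map
    rw [Polynomial.isRoot_cyclotomic_iff] at h2
    apply h2.dvd_of_pow_eq_one
    apply ZMod.pow_card_sub_one_eq_one
    exact h2.ne_zero (by omega)

open NumberField in
theorem bgx_star (F0 : Type*) [Field F0] [NumberField F0] (r b : ℕ) :
    ∃ (S : Finset ℕ) (M : ℕ), 0 < M ∧ (∀ p ∈ S, p.Prime ∧ b < p ∧ Nonempty (𝓞 F0 →+* ZMod p) ∧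
      p - 1 ∣ M) ∧ M ^ r < ∏ p ∈ S, p := by
  classical
  set c : ℝ := Real.log 4 + 4 with hc
  have hc0 : 1 ≤ c := by
    have : 0 ≤ Real.log 4 := Real.log_nonneg (by norm_num)
    linarith
  set d0 := Module.finrank ℚ F0 with hd0
  obtain ⟨Q, hQ2, hQ⟩ := bgx_totient (8 * r * c * d0)
  obtain ⟨F, _, _, hdeg, hF⟩ := bgx_cyclo F0 Q hQ2
  obtain ⟨C, K0, hM⟩ := bgx_mertens F
  set D := Module.finrank ℚ F with hD
  have hDpos : 0 < D := Module.finrank_pos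
  let P : ℕ → Prop := fun p => (p.Prime ∧ Nonempty (𝓞 F →+* ZMod p)) ∧ b + Q < p
  have hM' : ∀ K ≥ K0, Real.log K ≤ (C + D * (b + Q + 1)) + D * ∑ p ∈ (Finset.range (2^K+1)).filter P, (p:ℝ)⁻¹ := by
    intro K hK
    have h1 := hM K hK
    have h2 : ∑ p ∈ (Finset.range (2^K+1)).filter (fun p => p.Prime ∧ Nonempty (𝓞 F →+* ZMod p)), (p:ℝ)⁻¹ ≤
        ∑ p ∈ (Finset.range (2^K+1)).filter P, (p:ℝ)⁻¹ + (b + Q + 1) := by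
      rw [← Finset.sum_filter_add_sum_filter_not _ (fun p => b + Q < p), Finset.filter_filter]
      gcongr
      have h3 : ∀ p ∈ (((Finset.range (2^K+1)).filter (fun p => p.Prime ∧ Nonempty (𝓞 F →+* ZMod p))).filter (fun p => ¬ b + Q < p)), (p:ℝ)⁻¹ ≤ 1 := by
        intro p hp
        simp only [Finset.mem_filter] at hp
        apply inv_le_one_of_one_le₀; exact_mod_cast hp.1.2.1.one_le
      refine (Finset.sum_le_card_nsmul _ _ _ h3).trans ?_
      rw [nsmul_eq_mul, mul_one]
      have h4 : (((Finset.range (2^K+1)).filter (fun p => p.Prime ∧ Nonempty (𝓞 F →+* ZMod p))).filter (fun p => ¬ b + Q < p)) ⊆ Finset.range (b + Q + 1) := by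
        intro p hp
        simp only [Finset.mem_filter] at hp
        rw [Finset.mem_range]; omega
      have h5 := Finset.card_le_card h4
      rw [Finset.card_range] at h5
      exact_mod_cast h5
    have hD' : (0:ℝ) ≤ D := by positivity
    have := mul_le_mul_of_nonneg_left h2 hD'
    linarith
  obtain ⟨Y, hY, hlt⟩ := bgx_density P D hDpos _ K0 hM' (Q^2)
  refine ⟨(Finset.range (Y+1)).filter P, Q * Nat.lcmUpto (Y/Q), Nat.mul_pos (by omega) (Nat.lcmUpto_pos _), ?_, ?_⟩
  · intro p hp
    rw [Finset.mem_filter, Finset.mem_range] at hp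
    obtain ⟨hpY, ⟨hpp, hne⟩, hbp⟩ := hp
    obtain ⟨h1, t, ht⟩ := hF p hpp (by omega) hne
    refine ⟨hpp, by omega, h1, ?_⟩
    rw [ht]
    apply Nat.mul_dvd_mul_left
    apply Finset.dvd_lcm (f := id)
    rw [Finset.mem_Icc]
    constructor
    · rw [Nat.one_le_iff_ne_zero]
      rintro rfl
      have := hpp.two_le
      omega
    · rw [Nat.le_div_iff_mul_le (by omega), mul_comm, ← ht]
      omega
  · have hQ0 : (0:ℝ) < Q := by exact_mod_cast (by omega : 0 < Q)
    have hlogQ : Real.log Q ≤ Q := (Real.log_le_sub_one_of_pos hQ0).trans (by linarith)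
    have hYr : (Q:ℝ)^2 ≤ Y := by exact_mod_cast hY
    have hpsi : Real.log (Nat.lcmUpto (Y/Q)) ≤ c * (Y / Q) := by
      rw [← Chebyshev.psi_eq_log_lcmUpto]
      refine (Chebyshev.psi_le_const_mul_self (by positivity)).trans ?_
      gcongr
      exact Nat.cast_div_le
    have hlogM : Real.log ((Q * Nat.lcmUpto (Y/Q) : ℕ) : ℝ) ≤ 2 * c * (Y/Q) := by
      push_cast
      rw [Real.log_mul hQ0.ne' (by exact_mod_cast Nat.lcmUpto_ne_zero _)]
      have : (Q:ℝ) ≤ Y / Q := by rw [le_div_iff₀ hQ0]; nlinarith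
      nlinarith
    have hfinal : r * (2 * c * (Y/Q)) ≤ Y / (4 * D) := by
      have hDr : (0:ℝ) < D := by exact_mod_cast hDpos
      have hdeg' : (D:ℝ) ≤ d0 * Nat.totient Q := by exact_mod_cast hdeg
      rw [le_div_iff₀ (by positivity)]
      have h1 : 8 * r * c * D ≤ Q := by
        calc 8 * r * c * D ≤ 8 * r * c * (d0 * Nat.totient Q) := by gcongr
          _ ≤ Q := by linarith
      calc r * (2 * c * (Y/Q)) * (4 * D) = (8 * r * c * D) * (Y / Q) := by ring
        _ ≤ Q * (Y/Q) := by gcongr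
        _ = Y := by field_simp
    have hlogprod : Real.log ((∏ p ∈ (Finset.range (Y+1)).filter P, p : ℕ) : ℝ) = ∑ p ∈ (Finset.range (Y+1)).filter P, Real.log p := by
      push_cast
      apply Real.log_prod
      intro p hp
      rw [Finset.mem_filter] at hp
      exact_mod_cast hp.2.1.1.ne_zero
    have hMp : 0 < Q * Nat.lcmUpto (Y/Q) := Nat.mul_pos (by omega) (Nat.lcmUpto_pos _)
    have h9 : Real.log (((Q * Nat.lcmUpto (Y/Q)) ^ r : ℕ) : ℝ) < Real.log ((∏ p ∈ (Finset.range (Y+1)).filter P, p : ℕ) : ℝ) := by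
      rw [hlogprod, Nat.cast_pow, Real.log_pow]
      refine lt_of_le_of_lt ?_ hlt
      refine le_trans ?_ hfinal
      gcongr
    have h10 := (Real.log_lt_log_iff (by exact_mod_cast pow_pos hMp r) (by
      norm_cast
      apply Finset.prod_pos
      intro p hp
      rw [Finset.mem_filter] at hp
      exact hp.2.1.1.pos)).mp h9
    exact_mod_cast h10


open NumberField in
theorem bgx_extend (L : Type*) [Field L] [NumberField L] (t : Finset L) :
    ∃ b : ℕ, ∀ p : ℕ, p.Prime → b < p → Nonempty (𝓞 L →+* ZMod p) →
      Nonempty (Subring.closure (t : Set L) →+* ZMod p) := by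
  classical
  have h1 : ∀ x : L, ∃ m : ℕ, m ≠ 0 ∧ ∃ y : 𝓞 L, (y : L) = m * x := by
    intro x
    obtain ⟨y, d, hd, hxy⟩ : ∃ (y : 𝓞 L) (d : ℤ), d ≠ 0 ∧ (d : L) * x = y := by
      obtain ⟨d, hd, hint⟩ := IsAlgebraic.exists_integral_multiple
        ((IsFractionRing.isAlgebraic_iff ℤ ℚ L).mpr (Algebra.IsAlgebraic.isAlgebraic (R := ℚ) x))
      exact ⟨⟨d • x, hint⟩, d, hd, by simp⟩
    refine ⟨d.natAbs, Int.natAbs_ne_zero.mpr hd, ?_⟩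
    rcases Int.natAbs_eq d with h | h
    · refine ⟨y, ?_⟩
      rw [← hxy]; congr 1; conv_lhs => rw [h]
      simp
    · refine ⟨-y, ?_⟩
      rw [show ((-y : 𝓞 L) : L) = -(y : L) from map_neg _ _, ← hxy, ← neg_mul]; congr 1; conv_lhs => rw [h]
      simp
  choose m hm y hy using h1
  set N := ∏ x ∈ t, m x with hN
  have hN0 : N ≠ 0 := Finset.prod_ne_zero_iff.mpr fun x _ => hm x
  refine ⟨N, fun p hp hNp ⟨f⟩ => ?_⟩
  have := Fact.mk hp
  have hNL : (N : L) ≠ 0 := by exact_mod_cast hN0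
  let B := Localization.Away (N : 𝓞 L)
  let g : B →+* L := IsLocalization.Away.lift (N : 𝓞 L) (g := algebraMap (𝓞 L) L) (by
    rw [map_natCast]; exact isUnit_iff_ne_zero.mpr hNL)
  have hg : Function.Injective g := by
    apply IsLocalization.lift_injective_iff _ |>.mpr 
    intro a b
    rw [(IsFractionRing.injective (𝓞 L) L).eq_iff]
    rw [(IsLocalization.injective B (M := Submonoid.powers (N : 𝓞 L)) (powers_le_nonZeroDivisors_of_noZeroDivisors (by exact_mod_cast hN0))).eq_iff]
  have hgN : g (algebraMap (𝓞 L) B N) = N := by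
    rw [IsLocalization.Away.lift_eq, map_natCast]
  let h : B →+* ZMod p := IsLocalization.Away.lift (N : 𝓞 L) (g := f) (by
    rw [map_natCast, isUnit_iff_ne_zero, Ne, ZMod.natCast_eq_zero_iff]
    exact fun h => absurd (Nat.le_of_dvd (Nat.pos_of_ne_zero hN0) h) (by omega))
  have hsub : Subring.closure (t : Set L) ≤ g.range := by
    rw [Subring.closure_le]
    intro x hx
    have hu : IsUnit (algebraMap (𝓞 L) B N) := IsLocalization.Away.algebraMap_isUnit (N : 𝓞 L)
    obtain ⟨u, hu⟩ := hu
    refine ⟨(u⁻¹ : Bˣ) * algebraMap (𝓞 L) B ((∏ z ∈ t.erase x, m z : ℕ) * y x), ?_⟩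
    have h2 : g (u : B) = N := by rw [hu, hgN]
    have h3 : g (u : B) * g ((u⁻¹ : Bˣ) : B) = 1 := by rw [← map_mul, Units.mul_inv, map_one]
    rw [map_mul, IsLocalization.Away.lift_eq, map_mul, map_natCast, show algebraMap (𝓞 L) L (y x) = m x * x from hy x, ← mul_assoc ((∏ z ∈ t.erase x, m z : ℕ):L), ← Nat.cast_mul, mul_comm (∏ z ∈ t.erase x, m z), Finset.mul_prod_erase t m hx, ← hN,
      ← mul_assoc, ← h2, mul_comm _ (g (u:B)), h3, one_mul]
  let e : B ≃+* g.range := RingEquiv.ofBijective g.rangeRestrict ⟨fun a b hab => hg (congrArg Subtype.val hab), g.rangeRestrict_surjective⟩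
  exact ⟨(h.comp e.symm.toRingHom).comp (Subring.inclusion hsub)⟩

theorem bgx_residue_aux.{u} (A L : Type u) [CommRing A] [Algebra ℚ A] [Field L] [Algebra ℚ L]
    [Algebra.FiniteType ℚ A] (f : A →ₐ[ℚ] L) (hf : Function.Surjective f) : NumberField L := by
  have hftL : Algebra.FiniteType ℚ L := Algebra.FiniteType.of_surjective f hf
  have hfin : Module.Finite ℚ L := finite_of_finite_type_of_isJacobsonRing ℚ L
  have hch : CharZero L := charZero_of_injective_algebraMap (algebraMap ℚ L).injective
  refine { to_finiteDimensional := ?_ }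
  convert! hfin
  exact Subsingleton.elim _ _

theorem bgx_residue.{u} (A : Type u) [CommRing A] [Nontrivial A] [Algebra ℚ A]
    [Algebra.FiniteType ℚ A] : ∃ (L : Type u) (_ : Field L) (_ : NumberField L), Nonempty (A →+* L) := by
  obtain ⟨𝔪, h𝔪⟩ := Ideal.exists_maximal A
  exact ⟨A ⧸ 𝔪, Ideal.Quotient.field 𝔪, @bgx_residue_aux A (A ⧸ 𝔪) _ _ (Ideal.Quotient.field 𝔪) (Ideal.Quotient.algebra ℚ) _
    (Ideal.Quotient.mkₐ ℚ 𝔪) (Ideal.Quotient.mkₐ_surjective ℚ 𝔪), ⟨Ideal.Quotient.mk 𝔪⟩⟩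

open NumberField in
theorem bgx_specialize.{u} (K : Type u) [Field K] [CharZero K] (s : Finset K) :
    ∃ (L : Type u) (_ : Field L) (_ : NumberField L) (b : ℕ), ∀ p : ℕ, p.Prime → b < p →
      Nonempty (𝓞 L →+* ZMod p) → Nonempty (Subring.closure (s : Set K) →+* ZMod p) := by
  classical
  let A := Algebra.adjoin ℚ (s : Set K)
  have hft : Algebra.FiniteType ℚ A := by
    rw [← Subalgebra.fg_iff_finiteType]
    exact ⟨s, rfl⟩
  obtain ⟨L, _, hNF, ⟨ψ⟩⟩ := bgx_residue A
  have hsA : ∀ x ∈ s, x ∈ A := fun x hx => Algebra.subset_adjoin hx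
  let t : Finset L := s.attach.image fun x => ψ ⟨x.1, hsA x.1 x.2⟩
  obtain ⟨b, hb⟩ := bgx_extend L t
  refine ⟨L, inferInstance, hNF, b, fun p hp hbp hne => ?_⟩
  obtain ⟨h⟩ := hb p hp hbp hne
  have hle : Subring.closure (s : Set K) ≤ A.toSubring := by
    rw [Subring.closure_le]; exact hsA
  let i : Subring.closure (s : Set K) →+* A := Subring.inclusion hle
  have hrange : ∀ x, (ψ.comp i) x ∈ Subring.closure (t : Set L) := by
    rintro ⟨x, hx⟩
    have h2 : ∀ (x : K) (hx : x ∈ Subring.closure (s : Set K)), ψ ⟨x, hle hx⟩ ∈ Subring.closure (t : Set L) := by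
      intro x hx
      induction hx using Subring.closure_induction with
      | mem x hx =>
        apply Subring.subset_closure
        simp only [t, Finset.coe_image, Set.mem_image]
        exact ⟨⟨x, hx⟩, by simp, rfl⟩
      | zero => exact (map_zero ψ).symm ▸ zero_mem (Subring.closure (t : Set L))
      | one => exact (map_one ψ).symm ▸ one_mem (Subring.closure (t : Set L))
      | add x y hx hy ihx ihy => exact (map_add ψ ⟨x, hle hx⟩ ⟨y, hle hy⟩).symm ▸ add_mem ihx ihy
      | neg x hx ih => exact (map_neg ψ ⟨x, hle hx⟩).symm ▸ neg_mem ih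
      | mul x y hx hy ihx ihy => exact (map_mul ψ ⟨x, hle hx⟩ ⟨y, hle hy⟩).symm ▸ mul_mem ihx ihy
    exact h2 x hx
  exact ⟨h.comp ((ψ.comp i).codRestrict _ hrange)⟩


open Polynomial in
theorem bgx_roots {K : Type*} [Field K] [CharZero K] {n : ℕ} (M : Matrix (Fin n) (Fin n) K)
    (hM : Module.End.IsSemisimple M.mulVecLin) (hu : IsUnit M) :
    ∃ Λ : Finset (AlgebraicClosure K), (0 : AlgebraicClosure K) ∉ Λ ∧
      aeval ((algebraMap K (AlgebraicClosure K)).mapMatrix M) (∏ l ∈ Λ, (X - C l)) = 0 := by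
  classical
  set q := minpoly K M with hq
  have hsq : Squarefree q := by
    have := hM.minpoly_squarefree
    rwa [← Matrix.toLin'_apply', Matrix.minpoly_toLin'] at this
  have hq0 : q ≠ 0 := minpoly.ne_zero (Matrix.isIntegral M)
  have hsep : q.Separable := PerfectField.separable_iff_squarefree.mpr hsq
  have hsep' : (q.map (algebraMap K (AlgebraicClosure K))).Separable := hsep.map
  have hroots : (q.map (algebraMap K (AlgebraicClosure K))).roots.Nodup := nodup_roots hsep'
  set Q := q.map (algebraMap K (AlgebraicClosure K)) with hQ
  have hmonic : Q.Monic := (minpoly.monic (Matrix.isIntegral M)).map _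
  have hprod : ∏ l ∈ Q.roots.toFinset, (X - C l) = Q := by
    have h1 := (IsAlgClosed.splits Q).eq_prod_roots_of_monic hmonic
    conv_rhs => rw [h1]
    rw [Finset.prod, Multiset.toFinset_val, Multiset.dedup_eq_self.mpr hroots]
  set g := (algebraMap K (AlgebraicClosure K)).mapMatrix M with hg
  have hgu : IsUnit g := hu.map _
  have hQg : aeval g Q = 0 := by
    rw [hQ, hg, ← map_aeval_eq_aeval_map (φ := algebraMap K (AlgebraicClosure K)) (ψ := (algebraMap K (AlgebraicClosure K)).mapMatrix) _ q M, hq, minpoly.aeval, map_zero]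
    ext x i j
    by_cases h : i = j <;> simp [Matrix.algebraMap_matrix_apply, h]
  refine ⟨Q.roots.toFinset.erase 0, Finset.notMem_erase _ _, ?_⟩
  by_cases h0 : (0 : AlgebraicClosure K) ∈ Q.roots.toFinset
  · rw [← hprod, ← Finset.mul_prod_erase _ _ h0, map_mul, C_0, sub_zero, aeval_X] at hQg
    exact hgu.mul_right_eq_zero.mp hQg
  · rw [Finset.erase_eq_of_notMem h0, hprod, hQg]

open Polynomial in
theorem bgx_pow_one {ι : Type*} (p n : ℕ) [Fact p.Prime] (g : GL (Fin n) (ZMod p)) (s : Finset ι)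
    (φ : ι → ZMod p) (hφ : Set.InjOn φ s) (h0 : ∀ i ∈ s, φ i ≠ 0)
    (hg : aeval g.1 (∏ i ∈ s, (X - C (φ i))) = 0) : g ^ (p-1) = 1 := by
  have h1 : ∏ i ∈ s, (X - C (φ i)) ∣ (X ^ (p-1) - 1 : (ZMod p)[X]) := by
    apply Finset.prod_dvd_of_coprime
    · intro i hi j hj hij
      exact isCoprime_X_sub_C_of_isUnit_sub (isUnit_iff_ne_zero.mpr (sub_ne_zero.mpr fun h => hij (hφ hi hj h)))
    · intro i hi
      rw [dvd_iff_isRoot, IsRoot.def]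
      simp [ZMod.pow_card_sub_one_eq_one (h0 i hi)]
  obtain ⟨w, hw⟩ := h1
  have h2 : aeval g.1 (X ^ (p-1) - 1 : (ZMod p)[X]) = 0 := by rw [hw, map_mul, hg, zero_mul]
  apply Units.ext
  simpa [sub_eq_zero] using h2



open Polynomial in
theorem bgx_map_aeval {A B : Type*} [CommRing A] [CommRing B] (f : A →+* B) {n : ℕ}
    (M : Matrix (Fin n) (Fin n) A) (q : A[X]) :
    f.mapMatrix (aeval M q) = aeval (f.mapMatrix M) (q.map f) := by
  rw [map_aeval_eq_aeval_map (φ := f) (ψ := (f.mapMatrix : Matrix (Fin n) (Fin n) A →+* _))]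
  ext x i j
  by_cases h : i = j <;> simp [Matrix.algebraMap_matrix_apply, h]

open NumberField in
open Polynomial in
theorem bgx_S.{u} {K : Type u} [Field K] [CharZero K] {n : ℕ} (Γ : Subgroup (GL (Fin n) K))
    (hani : ∀ g ∈ Γ, Module.End.IsSemisimple ((g : Matrix (Fin n) (Fin n) K).mulVecLin))
    (r : ℕ) (γ : Fin r → Γ) (hγ : Subgroup.closure (Set.range γ) = ⊤) (c : Γ) (hc : c ≠ 1) :
    ∃ (L : Type u) (_ : Field L) (_ : NumberField L) (b : ℕ), ∀ p : ℕ, p.Prime → b < p →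
      Nonempty (𝓞 L →+* ZMod p) → ∃ ρ : Γ →* GL (Fin n) (ZMod p),
        (∀ i, ρ (γ i) ^ (p - 1) = 1) ∧ ρ c ≠ 1 := by
  classical
  set E := AlgebraicClosure K with hE
  set κ : GL (Fin n) K →* GL (Fin n) E := Matrix.GeneralLinearGroup.map (algebraMap K E) with hκ
  have hΛ : ∀ i, ∃ Λ : Finset E, (0 : E) ∉ Λ ∧
      aeval ((algebraMap K E).mapMatrix (γ i : GL (Fin n) K).1) (∏ l ∈ Λ, (X - C l)) = 0 :=
    fun i => bgx_roots _ (hani _ (γ i).2) (γ i : GL (Fin n) K).isUnit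
  choose Λ hΛ0 hΛ1 using hΛ
  have hκinj : Function.Injective κ := by
    intro a b hab
    apply Units.ext
    ext i j
    have := congrArg (fun g : GL (Fin n) E => g.1 i j) hab
    simpa [κ] using this
  have hcκ : κ c ≠ 1 := by
    intro h
    apply hc
    apply Subtype.ext
    apply hκinj
    rw [h]; simp
  have hij : ∃ i j, (κ c).1 i j ≠ (1 : Matrix (Fin n) (Fin n) E) i j := by
    by_contra! h
    apply hcκ
    apply Units.ext
    ext i j
    exact h i j
  obtain ⟨i0, j0, hij⟩ := hij
  set a : E := (κ c).1 i0 j0 - (1 : Matrix (Fin n) (Fin n) E) i0 j0 with ha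
  have ha0 : a ≠ 0 := sub_ne_zero.mpr hij
  set s1 : Finset E := Finset.univ.image fun x : Fin r × Fin n × Fin n => (κ (γ x.1)).1 x.2.1 x.2.2 with hs1
  set s2 : Finset E := Finset.univ.image fun x : Fin r × Fin n × Fin n => ((κ (γ x.1))⁻¹).1 x.2.1 x.2.2 with hs2
  set T : Finset E := Finset.univ.biUnion Λ with hT
  set s3 : Finset E := T.image fun l => l⁻¹ with hs3
  set s4 : Finset E := (T ×ˢ T).image fun l => (l.1 - l.2)⁻¹ with hs4
  set s : Finset E := s1 ∪ s2 ∪ T ∪ s3 ∪ s4 ∪ {a⁻¹} with hs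
  obtain ⟨L, iL, iN, b, hb⟩ := bgx_specialize E s
  refine ⟨L, iL, iN, b, ?_⟩
  intro p hp hbp hL
  obtain ⟨f⟩ := hb p hp hbp hL
  haveI : Fact p.Prime := ⟨hp⟩
  set R := Subring.closure (s : Set E) with hR
  have hsR : ∀ x ∈ s, x ∈ R := fun x hx => Subring.subset_closure hx
  set ι : GL (Fin n) R →* GL (Fin n) E := Matrix.GeneralLinearGroup.map R.subtype with hι
  have hιinj : Function.Injective ι := by
    intro a b hab
    apply Units.ext
    ext i j
    have := congrArg (fun g : GL (Fin n) E => g.1 i j) hab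
    simpa [ι] using this
  have hgen : ∀ i, κ (γ i) ∈ ι.range := by
    intro i
    have e1 : ∀ j k, (κ (γ i)).1 j k ∈ R := fun j k => hsR _ (by
      simp only [hs, Finset.mem_union]
      left; left; left; left; left
      exact Finset.mem_image.mpr ⟨(i, j, k), Finset.mem_univ _, rfl⟩)
    have e2 : ∀ j k, ((κ (γ i))⁻¹).1 j k ∈ R := fun j k => hsR _ (by
      simp only [hs, Finset.mem_union]
      left; left; left; left; right
      exact Finset.mem_image.mpr ⟨(i, j, k), Finset.mem_univ _, rfl⟩)
    have hinj : Function.Injective (R.subtype.mapMatrix : Matrix (Fin n) (Fin n) R →+* _) :=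
      Matrix.map_injective R.subtype_injective
    let A : Matrix (Fin n) (Fin n) R := Matrix.of fun j k => ⟨_, e1 j k⟩
    let B : Matrix (Fin n) (Fin n) R := Matrix.of fun j k => ⟨_, e2 j k⟩
    have hA : R.subtype.mapMatrix A = (κ (γ i)).1 := by ext; rfl
    have hB : R.subtype.mapMatrix B = ((κ (γ i))⁻¹).1 := by ext; rfl
    refine ⟨⟨A, B, ?_, ?_⟩, ?_⟩
    · apply hinj
      rw [map_mul, hA, hB, map_one, ← Units.val_mul]; simp
    · apply hinj
      rw [map_mul, hA, hB, map_one, ← Units.val_mul]; simp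
    · apply Units.ext
      exact hA
  have hall : ∀ g : Γ, κ g ∈ ι.range := by
    intro g
    have hg : g ∈ Subgroup.closure (Set.range γ) := by rw [hγ]; trivial
    have : Subgroup.closure (Set.range γ) ≤ ι.range.comap (κ.comp Γ.subtype) := by
      rw [Subgroup.closure_le]
      rintro _ ⟨i, rfl⟩
      exact hgen i
    exact this hg
  let e := MonoidHom.ofInjective hιinj
  let ρR : Γ →* GL (Fin n) R := e.symm.toMonoidHom.comp ((κ.comp Γ.subtype).codRestrict ι.range hall)
  have hρR : ∀ g : Γ, ι (ρR g) = κ g := by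
    intro g
    have := congrArg Subtype.val (e.apply_symm_apply ⟨κ g, hall g⟩)
    exact this
  refine ⟨(Matrix.GeneralLinearGroup.map f).comp ρR, ?_, ?_⟩
  · intro i
    have hT1 : ∀ l ∈ Λ i, l ∈ T := fun l hl => Finset.mem_biUnion.mpr ⟨i, Finset.mem_univ _, hl⟩
    have hTR : ∀ l ∈ Λ i, l ∈ R := fun l hl => hsR _ (by
      simp only [hs, Finset.mem_union]
      left; left; left; right
      exact hT1 l hl)
    have hTi : ∀ l ∈ Λ i, l⁻¹ ∈ R := fun l hl => hsR _ (by
      simp only [hs, Finset.mem_union]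
      left; left; right
      exact Finset.mem_image_of_mem _ (hT1 l hl))
    have hTd : ∀ l ∈ Λ i, ∀ m ∈ Λ i, (l - m)⁻¹ ∈ R := fun l hl m hm => hsR _ (by
      simp only [hs, Finset.mem_union]
      left; right
      exact Finset.mem_image.mpr ⟨(l, m), Finset.mem_product.mpr ⟨hT1 l hl, hT1 m hm⟩, rfl⟩)
    have hunit : ∀ x : E, x ≠ 0 → ∀ hx : x ∈ R, x⁻¹ ∈ R → f ⟨x, hx⟩ ≠ 0 := by
      intro x hx0 hx hxi h
      have h1 : (⟨x, hx⟩ : R) * ⟨x⁻¹, hxi⟩ = 1 := Subtype.ext (mul_inv_cancel₀ hx0)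
      have h2 := congrArg f h1
      rw [map_mul, h, zero_mul, map_one] at h2
      exact zero_ne_one h2
    let φR : {x // x ∈ Λ i} → R := fun l => ⟨l.1, hTR l.1 l.2⟩
    apply bgx_pow_one p n _ (Λ i).attach (fun l => f (φR l))
    · intro l _ m _ hlm
      by_contra hne
      have hne' : l.1 - m.1 ≠ 0 := sub_ne_zero.mpr fun h => hne (Subtype.ext h)
      refine hunit (l.1 - m.1) hne' (R.sub_mem (hTR _ l.2) (hTR _ m.2)) (hTd _ l.2 _ m.2) ?_
      have : (⟨l.1 - m.1, R.sub_mem (hTR _ l.2) (hTR _ m.2)⟩ : R) = φR l - φR m := rfl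
      rw [this, map_sub, sub_eq_zero]
      exact hlm
    · intro l _
      exact hunit l.1 (fun h => hΛ0 i (h ▸ l.2)) _ (hTi _ l.2)
    · have hR0 : aeval (ρR (γ i)).1 (∏ l ∈ (Λ i).attach, (X - C (φR l))) = 0 := by
        have hinj : Function.Injective (R.subtype.mapMatrix : Matrix (Fin n) (Fin n) R →+* _) :=
          Matrix.map_injective R.subtype_injective
        apply hinj
        rw [bgx_map_aeval, map_zero]
        · have h1 : R.subtype.mapMatrix (ρR (γ i)).1 = (algebraMap K E).mapMatrix (γ i : GL (Fin n) K).1 :=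
            congrArg Units.val (hρR (γ i))
          have h2 : (∏ l ∈ (Λ i).attach, (X - C (φR l))).map R.subtype = ∏ l ∈ Λ i, (X - C l) := by
            rw [Polynomial.map_prod, ← Finset.prod_attach (Λ i)]
            apply Finset.prod_congr rfl
            intro l _
            simp [φR]
          rw [h1, h2]
          exact hΛ1 i
      have h3 := congrArg f.mapMatrix hR0
      rw [bgx_map_aeval, map_zero, Polynomial.map_prod] at h3
      simpa using h3
  · intro h
    have haR : a⁻¹ ∈ R := hsR _ (by simp [hs])
    set aR : R := (ρR c).1 i0 j0 - (1 : Matrix (Fin n) (Fin n) R) i0 j0 with haRd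
    have h1 : (aR : E) = a := by
      have h4 := congrArg (fun g : GL (Fin n) E => g.1 i0 j0) (hρR c)
      have h5 : ((ρR c).1 i0 j0 : E) = (κ c).1 i0 j0 := h4
      rw [haRd, AddSubgroupClass.coe_sub, h5, ha]
      congr 1
      rw [Matrix.one_apply, Matrix.one_apply]
      split_ifs <;> simp
    have h2 : aR * ⟨a⁻¹, haR⟩ = 1 := Subtype.ext (by
      rw [Subring.coe_mul, h1]; exact mul_inv_cancel₀ ha0)
    have h3 : f aR = 0 := by
      have h4 := congrArg (fun g : GL (Fin n) (ZMod p) => g.1 i0 j0) h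
      have h5 : f ((ρR c).1 i0 j0) = (1 : Matrix (Fin n) (Fin n) (ZMod p)) i0 j0 := h4
      rw [haRd, map_sub, h5, Matrix.one_apply, Matrix.one_apply]
      split_ifs <;> simp
    have h4 := congrArg f h2
    rw [map_mul, h3, zero_mul, map_one] at h4
    exact zero_ne_one h4


theorem bgx_ofFn_mem {G : Type*} [Group G] (H : Subgroup G) (r : ℕ) (f : Fin r → G)
    (h : ∀ i, f i ∈ H) : (List.ofFn f).prod ∈ H := by
  apply Subgroup.list_prod_mem
  intro x hx
  obtain ⟨i, rfl⟩ := (List.mem_ofFn' _ _).mp hx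
  exact h i

theorem bgx_closure_top {G : Type*} [Group G] (r : ℕ) (γ : Fin r → G)
    (h : ∀ x : G, ∃ k : Fin r → ℤ, x = (List.ofFn fun i => γ i ^ k i).prod) :
    Subgroup.closure (Set.range γ) = ⊤ := by
  rw [eq_top_iff]
  intro x _
  obtain ⟨k, rfl⟩ := h x
  exact bgx_ofFn_mem _ _ _ fun i => Subgroup.zpow_mem _ (Subgroup.subset_closure (Set.mem_range_self i)) _

theorem bgx_FG {G : Type*} [Group G] (h : BoundedGeneration G) : Group.FG G := by
  obtain ⟨r, γ, h⟩ := h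
  exact Group.fg_iff.mpr ⟨Set.range γ, bgx_closure_top r γ h, Set.finite_range γ⟩

/-- the list-product of all cyclic groups -/
theorem bgx_easy {G : Type*} [Group G] (hf : Group.FG G) (hv : IsVirtuallyAbelian G) :
    BoundedGeneration G := by
  classical
  obtain ⟨H, hH, hab⟩ := hv
  haveI := hH
  haveI : Group.FG H := inferInstance
  letI : CommGroup H := { (inferInstance : Group H) with mul_comm := hab }
  obtain ⟨S, hS⟩ := (Group.fg_def (G := H)).mp inferInstance
  -- elements of H
  have hHl : ∀ x : H, ∃ k : Fin S.card → ℤ,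
      x = (List.ofFn fun i => ((S.equivFin.symm i : S) : H) ^ k i).prod := by
    intro x
    have hx : x ∈ Subgroup.closure (S : Set H) := by rw [hS]; trivial
    induction hx using Subgroup.closure_induction with
    | mem y hy =>
      refine ⟨fun i => if i = S.equivFin ⟨y, hy⟩ then 1 else 0, ?_⟩
      rw [List.prod_ofFn]
      rw [Finset.prod_eq_single (S.equivFin ⟨y, hy⟩)]
      · simp
      · intro b _ hb; simp [hb]
      · simp
    | one => exact ⟨0, by simp [List.prod_ofFn]⟩
    | mul a b _ _ ha hb =>
      obtain ⟨k, hk⟩ := ha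
      obtain ⟨l, hl⟩ := hb
      refine ⟨k + l, ?_⟩
      rw [List.prod_ofFn] at *
      simp only [Pi.add_apply, _root_.zpow_add, Finset.prod_mul_distrib]
      rw [← hk, ← hl]
    | inv a _ ha =>
      obtain ⟨k, hk⟩ := ha
      refine ⟨-k, ?_⟩
      rw [List.prod_ofFn] at *
      simp only [Pi.neg_apply, _root_.zpow_neg, Finset.prod_inv_distrib]
      rw [← hk]
  haveI : Finite (G ⧸ H) := inferInstance
  obtain ⟨m, ⟨e⟩⟩ := Finite.exists_equiv_fin (G ⧸ H)
  refine ⟨m + S.card, Fin.append (fun j => (e.symm j).out) (fun i => (((S.equivFin.symm i : S) : H) : G)), ?_⟩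
  intro x
  have hm : ((x : G ⧸ H).out)⁻¹ * x ∈ H := by
    rw [← QuotientGroup.eq]; exact Quotient.out_eq' _
  obtain ⟨k, hk⟩ := hHl ⟨_, hm⟩
  refine ⟨Fin.append (fun j => if j = e x then 1 else 0) k, ?_⟩
  have hfn : (fun i => Fin.append (fun j => (e.symm j).out) (fun i => (((S.equivFin.symm i : S) : H) : G)) i ^
      (Fin.append (fun j => if j = e x then (1:ℤ) else 0) k) i) =
      Fin.append (fun j => (e.symm j).out ^ (if j = e x then (1:ℤ) else 0))
        (fun i => (((S.equivFin.symm i : S) : H) : G) ^ k i) := by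
    funext i
    refine Fin.addCases (fun j => ?_) (fun j => ?_) i <;> simp
  rw [hfn, List.ofFn_fin_append, List.prod_append]
  have h2 : (List.ofFn fun i => (((S.equivFin.symm i : S) : H) : G) ^ k i).prod =
      (x : G ⧸ H).out⁻¹ * x := by
    have := congrArg H.subtype hk
    rw [map_list_prod, List.map_ofFn] at this
    simp only [Subgroup.subtype_apply] at this
    rw [this]
    rfl
  have h1 : (List.ofFn fun j => (e.symm j).out ^ (if j = e x then (1:ℤ) else 0)).prod =
      (x : G ⧸ H).out := by
    have key : ∀ (m : ℕ) (f : Fin m → G) (a : Fin m),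
        (List.ofFn fun j => f j ^ (if j = a then (1:ℤ) else 0)).prod = f a := by
      intro m
      induction m with
      | zero => intro f a; exact a.elim0
      | succ m ih =>
        intro f a
        rw [List.ofFn_succ, List.prod_cons]
        refine Fin.cases ?_ (fun a => ?_) a
        · simp [Fin.succ_ne_zero]
        · have := ih (fun j => f j.succ) a
          simpa [(Fin.succ_ne_zero _).symm] using this
    rw [key m (fun j => (e.symm j).out)]
    simp
  rw [h1, h2]
  group



theorem bgx_N {G : Type*} [Group G] (r : ℕ) (γ : Fin r → G)
    (hγ : Subgroup.closure (Set.range γ) = ⊤) (J : ℕ) :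
    ∃ N : Subgroup G, N.FiniteIndex ∧ ∀ H : Subgroup G, H.index ≠ 0 → H.index ≤ J → N ≤ H := by
  have hfin : ∀ j : ℕ, Finite (G →* Equiv.Perm (Fin j)) := by
    intro j
    apply Finite.of_injective (fun (φ : G →* Equiv.Perm (Fin j)) (i : Fin r) => φ (γ i))
    intro φ ψ h
    apply MonoidHom.eq_of_eqOn_dense hγ
    rintro _ ⟨i, rfl⟩
    exact congrFun h i
  refine ⟨⨅ j : Fin (J + 1), ⨅ φ : G →* Equiv.Perm (Fin j), φ.ker, ?_, ?_⟩
  · apply Subgroup.finiteIndex_iInf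
    intro j
    have := hfin j
    apply Subgroup.finiteIndex_iInf
    intro φ
    infer_instance
  · intro H h0 hJ
    have hfq : H.FiniteIndex := ⟨h0⟩
    have e : G ⧸ H ≃ Fin H.index := Finite.equivFinOfCardEq rfl
    have hle : (⨅ j : Fin (J + 1), ⨅ φ : G →* Equiv.Perm (Fin j), φ.ker) ≤
        (e.permCongrHom.toMonoidHom.comp (MulAction.toPermHom G (G ⧸ H))).ker :=
      (iInf_le _ (⟨H.index, by omega⟩ : Fin (J + 1))).trans (iInf_le _ _)
    refine hle.trans ?_
    intro g hg
    rw [MonoidHom.mem_ker] at hg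
    have h1 : MulAction.toPermHom G (G ⧸ H) g = 1 := by
      apply e.permCongrHom.injective
      rw [map_one]; exact hg
    have h2 := congrArg (fun σ : Equiv.Perm (G ⧸ H) => σ ((1 : G) : G ⧸ H)) h1
    have h3 : ((g * 1 : G) : G ⧸ H) = ((1 : G) : G ⧸ H) := h2
    rw [mul_one, eq_comm, QuotientGroup.eq] at h3
    simpa using h3

theorem bgx_count {G A : Type*} [Group G] [Group A] (r : ℕ) (γ : Fin r → G)
    (h : ∀ x : G, ∃ k : Fin r → ℤ, x = (List.ofFn fun i => γ i ^ k i).prod)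
    (Φ : G →* A) (M : ℕ) (hM : 0 < M) (hΦ : ∀ i, Φ (γ i) ^ M = 1) :
    Finite Φ.range ∧ Nat.card Φ.range ≤ M ^ r := by
  let F : (Fin r → Fin M) → Φ.range := fun k =>
    ⟨Φ (List.ofFn fun i => γ i ^ (k i : ℕ)).prod, ⟨_, rfl⟩⟩
  have hF : Function.Surjective F := by
    rintro ⟨_, x, rfl⟩
    obtain ⟨k, rfl⟩ := h x
    have hpos : ∀ i, 0 ≤ k i % (M : ℤ) := fun i => Int.emod_nonneg _ (by omega)
    have hlt : ∀ i, k i % (M : ℤ) < M := fun i => Int.emod_lt_of_pos _ (by omega)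
    refine ⟨fun i => ⟨(k i % (M : ℤ)).toNat, by have := hpos i; have := hlt i; omega⟩, ?_⟩
    apply Subtype.ext
    change Φ _ = Φ _
    rw [map_list_prod, map_list_prod, List.map_ofFn, List.map_ofFn]
    congr 2
    funext i
    simp only [Function.comp_apply, map_pow, map_zpow]
    rw [← _root_.zpow_natCast, Int.toNat_of_nonneg (hpos i)]
    conv_rhs => rw [← Int.emod_add_mul_ediv (k i) M, _root_.zpow_add, _root_.zpow_mul, _root_.zpow_natCast, hΦ i, _root_.one_zpow, mul_one]
  refine ⟨Finite.of_surjective F hF, ?_⟩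
  have := Nat.card_le_card_of_surjective F hF
  simpa using this

theorem bgx_hard {K : Type*} [Field K] [CharZero K] {n : ℕ} (Γ : Subgroup (GL (Fin n) K))
    (hani : ∀ g ∈ Γ, Module.End.IsSemisimple ((g : Matrix (Fin n) (Fin n) K).mulVecLin))
    (hbg : BoundedGeneration Γ) : IsVirtuallyAbelian Γ := by
  classical
  obtain ⟨r, γ, hγ⟩ := hbg
  have hcl := bgx_closure_top r γ hγ
  obtain ⟨J, hJ⟩ := bgx_jordan_mod n
  obtain ⟨N, hN, hNJ⟩ := bgx_N r γ hcl J
  refine ⟨N, hN, ?_⟩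
  rintro ⟨x, hx⟩ ⟨y, hy⟩
  apply Subtype.ext
  change x * y = y * x
  by_contra hxy
  have hc : x * y * x⁻¹ * y⁻¹ ≠ 1 := by
    intro h
    apply hxy
    rw [mul_inv_eq_one, mul_inv_eq_iff_eq_mul] at h
    exact h
  obtain ⟨L, iL, iN, b, hb⟩ := bgx_S Γ hani r γ hcl _ hc
  obtain ⟨S, M, hM, hS, hlt⟩ := bgx_star L r b
  have hρ : ∀ p : S, ∃ ρ : Γ →* GL (Fin n) (ZMod p), (∀ i, ρ (γ i) ^ (p.1 - 1) = 1) ∧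
      ρ (x * y * x⁻¹ * y⁻¹) ≠ 1 := by
    intro p
    obtain ⟨h1, h2, h3, -⟩ := hS p.1 p.2
    exact hb p.1 h1 h2 h3
  choose ρ hρ1 hρ2 using hρ
  let Φ : Γ →* (∀ p : S, GL (Fin n) (ZMod p)) := MonoidHom.pi ρ
  obtain ⟨hfin, hcard⟩ := bgx_count r γ hγ Φ M hM (by
    intro i
    funext p
    obtain ⟨q, hq⟩ := (hS p.1 p.2).2.2.2
    change ρ p (γ i) ^ M = 1
    rw [hq, pow_mul, hρ1, one_pow])
  have hex : ∃ p : S, ¬ p.1 ∣ Nat.card (ρ p).range := by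
    by_contra! hall
    have hdvd : ∏ p ∈ S, p ∣ Nat.card Φ.range := by
      apply Finset.prod_primes_dvd
      · intro p hp
        exact (hS p hp).1.prime
      · intro p hp
        refine (hall ⟨p, hp⟩).trans ?_
        let π : (∀ p : S, GL (Fin n) (ZMod p)) →* GL (Fin n) (ZMod p) :=
          Pi.evalMonoidHom (fun p : S => GL (Fin n) (ZMod p)) ⟨p, hp⟩
        have hr : (ρ ⟨p, hp⟩).range = Φ.range.map π := by
          rw [MonoidHom.map_range]
          rfl
        rw [hr]
        exact Subgroup.card_map_dvd _ _
    have := Nat.le_of_dvd Nat.card_pos hdvd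
    omega
  obtain ⟨p, hp⟩ := hex
  have hpf : Fact p.1.Prime := ⟨(hS p.1 p.2).1⟩
  obtain ⟨H, hHJ, hHab⟩ := hJ p.1 (ρ p).range hp
  have hidx : (H.comap (ρ p).rangeRestrict).index = H.index :=
    Subgroup.index_comap_of_surjective _ (ρ p).rangeRestrict_surjective
  have hH0 : H.index ≠ 0 := by
    have : Finite (ρ p).range := inferInstance
    exact Subgroup.index_ne_zero_of_finite
  have hle := hNJ (H.comap (ρ p).rangeRestrict) (by rw [hidx]; exact hH0) (by rw [hidx]; exact hHJ)
  have hcomm := hHab _ (hle hx) _ (hle hy)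
  have hcomm' : ρ p x * ρ p y = ρ p y * ρ p x := congrArg Subtype.val hcomm
  apply hρ2 p
  rw [map_mul, map_mul, map_mul, map_inv, map_inv, hcomm']
  group

/-- An anisotropic linear group over a field of characteristic zero is boundedly generated
if and only if it is finitely generated and virtually abelian. -/
theorem stmt_2 {K : Type*} [Field K] [CharZero K] {n : ℕ} (hn : 1 ≤ n)
    (Γ : Subgroup (GL (Fin n) K)) (hani : ∀ g ∈ Γ, IsSemisimpleElt g) :
    BoundedGeneration ↥Γ ↔ Group.FG ↥Γ ∧ IsVirtuallyAbelian ↥Γ := by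
  constructor
  · intro h
    exact ⟨bgx_FG h, bgx_hard Γ hani h⟩
  · rintro ⟨h1, h2⟩
    exact bgx_easy h1 h2
end

section
/- Let R be a finitely generated ℚ-algebra that is an integral domain, with field of fractions L, and let n ≥ 1. Let Γ be a subgroup of GL_n(R) that is not virtually solvable, and let γ₁, …, γ_r ∈ Γ be elements that are semi-simple when regarded as elements of GL_n(L). Then there exists a number field F and a ℚ-algebra homomorphism θ : R → F such that for the induced group homomorphism Θ : GL_n(R) → GL_n(F), the image Θ(Γ) is not virtually solvable and each of the elements Θ(γ₁), …, Θ(γ_r) is semi-simple. -/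
open Matrix

/-- A group is virtually solvable if it has a solvable subgroup of finite index. -/
def IsVirtuallySolvable (G : Type*) [Group G] : Prop :=
  ∃ H : Subgroup G, H.FiniteIndex ∧ IsSolvable ↥H


namespace Spec

universe u v w

section basics
variable {K : Type u} {G : Type v} {V : Type w} [Field K] [Group G] [AddCommGroup V] [Module K V]

/-- the image algebra is commutative modulo nilpotents -/
def UU (ρ : Representation K G V) : Prop :=
  ∀ a b c : MonoidAlgebra K G, IsNilpotent (ρ.asAlgebraHom ((a * b - b * a) * c))

/-- strongly irreducible -/
def SI (ρ : Representation K G V) : Prop :=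
  ∀ N : Subgroup G, N.FiniteIndex → ∀ W : Submodule K V,
    (∀ g ∈ N, ∀ w ∈ W, ρ g w ∈ W) → W = ⊥ ∨ W = ⊤

theorem range_le {G' : Type*} [Group G'] (ρ : Representation K G V) (σ : Representation K G' V)
    (h : ∀ g, σ g ∈ ρ.asAlgebraHom.range) (x : MonoidAlgebra K G') :
    σ.asAlgebraHom x ∈ ρ.asAlgebraHom.range := by
  induction x using MonoidAlgebra.induction_linear with
  | zero => simp
  | add x y hx hy => rw [map_add]; exact add_mem hx hy
  | single m r =>
    rw [Representation.asAlgebraHom_single]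
    exact Subalgebra.smul_mem _ (h m) r

theorem UU.of_range {G' : Type*} [Group G'] {ρ : Representation K G V} {σ : Representation K G' V}
    (hρ : UU ρ) (h : ∀ g, σ g ∈ ρ.asAlgebraHom.range) : UU σ := by
  intro a b c
  obtain ⟨a', ha⟩ := range_le ρ σ h a
  obtain ⟨b', hb⟩ := range_le ρ σ h b
  obtain ⟨c', hc⟩ := range_le ρ σ h c
  have := hρ a' b' c'
  simp only [map_mul, map_sub] at this ⊢
  simp only [AlgHom.toRingHom_eq_coe, RingHom.coe_coe] at ha hb hc
  rwa [← ha, ← hb, ← hc]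

theorem mem_range (ρ : Representation K G V) (g : G) : ρ g ∈ ρ.asAlgebraHom.range :=
  ⟨MonoidAlgebra.single g 1, by simp⟩

theorem sub_apply (ρ : Representation K G V) (W : Submodule K V) (h : ∀ g, W ≤ W.comap (ρ g))
    (x : MonoidAlgebra K G) (v : W) :
    (((ρ.subrepresentation W h).asAlgebraHom x v : W) : V) = ρ.asAlgebraHom x v := by
  induction x using MonoidAlgebra.induction_linear with
  | zero => simp
  | add x y hx hy => simp [hx, hy]
  | single m r => simp [Representation.asAlgebraHom_single]

theorem quo_apply (ρ : Representation K G V) (W : Submodule K V) (h : ∀ g, W ≤ W.comap (ρ g))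
    (x : MonoidAlgebra K G) (v : V) :
    (ρ.quotient W h).asAlgebraHom x (Submodule.Quotient.mk v) =
      Submodule.Quotient.mk (ρ.asAlgebraHom x v) := by
  induction x using MonoidAlgebra.induction_linear with
  | zero => simp
  | add x y hx hy => simp [hx, hy]
  | single m r => simp [Representation.asAlgebraHom_single]

theorem sub_nil (ρ : Representation K G V) (W : Submodule K V) (h : ∀ g, W ≤ W.comap (ρ g))
    (x : MonoidAlgebra K G) (hx : IsNilpotent (ρ.asAlgebraHom x)) :
    IsNilpotent ((ρ.subrepresentation W h).asAlgebraHom x) := by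
  obtain ⟨k, hk⟩ := hx
  refine ⟨k, ?_⟩
  rw [← map_pow] at hk ⊢
  ext v
  rw [sub_apply, hk]; simp

theorem quo_nil (ρ : Representation K G V) (W : Submodule K V) (h : ∀ g, W ≤ W.comap (ρ g))
    (x : MonoidAlgebra K G) (hx : IsNilpotent (ρ.asAlgebraHom x)) :
    IsNilpotent ((ρ.quotient W h).asAlgebraHom x) := by
  obtain ⟨k, hk⟩ := hx
  refine ⟨k, ?_⟩
  rw [← map_pow] at hk ⊢
  ext v
  simp only [LinearMap.coe_comp, Function.comp_apply, Submodule.mkQ_apply, quo_apply, hk]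
  simp

theorem ext_nil (ρ : Representation K G V) (W : Submodule K V) (h : ∀ g, W ≤ W.comap (ρ g))
    (x : MonoidAlgebra K G) (h1 : IsNilpotent ((ρ.subrepresentation W h).asAlgebraHom x))
    (h2 : IsNilpotent ((ρ.quotient W h).asAlgebraHom x)) :
    IsNilpotent (ρ.asAlgebraHom x) := by
  obtain ⟨k, hk⟩ := h1
  obtain ⟨l, hl⟩ := h2
  refine ⟨k + l, ?_⟩
  rw [← map_pow] at hk hl ⊢
  ext v
  have h3 : ρ.asAlgebraHom (x ^ l) v ∈ W := by
    rw [← Submodule.Quotient.mk_eq_zero, ← quo_apply ρ W h, hl]; simp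
  have h4 := sub_apply ρ W h (x ^ k) ⟨_, h3⟩
  rw [hk] at h4
  rw [pow_add, map_mul, Module.End.mul_apply]
  simpa using h4.symm

theorem UU.sub {ρ : Representation K G V} (hρ : UU ρ) (W : Submodule K V)
    (h : ∀ g, W ≤ W.comap (ρ g)) : UU (ρ.subrepresentation W h) :=
  fun a b c => sub_nil _ _ _ _ (hρ a b c)

theorem UU.quo {ρ : Representation K G V} (hρ : UU ρ) (W : Submodule K V)
    (h : ∀ g, W ≤ W.comap (ρ g)) : UU (ρ.quotient W h) :=
  fun a b c => quo_nil _ _ _ _ (hρ a b c)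

theorem UU.ext {ρ : Representation K G V} (W : Submodule K V)
    (h : ∀ g, W ≤ W.comap (ρ g)) (h1 : UU (ρ.subrepresentation W h))
    (h2 : UU (ρ.quotient W h)) : UU ρ :=
  fun a b c => ext_nil _ _ _ _ (h1 a b c) (h2 a b c)

theorem fi (N : Subgroup G) {X : Type*} (f : G → X) (hf : (Set.range f).Finite)
    (h : ∀ a b, f a = f b → a⁻¹ * b ∈ N) : N.FiniteIndex := by
  have : Finite (Set.range f) := hf
  have : Finite (G ⧸ N) := by
    refine Finite.of_injective (β := Set.range f) (fun q => ⟨f q.out, q.out, rfl⟩) ?_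
    intro p q hpq
    have := h _ _ (Subtype.ext_iff.1 hpq)
    rw [← QuotientGroup.eq] at this
    simpa using this
  exact Subgroup.finiteIndex_of_finite_quotient

theorem fin_of {ι X Y : Type*} (F : ι → X) (Φ : ι → Y) (hΦ : (Set.range Φ).Finite)
    (h : ∀ i, (F '' {j | Φ j = Φ i}).Finite) : (Set.range F).Finite := by
  refine (hΦ.biUnion (t := fun y => F '' {j | Φ j = y}) ?_).subset ?_
  · rintro _ ⟨i, rfl⟩; exact h i
  · rintro _ ⟨i, rfl⟩
    simp only [Set.mem_iUnion]
    exact ⟨Φ i, ⟨i, rfl⟩, i, rfl, rfl⟩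

variable [IsAlgClosed K] [FiniteDimensional K V]

theorem scalar_of_conj {ρ : Representation K G V} (hρ : SI ρ) (b : G)
    (hb : (Set.range fun g => ρ (g * b * g⁻¹)).Finite) : ∃ c : K, ρ b = c • 1 := by
  rcases subsingleton_or_nontrivial V with hV | hV
  · exact ⟨0, by ext v; exact Subsingleton.elim _ _⟩
  let N : Subgroup G :=
    { carrier := {g | ρ g * ρ b = ρ b * ρ g}
      one_mem' := by simp
      mul_mem' := by
        intro x y hx hy
        simp only [Set.mem_ofPred_eq, map_mul] at *
        rw [mul_assoc, hy, ← mul_assoc, hx, mul_assoc]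
      inv_mem' := by
        intro x hx
        simp only [Set.mem_ofPred_eq] at *
        have h1 : ρ x⁻¹ * ρ x = 1 := by rw [← map_mul]; simp
        have h2 : ρ x * ρ x⁻¹ = 1 := by rw [← map_mul]; simp
        calc ρ x⁻¹ * ρ b = ρ x⁻¹ * (ρ b * ρ x) * ρ x⁻¹ := by rw [mul_assoc, mul_assoc, h2, mul_one]
          _ = _ := by rw [← hx, ← mul_assoc, h1, one_mul] }
  have hN : N.FiniteIndex := by
    refine fi N _ hb ?_
    intro x y hxy
    change ρ (x⁻¹ * y) * ρ b = ρ b * ρ (x⁻¹ * y)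
    have := congrArg (fun z => ρ x⁻¹ * z * ρ y) hxy
    simp only [← map_mul] at this ⊢
    simp only [mul_assoc, inv_mul_cancel_left, inv_mul_cancel, mul_one] at this ⊢
    exact this.symm
  obtain ⟨c, hc⟩ := Module.End.exists_eigenvalue (ρ b)
  refine ⟨c, ?_⟩
  have hst : ∀ g ∈ N, ∀ v ∈ Module.End.eigenspace (ρ b) c,
      ρ g v ∈ Module.End.eigenspace (ρ b) c := by
    intro g hg v hv
    rw [Module.End.mem_eigenspace_iff] at hv ⊢
    have := congrArg (fun z => z v) (show ρ g * ρ b = ρ b * ρ g from hg)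
    simp only [Module.End.mul_apply, hv, map_smul] at this
    exact this.symm
  rcases hρ N hN (Module.End.eigenspace (ρ b) c) hst with h | h
  · exact absurd h hc
  · ext v
    have : v ∈ Module.End.eigenspace (ρ b) c := by rw [h]; trivial
    rw [Module.End.mem_eigenspace_iff] at this
    simpa using this

theorem common_eigen [Nontrivial V] {ι : Type*} (f : ι → Module.End K V)
    (hf : ∀ i j, Commute (f i) (f j)) :
    ∃ χ : ι → K, (⨅ i, Module.End.eigenspace (f i) (χ i)) ≠ ⊥ := by
  obtain ⟨W, ⟨hW, hWi⟩, hmin⟩ := WellFounded.has_min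
    (wellFounded_lt (α := Submodule K V)) {W | W ≠ ⊥ ∧ ∀ i, ∀ w ∈ W, f i w ∈ W}
    ⟨⊤, top_ne_bot, by simp⟩
  have : Nontrivial W := (Submodule.nontrivial_iff_ne_bot).2 hW
  have key : ∀ i, ∃ c : K, W ≤ Module.End.eigenspace (f i) c := by
    intro i
    obtain ⟨c, hc⟩ := Module.End.exists_eigenvalue ((f i).restrict (hWi i))
    obtain ⟨w, hw, hw0⟩ := hc.exists_hasEigenvector
    rw [Module.End.mem_eigenspace_iff] at hw
    refine ⟨c, ?_⟩
    have h1 : ¬ (W ⊓ Module.End.eigenspace (f i) c) < W := by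
      apply hmin
      constructor
      · rw [Submodule.ne_bot_iff]
        refine ⟨w, ⟨w.2, ?_⟩, by simpa using hw0⟩
        rw [SetLike.mem_coe, Module.End.mem_eigenspace_iff]
        exact congrArg Subtype.val hw
      · rintro j v ⟨hv, hv'⟩
        refine ⟨hWi j v hv, ?_⟩
        rw [SetLike.mem_coe, Module.End.mem_eigenspace_iff] at hv' ⊢
        have := congrArg (fun z => z v) (hf i j).eq
        simp only [Module.End.mul_apply, hv', map_smul] at this
        exact this
    have h2 := (inf_le_left : W ⊓ Module.End.eigenspace (f i) c ≤ W).eq_or_lt.resolve_right h1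
    exact inf_eq_left.1 h2
  choose χ hχ using key
  refine ⟨χ, fun h => hW ?_⟩
  rw [eq_bot_iff, ← h]
  exact le_iInf hχ

theorem scalar_of_abel {ρ : Representation K G V} (hρ : SI ρ) (A : Subgroup G) (hA : A.Normal)
    (hab : ∀ a ∈ A, ∀ b ∈ A, Commute (ρ a) (ρ b)) : ∀ a ∈ A, ∃ c : K, ρ a = c • 1 := by
  rcases subsingleton_or_nontrivial V with hV | hV
  · exact fun _ _ => ⟨0, by ext v; exact Subsingleton.elim _ _⟩
  let f : A → Module.End K V := fun a => ρ a
  have hf : ∀ i j, Commute (f i) (f j) := fun i j => hab _ i.2 _ j.2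
  obtain ⟨χ, hχ⟩ := common_eigen f hf
  have hind : iSupIndep fun χ : A → K => ⨅ i, Module.End.eigenspace (f i) (χ i) := by
    refine (Module.End.independent_iInf_maxGenEigenspace_of_forall_mapsTo f ?_).mono ?_
    · intro i j φ
      exact Module.End.mapsTo_maxGenEigenspace_of_comm (hf j i) φ
    · intro χ
      refine iInf_mono fun i => ?_
      exact Module.End.eigenspace_le_maxGenEigenspace
  have hfin := Submodule.finite_ne_bot_of_iSupIndep hind
  let E : (A → K) → Submodule K V := fun χ => ⨅ i, Module.End.eigenspace (f i) (χ i)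
  have hE : ∀ χ v, v ∈ E χ ↔ ∀ a : A, ρ a v = χ a • v := by
    intro χ v
    simp only [E, Submodule.mem_iInf, Module.End.mem_eigenspace_iff, f]
  have hinv : ∀ g v, ρ g⁻¹ (ρ g v) = v := by
    intro g v; rw [← Module.End.mul_apply, ← map_mul]; simp
  have hinv' : ∀ g v, ρ g (ρ g⁻¹ v) = v := by
    intro g v; rw [← Module.End.mul_apply, ← map_mul]; simp
  let F : G → Submodule K V := fun g => (E χ).map (ρ g)
  have hF : (Set.range F).Finite := by
    refine (hfin.image E).subset ?_
    rintro _ ⟨g, rfl⟩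
    have hEq : F g = E (fun a => χ ⟨g⁻¹ * a * g⁻¹⁻¹, hA.conj_mem _ a.2 _⟩) := by
      ext v
      rw [hE]
      constructor
      · rintro ⟨w, hw, rfl⟩ a
        rw [SetLike.mem_coe, hE] at hw
        have := hw ⟨g⁻¹ * a * g⁻¹⁻¹, hA.conj_mem _ a.2 _⟩
        rw [← map_smul, ← this]
        simp only [← Module.End.mul_apply, ← map_mul]
        congr 2; group
      · intro h
        refine ⟨ρ g⁻¹ v, ?_, hinv' g v⟩
        rw [SetLike.mem_coe, hE]
        intro a
        have := h ⟨g * a * g⁻¹, hA.conj_mem _ a.2 _⟩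
        have h3 : (⟨g⁻¹ * (g * a * g⁻¹) * g⁻¹⁻¹, hA.conj_mem _ (hA.conj_mem _ a.2 _) _⟩ : A) = a :=
          Subtype.ext (by simp [mul_assoc])
        simp only [h3] at this
        rw [← map_smul, ← this]
        simp only [← Module.End.mul_apply, ← map_mul]
        congr 2; group
    refine ⟨_, ?_, hEq.symm⟩
    change E _ ≠ ⊥
    rw [← hEq]
    obtain ⟨w, hw, hw0⟩ := (Submodule.ne_bot_iff _).1 hχ
    refine (Submodule.ne_bot_iff _).2 ⟨ρ g w, ⟨w, hw, rfl⟩, fun h0 => hw0 ?_⟩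
    rw [← hinv g w, h0, map_zero]
  let N : Subgroup G :=
    { carrier := {g | (∀ v ∈ E χ, ρ g v ∈ E χ) ∧ (∀ v ∈ E χ, ρ g⁻¹ v ∈ E χ)}
      one_mem' := by simp
      mul_mem' := by
        rintro x y ⟨hx, hx'⟩ ⟨hy, hy'⟩
        refine ⟨fun v hv => ?_, fun v hv => ?_⟩
        · rw [map_mul]; exact hx _ (hy _ hv)
        · rw [_root_.mul_inv_rev, map_mul]; exact hy' _ (hx' _ hv)
      inv_mem' := by
        rintro x ⟨hx, hx'⟩
        exact ⟨hx', by simpa using hx⟩ }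
  have hN : N.FiniteIndex := by
    refine fi N F hF ?_
    have key : ∀ x y, F x = F y → ∀ v ∈ E χ, ρ (x⁻¹ * y) v ∈ E χ := by
      intro x y hxy v hv
      have : ρ y v ∈ F x := by rw [hxy]; exact ⟨v, hv, rfl⟩
      obtain ⟨w, hw, hw'⟩ := this
      rw [map_mul, Module.End.mul_apply, ← hw', hinv]
      exact hw
    intro x y hxy
    refine ⟨key x y hxy, ?_⟩
    have := key y x hxy.symm
    simpa using this
  rcases hρ N hN (E χ) (fun g hg => hg.1) with h | h
  · exact absurd h hχ
  · intro a ha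
    refine ⟨χ ⟨a, ha⟩, ?_⟩
    ext v
    have : v ∈ E χ := by rw [h]; trivial
    simpa using (hE _ _).1 this ⟨a, ha⟩

end basics
end Spec

set_option linter.unusedSectionVars false

namespace Spec

universe u v w

section A1
variable {K : Type u} [Field K] [IsAlgClosed K]

theorem UU_of_scalar {G : Type v} {V : Type w} [Group G] [AddCommGroup V] [Module K V]
    (ρ : Representation K G V) (h : ∀ g, ∃ c : K, ρ g = c • 1) : UU ρ := by
  have key : ∀ x, ∃ c : K, ρ.asAlgebraHom x = c • 1 := by
    intro x
    induction x using MonoidAlgebra.induction_linear with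
    | zero => exact ⟨0, by simp⟩
    | add x y hx hy =>
      obtain ⟨c, hc⟩ := hx
      obtain ⟨d, hd⟩ := hy
      exact ⟨c + d, by rw [map_add, hc, hd, add_smul]⟩
    | single m r =>
      obtain ⟨c, hc⟩ := h m
      exact ⟨r * c, by rw [Representation.asAlgebraHom_single, hc, mul_smul]⟩
  intro a b c
  obtain ⟨x, hx⟩ := key a
  obtain ⟨y, hy⟩ := key b
  have : ρ.asAlgebraHom ((a * b - b * a) * c) = 0 := by
    rw [map_mul, map_sub, map_mul, map_mul, hx, hy]
    simp [smul_smul, mul_comm]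
  rw [this]
  exact IsNilpotent.zero

variable {G : Type v} {V : Type w} [Group G] [AddCommGroup V] [Module K V] [FiniteDimensional K V]

theorem finite_scalar (e : Module.End K V) (d : K) (he : IsUnit e)
    (S : Set (Module.End K V)) (hS : ∀ y ∈ S, LinearMap.det y = d ∧ ∃ c : K, y = c • e) :
    S.Finite := by
  rcases subsingleton_or_nontrivial V with hV | hV
  · have : Subsingleton (Module.End K V) := ⟨fun a b => by ext v; exact Subsingleton.elim _ _⟩
    exact Set.toFinite S
  have h0 : LinearMap.det e ≠ 0 := (he.map LinearMap.det).ne_zero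
  classical
  have hpos : 0 < Module.finrank K V := Module.finrank_pos
  refine (((Polynomial.nthRoots (Module.finrank K V) (d / LinearMap.det e)).toFinset.finite_toSet).image
    (fun c => c • e)).subset ?_
  intro y hy
  obtain ⟨h1, c, rfl⟩ := hS y hy
  refine ⟨c, ?_, rfl⟩
  rw [LinearMap.det_smul] at h1
  simp only [Finset.mem_coe, Multiset.mem_toFinset]
  rw [Polynomial.mem_nthRoots hpos, ← h1]
  field_simp

theorem isUnit_rep (ρ : Representation K G V) (g : G) : IsUnit (ρ g) :=
  (Group.isUnit g).map ρ

theorem det_conj_rep (ρ : Representation K G V) (g b : G) :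
    LinearMap.det (ρ (g * b * g⁻¹)) = LinearMap.det (ρ b) := by
  have : LinearMap.det (ρ g) * LinearMap.det (ρ g⁻¹) = 1 := by
    rw [← map_mul, ← map_mul]; simp
  simp only [map_mul]
  rw [mul_right_comm, this, one_mul]

theorem exists_span (ρ : Representation K G V) (B : Set G) : ∃ T : Set G, T ⊆ B ∧ T.Finite ∧
      ∀ b ∈ B, ρ b ∈ Submodule.span K (ρ '' T) := by
  obtain ⟨S, hS1, hS2⟩ := Submodule.fg_span_iff_fg_span_finset_subset (R := K) (ρ '' B) |>.1
    (IsNoetherian.noetherian _)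
  obtain ⟨T, hT1, hT2⟩ := Set.exists_subset_bijOn (s := B ∩ ρ ⁻¹' S) (f := ρ)
  refine ⟨T, fun x hx => (hT1 hx).1, ?_, ?_⟩
  · have h1 : (ρ '' T).Finite := S.finite_toSet.subset (by
      rintro _ ⟨x, hx, rfl⟩; exact (hT1 hx).2)
    exact h1.of_finite_image hT2.injOn
  · intro b hb
    have h2 : ρ '' T = S := by
      rw [hT2.image_eq]
      ext y
      constructor
      · rintro ⟨x, hx, rfl⟩; exact hx.2
      · intro hy
        obtain ⟨x, hx, rfl⟩ := hS1 hy
        exact ⟨x, ⟨hx, hy⟩, rfl⟩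
    rw [h2, ← hS2]
    exact Submodule.subset_span ⟨b, hb, rfl⟩

theorem step {ρ : Representation K G V} (hρ : SI ρ) (B : Subgroup G) (hB : B.Normal)
    (hc : ∀ a ∈ B, ∀ b ∈ B, ∃ c : K, ρ (a * b * a⁻¹ * b⁻¹) = c • 1) : ∀ b ∈ B, ∃ c : K, ρ b = c • 1 := by
  let Z : Subgroup G :=
    { carrier := {z | z ∈ B ∧ ∀ b ∈ B, ρ (z * b * z⁻¹) = ρ b}
      one_mem' := ⟨one_mem _, by simp⟩
      mul_mem' := by
        rintro x y ⟨hx, hx'⟩ ⟨hy, hy'⟩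
        refine ⟨mul_mem hx hy, fun b hb => ?_⟩
        have := hx' _ (hB.conj_mem b hb y)
        rw [hy' b hb] at this
        rw [← this]; congr 1; group
      inv_mem' := by
        rintro x ⟨hx, hx'⟩
        refine ⟨inv_mem hx, fun b hb => ?_⟩
        have := hx' _ (hB.conj_mem b hb x⁻¹)
        rw [← this]; congr 1; group }
  have hZn : Z.Normal := by
    constructor
    rintro z ⟨hz, hz'⟩ g
    refine ⟨hB.conj_mem _ hz _, fun b hb => ?_⟩
    have := congrArg (fun x => ρ g * x * ρ g⁻¹) (hz' _ (hB.conj_mem b hb g⁻¹))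
    simp only [← map_mul] at this
    convert this using 2 <;> group
  have hZs := scalar_of_abel hρ Z hZn (by
    rintro a ⟨ha, ha'⟩ b ⟨hb, -⟩
    have := congrArg (fun x => x * ρ a) (ha' b hb)
    simp only [← map_mul] at this
    rw [Commute, SemiconjBy, ← map_mul, ← map_mul, ← this]
    congr 1; group)
  obtain ⟨T, hTB, hTfin, hTspan⟩ := exists_span ρ B
  have : Finite T := hTfin
  let φ : B → (T → Module.End K V) := fun b t => ρ (b * t * (b : G)⁻¹)
  have hφ : (Set.range φ).Finite := by
    refine (Set.Finite.pi' (t := fun t : T => Set.range fun b : B => ρ (b * t * (b : G)⁻¹)) ?_).subset ?_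
    · intro t
      refine finite_scalar (ρ t) (LinearMap.det (ρ t)) (isUnit_rep _ _) _ ?_
      rintro _ ⟨b, rfl⟩
      refine ⟨det_conj_rep _ _ _, ?_⟩
      obtain ⟨c, hc'⟩ := hc b b.2 t (hTB t.2)
      refine ⟨c, ?_⟩
      have : ((b : G) * (t : G) * (b : G)⁻¹) = ((b : G) * t * (b : G)⁻¹ * (t : G)⁻¹) * t := by
        group
      change ρ ((b : G) * (t : G) * (b : G)⁻¹) = _
      rw [this, map_mul, hc']; simp
    · rintro _ ⟨b, rfl⟩ t
      exact ⟨b, rfl⟩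
  have hφZ : ∀ a b : B, φ a = φ b → (a : G)⁻¹ * b ∈ Z := by
    intro a b hab
    refine ⟨mul_mem (inv_mem a.2) b.2, ?_⟩
    have hlin : ∀ x ∈ Submodule.span K (ρ '' T),
        ρ ((a : G)⁻¹ * b) * x * ρ (((a : G)⁻¹ * b)⁻¹) = x := by
      intro x hx
      induction hx using Submodule.span_induction with
      | mem x hx =>
        obtain ⟨t, ht, rfl⟩ := hx
        have := congrArg (fun z => ρ (a : G)⁻¹ * z * ρ a) (congrFun hab ⟨t, ht⟩)
        simp only [φ, ← map_mul] at this ⊢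
        rw [show (a : G)⁻¹ * (a * t * (a : G)⁻¹) * a = t by group] at this
        rw [this]
        congr 1; group
      | zero => simp
      | add x y _ _ hx hy => rw [mul_add, add_mul, hx, hy]
      | smul c x _ hx => rw [mul_smul_comm, smul_mul_assoc, hx]
    intro x hx
    have := hlin _ (hTspan x hx)
    rwa [← map_mul, ← map_mul] at this
  intro b hb
  apply scalar_of_conj hρ
  refine fin_of _ (fun g => φ ⟨g * b * g⁻¹, hB.conj_mem b hb g⟩) (hφ.subset ?_) ?_
  · rintro _ ⟨g, rfl⟩; exact ⟨_, rfl⟩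
  · intro g
    refine finite_scalar (ρ (g * b * g⁻¹)) (LinearMap.det (ρ b)) (isUnit_rep _ _) _ ?_
    rintro _ ⟨h, hh, rfl⟩
    refine ⟨det_conj_rep _ _ _, ?_⟩
    have := hφZ _ _ (show φ _ = φ _ from hh.symm)
    obtain ⟨c, hc'⟩ := hZs _ this
    refine ⟨c, ?_⟩
    have h2 := congrArg (fun z => ρ (g * b * g⁻¹) * z) hc'
    simp only [← map_mul] at h2
    simp only [mul_inv_cancel_left] at h2
    change ρ (h * b * h⁻¹) = _
    rw [h2]; simp

theorem scalar_of_solvable {ρ : Representation K G V} (hρ : SI ρ) [hs : Group.IsSolvable G] (g : G) :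
    ∃ c : K, ρ g = c • 1 := by
  obtain ⟨n, hn⟩ := hs.solvable
  have key : ∀ i ≤ n, ∀ g ∈ derivedSeries G (n - i), ∃ c : K, ρ g = c • 1 := by
    intro i
    induction i with
    | zero =>
      intro _ g hg
      rw [Nat.sub_zero, hn, Subgroup.mem_bot] at hg
      exact ⟨1, by simp [hg]⟩
    | succ i ih =>
      intro hi
      apply step hρ _ (derivedSeries_normal _ _)
      intro a ha b hb
      apply ih (by omega)
      rw [show n - i = (n - (i + 1)) + 1 by omega, derivedSeries_succ]
      exact Subgroup.commutator_mem_commutator ha hb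
  exact key n le_rfl g (by simp)

theorem fi_map (N : Subgroup G) (hN : N.FiniteIndex) (N' : Subgroup N) (hN' : N'.FiniteIndex) :
    (N'.map N.subtype).FiniteIndex := by
  constructor
  rw [Subgroup.index_map_subtype]
  exact mul_ne_zero hN'.index_ne_zero hN.index_ne_zero

theorem A1 (n : ℕ) : ∀ (G : Type v) [Group G] (V : Type w) [AddCommGroup V] [Module K V]
    [FiniteDimensional K V] (ρ : Representation K G V), Module.finrank K V = n → Group.IsSolvable G →
    ∃ N : Subgroup G, N.FiniteIndex ∧ UU (ρ.comp N.subtype) := by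
  induction n using Nat.strong_induction_on with
  | _ n ih =>
  intro G _ V _ _ _ ρ hn hs
  by_cases hSI : SI ρ
  · refine ⟨⊤, inferInstance, UU_of_scalar _ fun g => scalar_of_solvable hSI _⟩
  simp only [SI, not_forall, not_or] at hSI
  obtain ⟨N, hN, W, hW, hb, ht⟩ := hSI
  have hW' : ∀ g : N, W ≤ W.comap ((ρ.comp N.subtype : Representation K N V) g) :=
    fun g w hw => hW g g.2 w hw
  have hlt : Module.finrank K W < n := hn ▸ Submodule.finrank_lt ht
  have hlt' : Module.finrank K (V ⧸ W) < n := by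
    have h1 := Submodule.finrank_quotient_add_finrank W
    have : Nontrivial W := (Submodule.nontrivial_iff_ne_bot).2 hb
    have h2 : 0 < Module.finrank K W := Module.finrank_pos
    omega
  have hsN : Group.IsSolvable N := inferInstance
  obtain ⟨N1, hN1, hU1⟩ := ih _ hlt N W
    (Representation.subrepresentation (ρ.comp N.subtype) W hW') rfl hsN
  obtain ⟨N2, hN2, hU2⟩ := ih _ hlt' N (V ⧸ W)
    (Representation.quotient (ρ.comp N.subtype) W hW') rfl hsN
  refine ⟨(N1 ⊓ N2).map N.subtype, fi_map N hN _ inferInstance, ?_⟩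
  have hW3 : ∀ g : (N1 ⊓ N2).map N.subtype,
      W ≤ W.comap ((ρ.comp (Subgroup.subtype _) : Representation K _ V) g) := by
    rintro ⟨_, g, hg, rfl⟩
    exact hW' g
  refine UU.ext W hW3 (hU1.of_range ?_) (hU2.of_range ?_)
  · rintro ⟨_, g, hg, rfl⟩
    exact mem_range (MonoidHom.comp _ N1.subtype) ⟨g, hg.1⟩
  · rintro ⟨_, g, hg, rfl⟩
    exact mem_range (MonoidHom.comp _ N2.subtype) ⟨g, hg.2⟩

/-- Fact A. -/
theorem A2 (ρ : Representation K G V) (M : ℕ)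
    (hM : ∀ g, ∀ k ≥ 1, ρ (g ^ M) ∈ Algebra.adjoin K {ρ (g ^ M) ^ k})
    (N₀ : Subgroup G) (hN₀ : N₀.FiniteIndex) (hs : Group.IsSolvable N₀) :
    UU (ρ.comp (Subgroup.closure (Set.range fun g : G => g ^ M)).subtype) := by
  obtain ⟨N1, hN1, hU⟩ := A1 _ N₀ V (ρ.comp N₀.subtype) rfl hs
  have hN := fi_map N₀ hN₀ N1 hN1
  set N := N1.map N₀.subtype
  have hUN : UU (ρ.comp N.subtype) := by
    refine hU.of_range ?_
    rintro ⟨_, g, hg, rfl⟩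
    exact mem_range (MonoidHom.comp _ N1.subtype) ⟨g, hg⟩
  refine hUN.of_range ?_
  have key : ∀ g ∈ Subgroup.closure (Set.range fun g : G => g ^ M),
      ρ g ∈ (Representation.asAlgebraHom (ρ.comp N.subtype)).range := by
    intro g hg
    induction hg using Subgroup.closure_induction'' with
    | mem x hx =>
      obtain ⟨g, rfl⟩ := hx
      obtain ⟨k, hk, -, hk'⟩ := Subgroup.exists_pow_mem_of_index_ne_zero hN.index_ne_zero (g ^ M)
      have := hM g k hk
      refine Algebra.adjoin_le ?_ this
      rw [Set.singleton_subset_iff]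
      rw [← map_pow]
      exact mem_range (MonoidHom.comp _ N.subtype) ⟨_, hk'⟩
    | inv_mem x hx =>
      obtain ⟨g, rfl⟩ := hx
      obtain ⟨k, hk, -, hk'⟩ := Subgroup.exists_pow_mem_of_index_ne_zero hN.index_ne_zero (g⁻¹ ^ M)
      have := hM g⁻¹ k hk
      simp only [← inv_pow]
      refine Algebra.adjoin_le ?_ this
      rw [Set.singleton_subset_iff]
      rw [← map_pow]
      exact mem_range (MonoidHom.comp _ N.subtype) ⟨_, hk'⟩
    | one => rw [map_one]; exact one_mem _
    | mul x y _ _ hx hy => rw [map_mul]; exact mul_mem hx hy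
  exact fun g => key g g.2

end A1
end Spec

set_option linter.unusedSectionVars false

namespace Spec

universe u v w

section B
variable {K : Type u} [Field K] [IsAlgClosed K] [CharZero K]
variable {G : Type v} {V : Type w} [Group G] [AddCommGroup V] [Module K V] [FiniteDimensional K V]

open Polynomial in
theorem trace_nil (x : Module.End K V) (h : ∀ k : ℕ, LinearMap.trace K V (x ^ (k + 1)) = 0) :
    IsNilpotent x := by
  have hp : minpoly K x ≠ 0 := minpoly.ne_zero (Algebra.IsIntegral.isIntegral x)
  obtain ⟨q, hq, hdvd⟩ := Polynomial.exists_eq_pow_rootMultiplicity_mul_and_not_dvd _ hp 0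
  set m := (minpoly K x).rootMultiplicity 0
  rw [map_zero, sub_zero] at hq hdvd
  have hcop : IsCoprime ((X : K[X]) ^ (m + 1)) q :=
    IsCoprime.pow_left ((irreducible_X.coprime_iff_not_dvd).2 hdvd)
  obtain ⟨a, b, hab⟩ := hcop
  have hmin : aeval x ((X : K[X]) ^ m * q) = 0 := by rw [← hq]; exact minpoly.aeval K x
  set e := aeval x (a * X ^ (m + 1)) with he
  have he1 : IsIdempotentElem e := by
    have : e * (1 - e) = 0 := by
      have h1 : (1 : Module.End K V) - e = aeval x (b * q) := by
        rw [he, ← map_one (aeval (R := K) x), ← map_sub, ← hab]; congr 1; ring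
      rw [h1, he, ← map_mul]
      have : a * X ^ (m + 1) * (b * q) = (a * X * b) * (X ^ m * q) := by ring
      rw [this, map_mul, hmin, mul_zero]
    rw [mul_sub, mul_one, sub_eq_zero] at this
    exact this.symm
  have he2 : LinearMap.trace K V e = 0 := by
    have : ∀ r : K[X], LinearMap.trace K V (aeval x (r * X ^ (m + 1))) = 0 := by
      intro r
      induction r using Polynomial.induction_on' with
      | add p q hp hq => rw [add_mul, map_add, map_add, hp, hq, add_zero]
      | monomial n c =>
        rw [← Polynomial.C_mul_X_pow_eq_monomial, mul_assoc, ← pow_add, ← add_assoc]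
        simp only [map_mul, aeval_C, map_pow, aeval_X]
        rw [← Algebra.smul_def, map_smul, h, smul_zero]
    exact this a
  have he3 : e = 0 := LinearMap.IsIdempotentElem.eq_zero_of_trace_eq_zero he1 he2
  refine ⟨m, ?_⟩
  have h4 : (X : K[X]) ^ m = X ^ m * (a * X ^ (m + 1)) + b * (X ^ m * q) := by
    calc (X : K[X]) ^ m = X ^ m * (a * X ^ (m + 1) + b * q) := by rw [hab, mul_one]
      _ = _ := by ring
  have h5 := congrArg (aeval x) h4
  rw [map_add, map_mul, map_mul (aeval x) b, hmin, ← he, he3] at h5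
  simpa using h5

theorem finite_traces (M : ℕ) (hM : 1 ≤ M) :
    {t : K | ∃ f : Module.End K V, f ^ M = 1 ∧ LinearMap.trace K V f = t}.Finite := by
  classical
  let R := (Polynomial.nthRoots M (1 : K)).toFinset
  have : (Set.range fun g : Fin (Module.finrank K V) → R => ∑ i, (g i : K)).Finite :=
    Set.finite_range _
  refine this.subset ?_
  rintro _ ⟨f, hf, rfl⟩
  have hs : f.charpoly.Splits := IsAlgClosed.splits _
  have hcard : f.charpoly.roots.toList.length = Module.finrank K V := by
    rw [Multiset.length_toList, ← hs.natDegree_eq_card_roots, LinearMap.charpoly_natDegree]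
  have hroot : ∀ x ∈ f.charpoly.roots.toList, x ∈ R := by
    intro x hx
    rw [Multiset.mem_toList, Polynomial.mem_roots (LinearMap.charpoly_monic f).ne_zero,
      ← Module.End.hasEigenvalue_iff_isRoot_charpoly] at hx
    obtain ⟨v, hv⟩ := hx.exists_hasEigenvector
    have h1 := hv.pow_apply M
    rw [hf, Module.End.one_apply] at h1
    have h2 : (x ^ M - 1) • v = 0 := by rw [sub_smul, ← h1, one_smul, sub_self]
    have h3 := (smul_eq_zero.1 h2).resolve_right hv.2
    rw [Multiset.mem_toFinset, Polynomial.mem_nthRoots hM]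
    exact sub_eq_zero.1 h3
  refine ⟨fun i => ⟨f.charpoly.roots.toList.get (Fin.cast hcard.symm i), hroot _ (List.get_mem _ _)⟩, ?_⟩
  rw [Module.End.trace_eq_sum_roots_charpoly_of_splits hs]
  simp only
  rw [← Multiset.sum_toList, ← Fin.sum_univ_getElem]
  exact Fintype.sum_equiv (finCongr hcard.symm) _ _ (fun i => rfl)

theorem burnside (ρ : Representation K G V) (M : ℕ) (hM : 1 ≤ M) (h : ∀ g, ρ g ^ M = 1) :
    (Set.range ρ).Finite := by
  obtain ⟨T, -, hTfin, hTspan⟩ := exists_span ρ Set.univ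
  have : Finite T := hTfin
  refine fin_of ρ (fun g (t : T) => LinearMap.trace K V (ρ g * ρ t)) ?_ ?_
  · refine (Set.Finite.pi' (t := fun t : T =>
      {t : K | ∃ f : Module.End K V, f ^ M = 1 ∧ LinearMap.trace K V f = t})
      (fun _ => finite_traces M hM)).subset ?_
    rintro _ ⟨g, rfl⟩ t
    exact ⟨ρ (g * t), h _, by rw [map_mul]⟩
  · intro g
    refine (Set.finite_singleton (ρ g)).subset ?_
    rintro _ ⟨k, hk, rfl⟩
    rw [Set.mem_singleton_iff]
    have h1 : ∀ x ∈ Submodule.span K (ρ '' T),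
        LinearMap.trace K V (ρ k * x) = LinearMap.trace K V (ρ g * x) := by
      intro x hx
      induction hx using Submodule.span_induction with
      | mem x hx => obtain ⟨t, ht, rfl⟩ := hx; exact congrFun hk ⟨t, ht⟩
      | zero => simp
      | add x y _ _ hx hy => simp only [mul_add, map_add, hx, hy]
      | smul c x _ hx => simp only [mul_smul_comm, map_smul, hx]
    have h2 : ∀ a, LinearMap.trace K V (ρ (g⁻¹ * k * a)) = LinearMap.trace K V (ρ a) := by
      intro a
      have := h1 _ (hTspan (a * g⁻¹) trivial)
      rw [← map_mul, ← map_mul] at this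
      rw [mul_assoc, map_mul, LinearMap.trace_mul_comm, ← map_mul, mul_assoc, this, map_mul,
        LinearMap.trace_mul_comm, ← map_mul]
      congr 2; group
    set z := g⁻¹ * k with hz
    let y : MonoidAlgebra K G := 1 - MonoidAlgebra.single z 1
    have h3 : ∀ x, LinearMap.trace K V (ρ.asAlgebraHom (y * x)) = 0 := by
      intro x
      induction x using MonoidAlgebra.induction_linear with
      | zero => simp
      | add x y hx hy => rw [mul_add, map_add, map_add, hx, hy, add_zero]
      | single m r =>
        simp only [y, sub_mul, one_mul, MonoidAlgebra.single_mul_single, map_sub,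
          Representation.asAlgebraHom_single, map_smul, h2, sub_self]
    have h4 : IsNilpotent (ρ.asAlgebraHom y) := by
      apply trace_nil
      intro k
      rw [← map_pow, pow_succ', h3]
    have h5 : ρ.asAlgebraHom y = 1 - ρ z := by simp [y]
    have h6 : Module.End.IsSemisimple (ρ z) := by
      apply Module.End.isSemisimple_of_squarefree_aeval_eq_zero
        (p := (Polynomial.X ^ M - 1 : Polynomial K))
      · exact (Polynomial.separable_X_pow_sub_C 1 (by exact_mod_cast (by omega : M ≠ 0)) one_ne_zero).squarefree
      · simp [h]
    have h7 : Module.End.IsSemisimple (ρ.asAlgebraHom y) := by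
      rw [h5]
      have := h6.aeval (1 - Polynomial.X : Polynomial K)
      simpa using this
    have h8 := Module.End.eq_zero_of_isNilpotent_isSemisimple h4 h7
    rw [h5, sub_eq_zero] at h8
    have : ρ k = ρ g * ρ z := by rw [← map_mul, hz]; congr 1; group
    rw [this, ← h8, mul_one]

theorem nil_common [Nontrivial V] (J : Submodule K (Module.End K V))
    (hmul : ∀ x ∈ J, ∀ y ∈ J, x * y ∈ J) (hnil : ∀ x ∈ J, IsNilpotent x) :
    ∃ v : V, v ≠ 0 ∧ ∀ x ∈ J, x v = 0 := by
  let D : V → Submodule K V := fun v => J.map (LinearMap.applyₗ v)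
  obtain ⟨v0, hv0⟩ := exists_ne (0 : V)
  obtain ⟨_, ⟨v, hv, rfl⟩, hmin⟩ := WellFounded.has_min
    (wellFounded_lt (α := Submodule K V)) (D '' {v | v ≠ 0}) ⟨_, v0, hv0, rfl⟩
  refine ⟨v, hv, fun x hx => ?_⟩
  by_contra hw
  have hle : D (x v) ≤ D v := by
    rintro _ ⟨y, hy, rfl⟩
    exact ⟨y * x, hmul y hy x hx, rfl⟩
  have heq := hle.eq_or_lt.resolve_right (hmin _ ⟨x v, hw, rfl⟩)
  have : x v ∈ D (x v) := by rw [heq]; exact ⟨x, hx, rfl⟩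
  obtain ⟨y, hy, hyx⟩ := this
  change y (x v) = x v at hyx
  obtain ⟨k, hk⟩ := hnil y hy
  have h1 : ∀ k : ℕ, (y ^ k) (x v) = x v := by
    intro k
    induction k with
    | zero => simp
    | succ k ih => rw [pow_succ, Module.End.mul_apply, hyx, ih]
  have := h1 k
  rw [hk] at this
  exact hw (by simpa using this.symm)

theorem pow_normal (M : ℕ) : (Subgroup.closure (Set.range fun g : G => g ^ M)).Normal := by
  constructor
  intro x hx g
  induction hx using Subgroup.closure_induction with
  | mem x hx =>
    obtain ⟨a, rfl⟩ := hx
    refine Subgroup.subset_closure ⟨g * a * g⁻¹, ?_⟩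
    simp
  | one => simp
  | mul x y _ _ hx hy =>
    have := mul_mem hx hy
    convert this using 1; group
  | inv x _ hx =>
    have := inv_mem hx
    convert this using 1; group

theorem comm_of_UU {ρ : Representation K G V} (hρ : SI ρ) (P : Subgroup G) (hP : P.Normal)
    (hU : UU (ρ.comp P.subtype)) : ∀ a ∈ P, ∀ b ∈ P, Commute (ρ a) (ρ b) := by
  rcases subsingleton_or_nontrivial V with hV | hV
  · intro a _ b _; ext v; exact Subsingleton.elim _ _
  set A := Representation.asAlgebraHom (ρ.comp P.subtype) with hAdef
  let J : Submodule K (Module.End K V) :=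
    { carrier := {y | y ∈ A.range ∧ ∀ z ∈ A.range, LinearMap.trace K V (y * z) = 0}
      zero_mem' := ⟨zero_mem _, by simp⟩
      add_mem' := by
        rintro x y ⟨hx, hx'⟩ ⟨hy, hy'⟩
        exact ⟨add_mem hx hy, fun z hz => by rw [add_mul, map_add, hx' z hz, hy' z hz, add_zero]⟩
      smul_mem' := by
        rintro c x ⟨hx, hx'⟩
        exact ⟨Subalgebra.smul_mem _ hx c, fun z hz => by
          rw [smul_mul_assoc, map_smul, hx' z hz, smul_zero]⟩ }
  have hmul : ∀ x ∈ J, ∀ y ∈ J, x * y ∈ J := by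
    rintro x ⟨hx, hx'⟩ y ⟨hy, -⟩
    exact ⟨mul_mem hx hy, fun z hz => by rw [mul_assoc]; exact hx' _ (mul_mem hy hz)⟩
  have hnil : ∀ x ∈ J, IsNilpotent x := by
    rintro x ⟨hx, hx'⟩
    apply trace_nil
    intro k
    rw [pow_succ']
    exact hx' _ (pow_mem hx k)
  have hconjA : ∀ g, ∀ z ∈ A.range, ρ g * z * ρ g⁻¹ ∈ A.range := by
    rintro g _ ⟨x, rfl⟩
    induction x using MonoidAlgebra.induction_linear with
    | zero => simp
    | add x y hx hy => 
      simp only [map_add, mul_add, add_mul]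
      exact add_mem hx hy
    | single m r =>
      change ρ g * A (MonoidAlgebra.single m r) * ρ g⁻¹ ∈ A.range
      rw [hAdef, Representation.asAlgebraHom_single, mul_smul_comm, smul_mul_assoc]
      refine Subalgebra.smul_mem _ ?_ r
      have := mem_range (K := K) (ρ.comp P.subtype) ⟨g * m * g⁻¹, hP.conj_mem _ m.2 g⟩
      simpa using this
  have hinv : ∀ g, ρ g⁻¹ * ρ g = 1 := by
    intro g; rw [← map_mul]; simp
  have hinv' : ∀ g, ρ g * ρ g⁻¹ = 1 := by
    intro g; rw [← map_mul]; simp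
  have hconjJ : ∀ g, ∀ z ∈ J, ρ g * z * ρ g⁻¹ ∈ J := by
    rintro g z ⟨hz, hz'⟩
    refine ⟨hconjA g z hz, fun y hy => ?_⟩
    have h1 := hconjA g⁻¹ y hy
    have h2 := hz' _ h1
    rw [inv_inv] at h2
    rw [show ρ g * z * ρ g⁻¹ * y = ρ g * (z * ρ g⁻¹ * y) by simp only [mul_assoc],
      LinearMap.trace_mul_comm, ← h2]
    simp only [mul_assoc]
  have hcomm : ∀ a ∈ P, ∀ b ∈ P, ρ a * ρ b - ρ b * ρ a ∈ J := by
    intro a ha b hb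
    have hA1 : ∀ p : P, A (MonoidAlgebra.single p 1) = ρ p := by
      intro p; rw [hAdef, Representation.asAlgebraHom_single]; simp
    have h1 := hA1 ⟨a, ha⟩
    have h2 := hA1 ⟨b, hb⟩
    have h3 : ρ a * ρ b - ρ b * ρ a = A (MonoidAlgebra.single ⟨a, ha⟩ 1 * MonoidAlgebra.single ⟨b, hb⟩ 1 -
      MonoidAlgebra.single ⟨b, hb⟩ 1 * MonoidAlgebra.single ⟨a, ha⟩ 1) := by
      rw [map_sub, map_mul, map_mul, h1, h2]
    refine ⟨⟨_, h3.symm⟩, ?_⟩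
    rintro _ ⟨z, rfl⟩
    have h4 := hU (MonoidAlgebra.single ⟨a, ha⟩ 1) (MonoidAlgebra.single ⟨b, hb⟩ 1) z
    rw [h3]
    change LinearMap.trace K V (A _ * A z) = 0
    rw [← map_mul]
    exact (LinearMap.isNilpotent_trace_of_isNilpotent h4).eq_zero
  obtain ⟨v, hv, hJv⟩ := nil_common J hmul hnil
  let W : Submodule K V :=
    { carrier := {v | ∀ x ∈ J, x v = 0}
      zero_mem' := by simp
      add_mem' := by
        intro a b ha hb x hx
        rw [map_add, ha x hx, hb x hx, add_zero]
      smul_mem' := by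
        intro c a ha x hx
        rw [map_smul, ha x hx, smul_zero] }
  have hWi : ∀ g ∈ (⊤ : Subgroup G), ∀ w ∈ W, ρ g w ∈ W := by
    intro g _ w hw x hx
    have h1 := hw _ (hconjJ g⁻¹ x hx)
    rw [inv_inv] at h1
    have h2 := congrArg (ρ g) h1
    rw [← Module.End.mul_apply, ← mul_assoc, ← mul_assoc, hinv', one_mul, map_zero] at h2
    exact h2
  rcases hρ ⊤ inferInstance W hWi with h | h
  · exact absurd (h ▸ (show v ∈ W from hJv)) (by simpa using hv)
  · intro a ha b hb
    have : ρ a * ρ b - ρ b * ρ a = 0 := by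
      ext v
      have : v ∈ W := by rw [h]; trivial
      exact this _ (hcomm a ha b hb)
    exact sub_eq_zero.1 this

/-- solvable image -/
def Q {G : Type v} {V : Type w} [Group G] [AddCommGroup V] [Module K V]
    (ρ : Representation K G V) : Prop :=
  ∃ k, ∀ g ∈ derivedSeries G k, ρ g = 1

theorem Q_comp {G' : Type*} [Group G'] (f : G' →* G) (ρ : Representation K G V) (h : Q ρ) :
    Q (ρ.comp f : Representation K G' V) := by
  obtain ⟨k, hk⟩ := h
  refine ⟨k, fun g hg => hk _ ?_⟩
  exact map_derivedSeries_le_derivedSeries f k ⟨g, hg, rfl⟩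

theorem derived_le {N : Subgroup G} (ρ : Representation K G V)
    (h : ∀ a ∈ N, ∀ b ∈ N, ρ a * ρ b = ρ b * ρ a) : ∀ g ∈ ⁅N, N⁆, ρ g = 1 := by
  have : ⁅N, N⁆ ≤ ρ.ker := by
    rw [Subgroup.commutator_le]
    intro a ha b hb
    change ρ (a * b * a⁻¹ * b⁻¹) = 1
    rw [map_mul, map_mul, map_mul, h a ha b hb, mul_assoc (ρ b), ← map_mul ρ a, mul_inv_cancel,
      map_one, mul_one, ← map_mul, mul_inv_cancel, map_one]
  exact this

theorem Q_ext (ρ : Representation K G V) (W : Submodule K V) (h : ∀ g, W ≤ W.comap (ρ g))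
    (h1 : Q (ρ.subrepresentation W h)) (h2 : Q (ρ.quotient W h)) : Q ρ := by
  obtain ⟨k, hk⟩ := h1
  obtain ⟨l, hl⟩ := h2
  refine ⟨max k l + 1, ?_⟩
  rw [derivedSeries_succ]
  have e1 : ∀ g ∈ derivedSeries G (max k l), ∀ w ∈ W, ρ g w = w := by
    intro g hg w hw
    have := hk g (derivedSeries_antitone G (le_max_left k l) hg)
    have := congrArg (fun f => ((f ⟨w, hw⟩ : W) : V)) this
    simpa using this
  have e2 : ∀ g ∈ derivedSeries G (max k l), ∀ v, ρ g v - v ∈ W := by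
    intro g hg v
    have := hl g (derivedSeries_antitone G (le_max_right k l) hg)
    have := congrArg (fun f => f (Submodule.Quotient.mk v)) this
    rw [← Submodule.Quotient.eq]
    simpa using this
  apply derived_le
  intro a ha b hb
  ext v
  have h3 := e1 a ha _ (e2 b hb v)
  have h4 := e1 b hb _ (e2 a ha v)
  rw [map_sub] at h3 h4
  rw [Module.End.mul_apply, Module.End.mul_apply, sub_eq_iff_eq_add.1 h3, sub_eq_iff_eq_add.1 h4]
  abel

theorem B_SI {ρ : Representation K G V} (hρ : SI ρ) (M : ℕ) (hM : 1 ≤ M)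
    (hU : UU (ρ.comp (Subgroup.closure (Set.range fun g : G => g ^ M)).subtype)) :
    ∃ N : Subgroup G, N.FiniteIndex ∧ Q (ρ.comp N.subtype) := by
  have hsc := scalar_of_abel hρ _ (pow_normal M) (comm_of_UU hρ _ (pow_normal M) hU)
  have hinv : ∀ g, ρ g⁻¹ * ρ g = 1 := by
    intro g; rw [← map_mul]; simp
  have hinv' : ∀ g, ρ g * ρ g⁻¹ = 1 := by
    intro g; rw [← map_mul]; simp
  let σ : Representation K G (Module.End K V) :=
    { toFun := fun g => LinearMap.mulLeft K (ρ g) * LinearMap.mulRight K (ρ g⁻¹)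
      map_one' := by ext; simp
      map_mul' := by
        intro a b
        ext x : 1
        simp [mul_assoc] }
  have hσ : ∀ g x, σ g x = ρ g * x * ρ g⁻¹ := by
    intro g x; simp [σ, mul_assoc]
  have hfin : (Set.range σ).Finite := by
    refine burnside σ M hM fun g => ?_
    rw [← map_pow]
    obtain ⟨c, hc⟩ := hsc (g ^ M) (Subgroup.subset_closure ⟨g, rfl⟩)
    ext x : 1
    rw [hσ, hc, smul_mul_assoc, one_mul, ← mul_one (c • x), smul_mul_assoc, ← mul_smul_comm,
      ← hc, mul_assoc, hinv', mul_one, Module.End.one_apply]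
  refine ⟨σ.ker, fi _ σ hfin ?_, 1, ?_⟩
  · intro a b hab
    rw [MonoidHom.mem_ker, map_mul, ← hab, ← map_mul]; simp
  · rw [derivedSeries_succ]
    apply derived_le
    rintro ⟨a, ha⟩ - ⟨b, hb⟩ -
    change ρ a * ρ b = ρ b * ρ a
    have := hσ a (ρ b)
    rw [show σ a = 1 from ha, Module.End.one_apply] at this
    conv_rhs => rw [this, mul_assoc, hinv, mul_one]

theorem B1 (M : ℕ) (hM : 1 ≤ M) (n : ℕ) : ∀ (G : Type v) [Group G] (V : Type w) [AddCommGroup V]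
    [Module K V] [FiniteDimensional K V] (ρ : Representation K G V), Module.finrank K V = n →
    UU (ρ.comp (Subgroup.closure (Set.range fun g : G => g ^ M)).subtype) →
    ∃ N : Subgroup G, N.FiniteIndex ∧ Q (ρ.comp N.subtype) := by
  induction n using Nat.strong_induction_on with
  | _ n ih =>
  intro G _ V _ _ _ ρ hn hU
  by_cases hSI : SI ρ
  · exact B_SI hSI M hM hU
  simp only [SI, not_forall, not_or] at hSI
  obtain ⟨N, hN, W, hW, hb, ht⟩ := hSI
  have hW' : ∀ g : N, W ≤ W.comap ((ρ.comp N.subtype : Representation K N V) g) :=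
    fun g w hw => hW g g.2 w hw
  have hlt : Module.finrank K W < n := hn ▸ Submodule.finrank_lt ht
  have hlt' : Module.finrank K (V ⧸ W) < n := by
    have h1 := Submodule.finrank_quotient_add_finrank W
    have : Nontrivial W := (Submodule.nontrivial_iff_ne_bot).2 hb
    have h2 : 0 < Module.finrank K W := Module.finrank_pos
    omega
  have hle : ∀ g ∈ Subgroup.closure (Set.range fun g : N => g ^ M),
      (g : G) ∈ Subgroup.closure (Set.range fun g : G => g ^ M) := by
    intro g hg
    have : Subgroup.closure (Set.range fun g : N => g ^ M) ≤
        (Subgroup.closure (Set.range fun g : G => g ^ M)).comap N.subtype := by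
      rw [Subgroup.closure_le]
      rintro _ ⟨g, rfl⟩
      exact Subgroup.subset_closure ⟨g, rfl⟩
    exact this hg
  have hUN : UU ((ρ.comp N.subtype).comp
      (Subgroup.closure (Set.range fun g : N => g ^ M)).subtype) := by
    refine hU.of_range fun g => ?_
    exact mem_range (ρ.comp (Subgroup.subtype (Subgroup.closure (Set.range fun g : G => g ^ M))))
      ⟨((g : ↥N) : G), hle _ g.2⟩
  have hW'' : ∀ g : Subgroup.closure (Set.range fun g : N => g ^ M),
      W ≤ W.comap (((ρ.comp N.subtype).comp (Subgroup.subtype _) : Representation K _ V) g) :=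
    fun g => hW' g
  obtain ⟨N1, hN1, hU1⟩ := ih _ hlt N W
    (Representation.subrepresentation (ρ.comp N.subtype) W hW') rfl (hUN.sub W hW'')
  obtain ⟨N2, hN2, hU2⟩ := ih _ hlt' N (V ⧸ W)
    (Representation.quotient (ρ.comp N.subtype) W hW') rfl (hUN.quo W hW'')
  refine ⟨(N1 ⊓ N2).map N.subtype, fi_map N hN _ inferInstance, ?_⟩
  have hQ : Q ((ρ.comp N.subtype).comp (N1 ⊓ N2).subtype) := by
    refine Q_ext _ W (fun g => hW' g) ?_ ?_
    · exact Q_comp (Subgroup.inclusion (inf_le_left : N1 ⊓ N2 ≤ N1)) _ hU1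
    · exact Q_comp (Subgroup.inclusion (inf_le_right : N1 ⊓ N2 ≤ N2)) _ hU2
  let e := (N1 ⊓ N2).equivMapOfInjective N.subtype N.subtype_injective
  have := Q_comp e.symm.toMonoidHom _ hQ
  obtain ⟨k, hk⟩ := this
  refine ⟨k, fun g hg => ?_⟩
  rw [← hk g hg]
  change ρ g = ρ (((e.symm g : ↥(N1 ⊓ N2)) : N) : G)
  congr 1
  conv_lhs => rw [← e.apply_symm_apply g]
  rfl

/-- Fact B. -/
theorem B2 (ρ : Representation K G V) (hinj : Function.Injective ρ) (M : ℕ) (hM : 1 ≤ M)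
    (hU : UU (ρ.comp (Subgroup.closure (Set.range fun g : G => g ^ M)).subtype)) :
    ∃ N : Subgroup G, N.FiniteIndex ∧ Group.IsSolvable N := by
  obtain ⟨N, hN, k, hk⟩ := B1 M hM _ G V ρ rfl hU
  refine ⟨N, hN, ⟨k, ?_⟩⟩
  rw [eq_bot_iff]
  intro g hg
  have h1 : ρ g = 1 := hk g hg
  rw [← map_one ρ] at h1
  rw [Subgroup.mem_bot]
  exact Subtype.ext (hinj h1)

theorem UU_of_trace (ρ : Representation K G V)
    (h : ∀ a b c, LinearMap.trace K V (ρ (a * b * c)) = LinearMap.trace K V (ρ (b * a * c))) :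
    UU ρ := by
  have h1 : ∀ a b c, LinearMap.trace K V (ρ.asAlgebraHom ((a * b - b * a) * c)) = 0 := by
    intro a b c
    induction a using MonoidAlgebra.induction_linear with
    | zero => simp
    | add x y hx hy =>
      rw [show ((x + y) * b - b * (x + y)) * c = (x * b - b * x) * c + (y * b - b * y) * c by
        noncomm_ring, map_add, map_add, hx, hy, add_zero]
    | single a r =>
    induction b using MonoidAlgebra.induction_linear with
    | zero => simp
    | add x y hx hy =>
      rw [show (MonoidAlgebra.single a r * (x + y) - (x + y) * MonoidAlgebra.single a r) * c =
        (MonoidAlgebra.single a r * x - x * MonoidAlgebra.single a r) * c +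
        (MonoidAlgebra.single a r * y - y * MonoidAlgebra.single a r) * c by
        noncomm_ring, map_add, map_add, hx, hy, add_zero]
    | single b s =>
    induction c using MonoidAlgebra.induction_linear with
    | zero => simp
    | add x y hx hy => rw [mul_add, map_add, map_add, hx, hy, add_zero]
    | single c t =>
      simp only [sub_mul, MonoidAlgebra.single_mul_single, map_sub,
          Representation.asAlgebraHom_single, map_smul, h, mul_comm r s, sub_self]
  intro a b c
  apply trace_nil
  intro k
  rw [← map_pow, pow_succ', mul_assoc, h1]

theorem trace_of_UU (ρ : Representation K G V) (h : UU ρ) (a b c : G) :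
    LinearMap.trace K V (ρ (a * b * c)) = LinearMap.trace K V (ρ (b * a * c)) := by
  have h1 := h (MonoidAlgebra.single a 1) (MonoidAlgebra.single b 1) (MonoidAlgebra.single c 1)
  have := (LinearMap.isNilpotent_trace_of_isNilpotent h1).eq_zero
  simpa [sub_mul, MonoidAlgebra.single_mul_single, sub_eq_zero] using this

end B
end Spec

set_option linter.unusedSectionVars false

namespace Spec

open Polynomial in
theorem neat_comm {K E : Type*} [Field K] [CharZero K] [CommRing E] [Algebra K E]
    [FiniteDimensional K E] (h : E) (hu : IsUnit h) (k : ℕ) (hk : 1 ≤ k) (p : K[X])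
    (hp : IsNilpotent (aeval (h ^ k) p - h)) : h ∈ Algebra.adjoin K {h ^ k} := by
  set B := Algebra.adjoin K {h ^ k} with hB
  let y : B := ⟨h ^ k, Algebra.self_mem_adjoin_singleton K _⟩
  let x : B := aeval y p
  have hx : (x : E) = aeval (h ^ k) p := by
    simp only [x]
    exact (Polynomial.aeval_algHom_apply B.val y p).symm
  rw [← hx] at hp
  have : Algebra.IsIntegral B E := Algebra.IsIntegral.tower_top K
  have hxu : IsUnit (x : E) := by
    have := IsNilpotent.isUnit_add_left_of_commute hp hu (Commute.all _ _)
    simpa using this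
  have hxB : IsUnit x := by
    have : IsUnit (algebraMap B E x) := hxu
    exact isUnit_of_map_unit (algebraMap B E) x this
  let P : B[X] := X ^ k - C y
  have hder : IsUnit (aeval x (derivative P)) := by
    simp only [P, derivative_sub, derivative_X_pow, derivative_C, sub_zero, map_mul, map_natCast,
      map_pow, aeval_X]
    refine IsUnit.mul ?_ (hxB.pow _)
    rw [← map_natCast (algebraMap K B)]
    refine IsUnit.map _ (IsUnit.mk0 _ ?_)
    exact_mod_cast (by omega : k ≠ 0)
  have hnil : IsNilpotent (aeval x P) := by
    have h1 : IsNilpotent (B.val (aeval x P)) := by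
      have : B.val (aeval x P) = (x : E) ^ k - h ^ k := by simp [P, y]
      rw [this]
      obtain ⟨c, hc⟩ := sub_dvd_pow_sub_pow (x : E) h k
      rw [hc]
      exact (Commute.all _ _).isNilpotent_mul_right hp
    exact (IsNilpotent.map_iff (f := B.val) Subtype.val_injective).1 h1
  obtain ⟨r, ⟨hr1, hr2⟩, -⟩ := existsUnique_nilpotent_sub_and_aeval_eq_zero hnil hder
  let P' : E[X] := X ^ k - C (h ^ k)
  have hder' : IsUnit (aeval h (derivative P')) := by
    simp only [P', derivative_sub, derivative_X_pow, derivative_C, sub_zero]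
    rw [map_mul, map_pow, aeval_X]
    refine IsUnit.mul ?_ (hu.pow _)
    rw [map_natCast, map_natCast, ← map_natCast (algebraMap K E)]
    refine IsUnit.map _ (IsUnit.mk0 _ ?_)
    exact_mod_cast (by omega : k ≠ 0)
  have hnil' : aeval h P' = 0 := by simp [P']
  obtain ⟨r', -, huni⟩ := existsUnique_nilpotent_sub_and_aeval_eq_zero
    (hnil' ▸ IsNilpotent.zero : IsNilpotent (aeval h P')) hder'
  have e1 := huni h ⟨by simp, hnil'⟩
  have e2 := huni (r : E) ⟨?_, ?_⟩
  · rw [e1, ← e2]; exact r.2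
  · have h3 : IsNilpotent ((x : E) - r) := hr1.map B.val
    have := (Commute.all _ _).isNilpotent_sub h3 hp
    simpa using this
  · have := congrArg B.val hr2
    simpa [P, P', y] using this

open Polynomial in
theorem nil_of_roots {K : Type*} [Field K] [IsAlgClosed K] {V : Type*} [AddCommGroup V]
    [Module K V] [FiniteDimensional K V] (h : Module.End K V) (q : K[X])
    (hq : ∀ α, h.HasEigenvalue α → q.eval α = 0) : IsNilpotent (aeval h q) := by
  have hs : h.charpoly.Splits := IsAlgClosed.splits _
  have h1 : h.charpoly ∣ q ^ Multiset.card h.charpoly.roots := by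
    conv_lhs => rw [hs.eq_prod_roots_of_monic h.charpoly_monic]
    have := Multiset.prod_dvd_prod_of_dvd (S := h.charpoly.roots) (fun a => X - C a)
      (fun _ => q) ?_
    · simpa using this
    · intro a ha
      rw [dvd_iff_isRoot]
      apply hq
      rw [Module.End.hasEigenvalue_iff_isRoot_charpoly]
      exact isRoot_of_mem_roots ha
  obtain ⟨c, hc⟩ := h1
  refine ⟨Multiset.card h.charpoly.roots, ?_⟩
  rw [← map_pow, hc, map_mul, LinearMap.aeval_self_charpoly, zero_mul]

open Polynomial in
theorem neat_end {K : Type*} [Field K] [CharZero K] [IsAlgClosed K] {V : Type*} [AddCommGroup V]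
    [Module K V] [FiniteDimensional K V] (h : Module.End K V) (hu : IsUnit h) (k : ℕ) (hk : 1 ≤ k)
    (hinj : ∀ α β, h.HasEigenvalue α → h.HasEigenvalue β → α ^ k = β ^ k → α = β) :
    h ∈ Algebra.adjoin K {h ^ k} := by
  classical
  let S := h.charpoly.roots.toFinset
  have hS : ∀ α, α ∈ S ↔ h.HasEigenvalue α := by
    intro α
    rw [Multiset.mem_toFinset, mem_roots h.charpoly_monic.ne_zero,
      Module.End.hasEigenvalue_iff_isRoot_charpoly]
  let p : K[X] := Lagrange.interpolate S (fun α => α ^ k) id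
  have hp : ∀ α ∈ S, p.eval (α ^ k) = α := by
    intro α hα
    refine Lagrange.eval_interpolate_at_node (v := fun α : K => α ^ k) id ?_ hα
    intro a ha b hb hab
    exact hinj a b ((hS a).1 ha) ((hS b).1 hb) hab
  have hnil := nil_of_roots h (p.comp (X ^ k) - X) (by
    intro α hα
    simp [hp α ((hS α).2 hα)])
  have e0 : aeval h (p.comp (X ^ k) - X) = aeval (h ^ k) p - h := by
    rw [map_sub, aeval_comp, map_pow, aeval_X]
  rw [e0] at hnil
  letI : CommRing (Algebra.adjoin K {h}) := Algebra.adjoinCommRingOfComm K (by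
    intro a ha b hb
    rw [Set.mem_singleton_iff.1 ha, Set.mem_singleton_iff.1 hb])
  let h' : Algebra.adjoin K {h} := ⟨h, Algebra.self_mem_adjoin_singleton K _⟩
  have : IsArtinianRing (Algebra.adjoin K {h}) := IsArtinianRing.of_finite K _
  have hu' : IsUnit h' := by
    have := IsArtinianRing.isUnit_of_mem_nonZeroDivisors (R := Algebra.adjoin K {h}) (a := h') ?_
    · exact this
    · rw [mem_nonZeroDivisors_iff_right]
      intro z hz
      have : (z : Module.End K V) * h = 0 := congrArg Subtype.val hz
      exact Subtype.ext ((hu.mul_left_eq_zero).1 this)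
  have hnil' : IsNilpotent (aeval (h' ^ k) p - h') := by
    refine (IsNilpotent.map_iff (f := (Algebra.adjoin K {h}).val) Subtype.val_injective).1 ?_
    rw [map_sub, ← Polynomial.aeval_algHom_apply, map_pow]
    exact hnil
  have key := neat_comm h' hu' k hk p hnil'
  have := (Subalgebra.mem_map (f := (Algebra.adjoin K {h}).val)).2 ⟨h', key, rfl⟩
  rw [AlgHom.map_adjoin, Set.image_singleton] at this
  exact this

theorem dvd_of_totient (m c : ℕ) (hm : 0 < m) (h : m.totient ≤ c) : m ∣ (2 * c).factorial := by
  rw [Nat.dvd_iff_prime_pow_dvd_dvd]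
  intro p k hp hk
  rcases Nat.eq_zero_or_pos k with rfl | hk0
  · simp
  apply Nat.dvd_factorial (pow_pos hp.pos _)
  have h1 := Nat.le_of_dvd (Nat.totient_pos.2 hm) (Nat.totient_dvd_of_dvd hk)
  rw [Nat.totient_prime_pow hp hk0] at h1
  have h2 : p ^ k = p ^ (k - 1) * p := by rw [← pow_succ]; congr 1; omega
  have h3 : p ≤ 2 * (p - 1) := by have := hp.two_le; omega
  calc p ^ k = p ^ (k - 1) * p := h2
    _ ≤ p ^ (k - 1) * (2 * (p - 1)) := Nat.mul_le_mul_left _ h3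
    _ = 2 * (p ^ (k - 1) * (p - 1)) := by ring
    _ ≤ 2 * c := by omega

open Polynomial in
theorem root_pow {K : Type*} [Field K] [CharZero K] (F : IntermediateField ℚ K)
    [FiniteDimensional ℚ F] (D n : ℕ) (hD : Module.finrank ℚ F ≤ D) (p : F[X]) (hp : p.Monic)
    (hpn : p.natDegree = n) (α β : K) (hα : aeval α p = 0) (hβ : aeval β p = 0) (hβ0 : β ≠ 0)
    (j : ℕ) (hj : 1 ≤ j) (h : α ^ j = β ^ j) :
    α ^ (2 * (D * (n * n))).factorial = β ^ (2 * (D * (n * n))).factorial := by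
  set ζ := α / β with hζ
  have hζj : ζ ^ j = 1 := by rw [hζ, div_pow, h, div_self (pow_ne_zero _ hβ0)]
  have hdeg : ∀ x : K, aeval x p = 0 → FiniteDimensional F (IntermediateField.adjoin F {x}) ∧
      Module.finrank F (IntermediateField.adjoin F {x}) ≤ n := by
    intro x hx
    have hi : IsIntegral F x := ⟨p, hp, hx⟩
    refine ⟨IntermediateField.adjoin.finiteDimensional hi, ?_⟩
    rw [IntermediateField.adjoin.finrank hi, ← hpn]
    exact natDegree_le_of_dvd (minpoly.dvd F x hx) hp.ne_zero
  obtain ⟨f1, d1⟩ := hdeg α hα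
  obtain ⟨f2, d2⟩ := hdeg β hβ
  set E := IntermediateField.adjoin F {α} ⊔ IntermediateField.adjoin F {β} with hE
  have f3 : FiniteDimensional F E := by rw [hE]; infer_instance
  have d3 : Module.finrank F E ≤ n * n :=
    (IntermediateField.finrank_sup_le _ _).trans (Nat.mul_le_mul d1 d2)
  have f4 : FiniteDimensional ℚ E := FiniteDimensional.trans ℚ F E
  have d4 : Module.finrank ℚ E ≤ D * (n * n) := by
    have := Module.Free.of_divisionRing F E
    have := Module.Free.of_divisionRing ℚ F
    rw [← Module.finrank_mul_finrank ℚ F E]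
    exact Nat.mul_le_mul hD d3
  have mα : α ∈ E := (le_sup_left : IntermediateField.adjoin F {α} ≤ E)
    (IntermediateField.mem_adjoin_simple_self F α)
  have mβ : β ∈ E := (le_sup_right : IntermediateField.adjoin F {β} ≤ E)
    (IntermediateField.mem_adjoin_simple_self F β)
  let z : E := ⟨ζ, div_mem mα mβ⟩
  have hzj : z ^ j = 1 := Subtype.ext hζj
  have hord : 0 < orderOf z := orderOf_pos_iff.2 (isOfFinOrder_iff_pow_eq_one.2 ⟨j, hj, hzj⟩)
  have hprim := IsPrimitiveRoot.orderOf z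
  have h5 := minpoly.natDegree_le (A := ℚ) z
  rw [← cyclotomic_eq_minpoly_rat hprim hord, natDegree_cyclotomic] at h5
  have h6 := dvd_of_totient _ _ hord (h5.trans d4)
  have h7 : z ^ (2 * (D * (n * n))).factorial = 1 := orderOf_dvd_iff_pow_eq_one.1 h6
  have h8 : ζ ^ (2 * (D * (n * n))).factorial = 1 := congrArg Subtype.val h7
  rw [hζ, div_pow, div_eq_one_iff_eq (pow_ne_zero _ hβ0)] at h8
  exact h8

end Spec

set_option linter.unusedSectionVars false

namespace Spec

/-- the standard representation -/
noncomputable def stdRep (K : Type*) [Field K] (n : ℕ) :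
    Representation K (GL (Fin n) K) (Fin n → K) :=
  ((Matrix.toLinAlgEquiv' : Matrix (Fin n) (Fin n) K ≃ₐ[K] _) :
    Matrix (Fin n) (Fin n) K →* Module.End K (Fin n → K)).comp (Units.coeHom _)

theorem stdRep_apply (K : Type*) [Field K] (n : ℕ) (g : GL (Fin n) K) :
    stdRep K n g = Matrix.toLin' (g : Matrix (Fin n) (Fin n) K) := rfl

theorem stdRep_inj (K : Type*) [Field K] (n : ℕ) : Function.Injective (stdRep K n) := by
  intro a b h
  rw [stdRep_apply, stdRep_apply] at h
  exact Units.ext (Matrix.toLin'.injective h)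

theorem stdRep_trace (K : Type*) [Field K] (n : ℕ) (g : GL (Fin n) K) :
    LinearMap.trace K _ (stdRep K n g) = (g : Matrix (Fin n) (Fin n) K).trace := by
  rw [stdRep_apply]; simp

open Polynomial in
theorem neat_mat {K : Type*} [Field K] [CharZero K] [IsAlgClosed K] (F : IntermediateField ℚ K)
    [FiniteDimensional ℚ F] (D n : ℕ) (hD : Module.finrank ℚ F ≤ D) (g : GL (Fin n) F)
    (k : ℕ) (hk : 1 ≤ k) (f : Module.End K (Fin n → K))
    (hf : f = stdRep K n (Matrix.GeneralLinearGroup.map (algebraMap F K) g)) :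
    f ^ (2 * (D * (n * n))).factorial ∈
      Algebra.adjoin K {(f ^ (2 * (D * (n * n))).factorial) ^ k} := by
  set M := (2 * (D * (n * n))).factorial with hM
  have hMpos : 0 < M := Nat.factorial_pos _
  have hu : IsUnit f := by
    rw [hf]; exact (Group.isUnit _).map _
  have hcp : f.charpoly = (g : Matrix (Fin n) (Fin n) F).charpoly.map (algebraMap F K) := by
    rw [hf, stdRep_apply, Matrix.charpoly_toLin', ← Matrix.charpoly_map]; rfl
  have hroot : ∀ α, f.HasEigenvalue α → aeval α (g : Matrix (Fin n) (Fin n) F).charpoly = 0 := by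
    intro α hα
    rw [Module.End.hasEigenvalue_iff_isRoot_charpoly, hcp, IsRoot.def, eval_map_algebraMap] at hα
    exact hα
  have hpow : ∀ α, (f ^ M).HasEigenvalue α → ∃ l, f.HasEigenvalue l ∧ l ^ M = α := by
    intro α hα
    rw [Module.End.hasEigenvalue_iff_mem_spectrum, spectrum.map_pow_of_pos f hMpos] at hα
    obtain ⟨l, hl, rfl⟩ := hα
    exact ⟨l, Module.End.hasEigenvalue_iff_mem_spectrum.2 hl, rfl⟩
  refine neat_end _ (hu.pow _) k hk ?_
  intro α β hα hβ hab
  obtain ⟨l, hl, rfl⟩ := hpow α hα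
  obtain ⟨m, hm, rfl⟩ := hpow β hβ
  refine root_pow F D n hD _ (Matrix.charpoly_monic (g : Matrix (Fin n) (Fin n) F)) ?_ l m
    (hroot l hl) (hroot m hm) ?_ (M * k) (Nat.mul_pos hMpos hk) ?_
  · rw [Matrix.charpoly_natDegree_eq_dim, Fintype.card_fin]
  · rintro rfl
    rw [Module.End.hasEigenvalue_iff_mem_spectrum] at hm
    exact (spectrum.zero_notMem_iff K).2 hu hm
  · rw [pow_mul, pow_mul, hab]

theorem special {R : Type*} [CommRing R] [IsDomain R] [Algebra ℚ R]
    (hfg : Algebra.FiniteType ℚ R) : ∃ D : ℕ, ∀ f : R, f ≠ 0 →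
    ∃ (F : IntermediateField ℚ (AlgebraicClosure ℚ)) (_ : FiniteDimensional ℚ F)
      (θ : R →ₐ[ℚ] F), Module.finrank ℚ F ≤ D ∧ θ f ≠ 0 := by
  obtain ⟨s, g, hinj, hfin⟩ := exists_finite_inj_algHom_of_fg ℚ R
  algebraize [g.toRingHom]
  have hfin' : Module.Finite (MvPolynomial (Fin s) ℚ) R := hfin
  obtain ⟨S, hS⟩ := hfin'.fg_top
  refine ⟨S.card, fun f hf => ?_⟩
  have hint : Algebra.IsIntegral (MvPolynomial (Fin s) ℚ) R := inferInstance
  obtain ⟨a, ha, hfa⟩ := (hint.isIntegral f).isAlgebraic.exists_nonzero_dvd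
    (mem_nonZeroDivisors_of_ne_zero hf)
  obtain ⟨x, hx⟩ : ∃ x, MvPolynomial.eval x a ≠ 0 := by
    by_contra! hc
    exact ha (MvPolynomial.funext fun x => by rw [hc, map_zero])
  let I := RingHom.ker (MvPolynomial.eval (R := ℚ) x)
  have hI : I.IsMaximal := RingHom.ker_isMaximal_of_surjective _ (fun q => ⟨MvPolynomial.C q, by simp⟩)
  have hker : RingHom.ker (algebraMap (MvPolynomial (Fin s) ℚ) R) ≤ I := by
    have hi : Function.Injective (algebraMap (MvPolynomial (Fin s) ℚ) R) := hinj
    rw [(RingHom.injective_iff_ker_eq_bot (algebraMap (MvPolynomial (Fin s) ℚ) R)).1 hi]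
    exact bot_le
  obtain ⟨Q, hQ, hQI⟩ := Ideal.exists_ideal_over_maximal_of_isIntegral I hker
  letI : Field (R ⧸ Q) := Ideal.Quotient.field Q
  have hmk : ∀ (p : MvPolynomial (Fin s) ℚ) (r : R), Ideal.Quotient.mk Q (p • r) =
      (MvPolynomial.eval x p) • Ideal.Quotient.mk Q r := by
    intro p r
    have h1 : p - MvPolynomial.C (MvPolynomial.eval x p) ∈ I := by
      simp [I, RingHom.mem_ker]
    rw [← hQI, Ideal.mem_comap, map_sub] at h1
    have h2 : algebraMap (MvPolynomial (Fin s) ℚ) R (MvPolynomial.C (MvPolynomial.eval x p)) =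
      algebraMap ℚ R (MvPolynomial.eval x p) := g.commutes _
    rw [h2, ← Ideal.Quotient.eq_zero_iff_mem, map_sub, sub_eq_zero] at h1
    rw [Algebra.smul_def, map_mul, h1, Algebra.smul_def]
    rfl
  have hspan : Submodule.span ℚ ((Ideal.Quotient.mk Q) '' (S : Set R)) = ⊤ := by
    rw [eq_top_iff]
    rintro y -
    obtain ⟨r, rfl⟩ := Ideal.Quotient.mk_surjective y
    have hr : r ∈ Submodule.span (MvPolynomial (Fin s) ℚ) (S : Set R) := hS ▸ trivial
    induction hr using Submodule.span_induction with
    | mem x hx => exact Submodule.subset_span ⟨x, hx, rfl⟩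
    | zero => rw [map_zero]; exact zero_mem _
    | add x y _ _ hx hy => rw [map_add]; exact add_mem hx hy
    | smul c x _ hx => rw [hmk]; exact Submodule.smul_mem _ _ hx
  classical
  rw [← Finset.coe_image] at hspan
  have hkfin : Module.Finite ℚ (R ⧸ Q) := ⟨⟨_, hspan⟩⟩
  have hrank : Module.finrank ℚ (R ⧸ Q) ≤ S.card := by
    rw [← finrank_top, ← hspan]
    exact (finrank_span_finset_le_card _).trans Finset.card_image_le
  let j : (R ⧸ Q) →ₐ[ℚ] AlgebraicClosure ℚ := IsAlgClosed.lift
  let e : (R ⧸ Q) ≃ₐ[ℚ] j.fieldRange := AlgEquiv.ofInjectiveField j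
  refine ⟨j.fieldRange, Module.Finite.equiv e.toLinearEquiv,
    e.toAlgHom.comp (Ideal.Quotient.mkₐ ℚ Q), ?_, ?_⟩
  · rw [← e.toLinearEquiv.finrank_eq]; exact hrank
  · intro h0
    have h1 : Ideal.Quotient.mk Q f = 0 := e.injective (by rw [map_zero]; exact h0)
    rw [Ideal.Quotient.eq_zero_iff_mem] at h1
    have h2 : a ∈ I := by
      rw [← hQI, Ideal.mem_comap]
      exact Ideal.mem_of_dvd _ hfa h1
    exact hx h2

open Polynomial in
theorem hmap_aux {R : Type*} [CommRing R] {n : ℕ} (A : Matrix (Fin n) (Fin n) R) (p0 : R[X])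
    {F : Type*} [Field F] (θ : R →+* F) : θ.mapMatrix (aeval A p0) =
      aeval (A.map θ) (p0.map θ) := by
  refine Polynomial.map_aeval_eq_aeval_map ?_ p0 A
  ext r i j
  simp [Matrix.algebraMap_matrix_apply, apply_ite θ]

open Polynomial in
theorem hlin_aux {F : Type*} [Field F] {n : ℕ} (B : Matrix (Fin n) (Fin n) F) (q : F[X]) :
    aeval B.mulVecLin q = (aeval B q).mulVecLin :=
  Polynomial.aeval_algHom_apply
    (Matrix.toLinAlgEquiv' : Matrix (Fin n) (Fin n) F ≃ₐ[F] _).toAlgHom B q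

open Polynomial in
theorem ss_special {R : Type*} [CommRing R] [IsDomain R] [CharZero R] {n : ℕ}
    (A : Matrix (Fin n) (Fin n) R)
    (h : Module.End.IsSemisimple ((A.map (algebraMap R (FractionRing R))).mulVecLin)) :
    ∃ d : R, d ≠ 0 ∧ ∀ (F : Type) [Field F] (θ : R →+* F), θ d ≠ 0 →
      Module.End.IsSemisimple ((A.map θ).mulVecLin) := by
  set L := FractionRing R
  have hL : Function.Injective (algebraMap R L) := IsFractionRing.injective R L
  have : CharZero L := charZero_of_injective_algebraMap hL
  set f := (A.map (algebraMap R L)).mulVecLin with hf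
  have hsq := h.minpoly_squarefree
  have hsep := (PerfectField.separable_iff_squarefree).2 hsq
  obtain ⟨a, b, hab⟩ := hsep
  have clear : ∀ p : L[X], ∃ (s : R) (p0 : R[X]), s ≠ 0 ∧
      p0.map (algebraMap R L) = C (algebraMap R L s) * p := by
    intro p
    obtain ⟨s, hs⟩ := IsLocalization.integerNormalization_map_to_map (nonZeroDivisors R) p
    refine ⟨s, _, nonZeroDivisors.ne_zero s.2, hs.trans ?_⟩
    rw [← Polynomial.smul_eq_C_mul, algebraMap_smul]
  obtain ⟨s1, p0, hs1, hp0⟩ := clear (minpoly L f)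
  obtain ⟨s2, a0, hs2, ha0⟩ := clear a
  obtain ⟨s3, b0, hs3, hb0⟩ := clear b
  have hid : C s3 * a0 * p0 + C s2 * b0 * derivative p0 = C (s1 * s2 * s3) := by
    apply Polynomial.map_injective _ hL
    simp only [Polynomial.map_add, Polynomial.map_mul, Polynomial.map_C, ← derivative_map, hp0,
      ha0, hb0, derivative_C_mul, map_mul]
    calc _ = C (algebraMap R L s1) * C (algebraMap R L s2) * C (algebraMap R L s3) *
        (a * minpoly L f + b * derivative (minpoly L f)) := by ring
      _ = _ := by rw [hab, mul_one]
  have hA : aeval A p0 = 0 := by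
    have h1 : (algebraMap R L).mapMatrix (aeval A p0) = 0 := by
      rw [hmap_aux]
      have h2 := hlin_aux (A.map (algebraMap R L)) (p0.map (algebraMap R L))
      rw [← hf, hp0, map_mul, minpoly.aeval, mul_zero] at h2
      exact Matrix.toLin'.injective (by rw [map_zero, hp0]; exact h2.symm)
    ext i j
    apply hL
    have := congrFun (congrFun h1 i) j
    simpa using this
  refine ⟨s1 * s2 * s3, by simp [hs1, hs2, hs3], fun F _ θ hd => ?_⟩
  apply Module.End.isSemisimple_of_squarefree_aeval_eq_zero (p := p0.map θ)
  · apply Polynomial.Separable.squarefree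
    have h3 := congrArg (Polynomial.map θ) hid
    simp only [Polynomial.map_add, Polynomial.map_mul, Polynomial.map_C, ← derivative_map] at h3
    refine ⟨C (θ (s1 * s2 * s3))⁻¹ * (C (θ s3) * a0.map θ), C (θ (s1 * s2 * s3))⁻¹ * (C (θ s2) * b0.map θ), ?_⟩
    rw [mul_assoc, mul_assoc _ _ (derivative _), ← mul_add, h3, ← C_mul, inv_mul_cancel₀ hd, C_1]
  · rw [hlin_aux]
    rw [← hmap_aux, hA, map_zero]
    simp

end Spec

namespace Spec

theorem pow_closure_map {G G' : Type*} [Group G] [Group G'] (φ : G →* G') (M : ℕ) (a : G)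
    (ha : a ∈ Subgroup.closure (Set.range fun g : G => g ^ M)) :
    φ a ∈ Subgroup.closure (Set.range fun g : G' => g ^ M) := by
  have : Subgroup.closure (Set.range fun g : G => g ^ M) ≤
      (Subgroup.closure (Set.range fun g : G' => g ^ M)).comap φ := by
    rw [Subgroup.closure_le]
    rintro _ ⟨g, rfl⟩
    exact Subgroup.subset_closure ⟨φ g, (map_pow φ g M).symm⟩
  exact this ha

theorem trace_map {R K : Type*} [CommRing R] [Field K] {n : ℕ} (i : R →+* K) (g : GL (Fin n) R) :
    LinearMap.trace K _ (stdRep K n (Matrix.GeneralLinearGroup.map i g)) =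
      i (g : Matrix (Fin n) (Fin n) R).trace := by
  rw [stdRep_trace]
  exact (AddMonoidHom.map_trace i _).symm

theorem exists_ne {R : Type*} [CommRing R] [IsDomain R] [CharZero R] {n : ℕ}
    (Γ : Subgroup (GL (Fin n) R)) (hΓ : ¬ IsVirtuallySolvable ↥Γ) (M : ℕ) (hM : 1 ≤ M) :
    ∃ a b c : Γ, a ∈ Subgroup.closure (Set.range fun g : Γ => g ^ M) ∧
      b ∈ Subgroup.closure (Set.range fun g : Γ => g ^ M) ∧
      c ∈ Subgroup.closure (Set.range fun g : Γ => g ^ M) ∧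
      (((a * b * c : Γ) : GL (Fin n) R) : Matrix (Fin n) (Fin n) R).trace -
      (((b * a * c : Γ) : GL (Fin n) R) : Matrix (Fin n) (Fin n) R).trace ≠ 0 := by
  by_contra! hcon
  apply hΓ
  let K := AlgebraicClosure (FractionRing R)
  let i : R →+* K := (algebraMap (FractionRing R) K).comp (algebraMap R (FractionRing R))
  have hi : Function.Injective i :=
    (algebraMap (FractionRing R) K).injective.comp (IsFractionRing.injective R (FractionRing R))
  have : CharZero K := charZero_of_injective_ringHom hi
  let ρ : Representation K Γ (Fin n → K) :=
    (stdRep K n).comp ((Matrix.GeneralLinearGroup.map i).comp Γ.subtype)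
  have hρ : Function.Injective ρ := by
    refine (stdRep_inj K n).comp (Function.Injective.comp (g := Matrix.GeneralLinearGroup.map i) ?_ Γ.subtype_injective)
    intro a b hab
    refine Units.ext ?_
    ext j k
    apply hi
    have := congrArg (fun g : GL (Fin n) K => (g : Matrix (Fin n) (Fin n) K) j k) hab
    simpa using this
  refine B2 ρ hρ M hM (UU_of_trace _ ?_)
  intro a b c
  have h1 := hcon a b c a.2 b.2 c.2
  have e1 := trace_map i ((((a : Γ) * b * c : Γ)) : GL (Fin n) R)
  have e2 := trace_map i ((((b : Γ) * a * c : Γ)) : GL (Fin n) R)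
  rw [← sub_eq_zero.1 h1, ← e1] at e2
  exact e2.symm

theorem main {R : Type*} [CommRing R] [IsDomain R] [Algebra ℚ R]
    (hfg : Algebra.FiniteType ℚ R) {n : ℕ}
    (Γ : Subgroup (GL (Fin n) R)) (hΓ : ¬ IsVirtuallySolvable ↥Γ)
    (r : ℕ) (γ : Fin r → GL (Fin n) R)
    (hss : ∀ i, Module.End.IsSemisimple
      (((γ i : Matrix (Fin n) (Fin n) R).map
        (algebraMap R (FractionRing R))).mulVecLin)) :
    ∃ (F : IntermediateField ℚ (AlgebraicClosure ℚ)) (_ : FiniteDimensional ℚ ↥F)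
      (θ : R →ₐ[ℚ] ↥F),
      ¬ IsVirtuallySolvable
          ↥(Γ.map (Matrix.GeneralLinearGroup.map (θ.toRingHom :
              R →+* ↥F))) ∧
      ∀ i, IsSemisimpleElt
        (Matrix.GeneralLinearGroup.map (θ.toRingHom : R →+* ↥F) (γ i)) := by
  have hchar : CharZero R := algebraRat.charZero R
  obtain ⟨D, hD⟩ := special hfg
  set M := (2 * (D * (n * n))).factorial with hM
  obtain ⟨a, b, c, ha, hb, hc, hne⟩ := exists_ne Γ hΓ M (Nat.factorial_pos _)
  choose d hd0 hd using fun i => ss_special (γ i : Matrix (Fin n) (Fin n) R) (hss i)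
  obtain ⟨F, hF, θ, hrank, hθ⟩ := hD _ (mul_ne_zero hne (Finset.prod_ne_zero_iff.2
    (fun i (_ : i ∈ Finset.univ) => hd0 i)))
  rw [map_mul, map_prod] at hθ
  have hθ1 := left_ne_zero_of_mul hθ
  have hθ2 := Finset.prod_ne_zero_iff.1 (right_ne_zero_of_mul hθ)
  refine ⟨F, hF, θ, ?_, fun i => hd i F θ.toRingHom (hθ2 i (Finset.mem_univ i))⟩
  set Θ := Matrix.GeneralLinearGroup.map (n := Fin n) (θ.toRingHom : R →+* F)
  rintro ⟨H, hH, hs⟩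
  let K := AlgebraicClosure ℚ
  let ρ : Representation K (Γ.map Θ) (Fin n → K) :=
    (stdRep K n).comp ((Matrix.GeneralLinearGroup.map (algebraMap F K)).comp (Γ.map Θ).subtype)
  have hU := A2 ρ M (by
    intro g k hk
    rw [map_pow]
    exact neat_mat F D n hrank g k hk (ρ g) rfl) H hH hs
  let φ : Γ →* Γ.map Θ := Θ.subgroupMap Γ
  have h1 := trace_of_UU _ hU ⟨φ a, pow_closure_map φ M a ha⟩ ⟨φ b, pow_closure_map φ M b hb⟩
    ⟨φ c, pow_closure_map φ M c hc⟩
  let j : R →+* K := (algebraMap F K).comp θ.toRingHom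
  have key : ∀ x : Γ, LinearMap.trace K _ (ρ (φ x)) =
      j ((x : GL (Fin n) R) : Matrix (Fin n) (Fin n) R).trace := by
    intro x
    rw [← trace_map j]
    rfl
  have h2 : LinearMap.trace K _ (ρ (φ (a * b * c))) = LinearMap.trace K _ (ρ (φ (b * a * c))) := by
    simp only [map_mul φ]
    exact h1
  rw [key, key] at h2
  apply hθ1
  apply (algebraMap F K).injective
  rw [map_zero, map_sub, map_sub, sub_eq_zero]
  exact h2

end Spec

/-- Specialization: given a non-virtually solvable subgroup `Γ ⊂ GL_n(R)` over a finitely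
generated `ℚ`-algebra domain `R` and elements `γ₁, …, γ_r ∈ Γ` that are semi-simple over the
fraction field of `R`, there is a `ℚ`-algebra homomorphism `θ : R → F` to a number field `F`
(realized as a finite subextension of an algebraic closure of `ℚ`) such that the induced map
`Θ : GL_n(R) → GL_n(F)` sends `Γ` to a non-virtually solvable group and each `Θ(γ_i)` is
semi-simple. -/
theorem stmt_3 {R : Type*} [CommRing R] [IsDomain R] [Algebra ℚ R]
    (hfg : Algebra.FiniteType ℚ R) {n : ℕ} (hn : 1 ≤ n)
    (Γ : Subgroup (GL (Fin n) R)) (hΓ : ¬ IsVirtuallySolvable ↥Γ)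
    (r : ℕ) (γ : Fin r → GL (Fin n) R) (hmem : ∀ i, γ i ∈ Γ)
    (hss : ∀ i, Module.End.IsSemisimple
      (((γ i : Matrix (Fin n) (Fin n) R).map
        (algebraMap R (FractionRing R))).mulVecLin)) :
    ∃ (F : IntermediateField ℚ (AlgebraicClosure ℚ)) (_ : FiniteDimensional ℚ ↥F)
      (θ : R →ₐ[ℚ] ↥F),
      ¬ IsVirtuallySolvable
          ↥(Γ.map (Matrix.GeneralLinearGroup.map (θ.toRingHom :
              R →+* ↥F))) ∧
      ∀ i, IsSemisimpleElt
        (Matrix.GeneralLinearGroup.map (θ.toRingHom : R →+* ↥F) (γ i)) := by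
  exact Spec.main hfg Γ hΓ r γ hss
end
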